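/- Assume d ≥ 2, 2 < p < 2_s^⋆, and let (g_ε) be (s,γ)-admissible for some s > d/(d+1) and γ > 1. Set α_rad := 2d(1/2 − 1/p). Then there exist constants 0 < c' ≤ C' < ∞ and ε₀ ∈ (0,1), depending only on d, p, s, γ and the admissibility constants, such that for all ε ∈ (0, ε₀): if p ≠ 2d/(d−1) then c' ε^{1 − min(1,α_rad)/γ} ≤ R^rad_ε(p) ≤ C' ε^{1 − min(1,α_rad)/γ}, while if p = 2d/(d−1) then c' ε^{1 − 1/γ} |log ε|^{(1−d)/d} ≤ R^rad_ε(p) ≤ C' ε^{1 − 1/γ} |log ε|^{(1−d)/d}. -/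

import Mathlib

open MeasureTheory Real Filter
open scoped ENNReal FourierTransform RealInnerProductSpace Topology

noncomputable section

/-- Euclidean space `ℝ^d`. -/
abbrev Rd (d : ℕ) : Type := EuclideanSpace ℝ (Fin d)

/-- `U` is the (distributional, hence `L²`-) Fourier transform of `u`:
it pairs against Schwartz functions the way the Fourier transform of `u` must. -/
def IsFT {d : ℕ} (U u : Rd d → ℂ) : Prop :=
  ∀ φ : SchwartzMap (Rd d) ℂ, ∫ ξ, U ξ * φ ξ = ∫ x, u x * 𝓕 (⇑φ) x

/-- An element of `H^s(ℝ^d)`: an `L²` function `toFun` together with its Fourier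
transform `ft`, satisfying the `H^s` integrability condition. -/
structure HsFn (d : ℕ) (s : ℝ) where
  toFun : Rd d → ℂ
  ft : Rd d → ℂ
  memL2 : MemLp toFun 2 volume
  ft_memL2 : MemLp ft 2 volume
  isFT : IsFT ft toFun
  memHs : Integrable (fun ξ : Rd d => ‖ft ξ‖ ^ 2 * (1 + ‖ξ‖ ^ 2) ^ s) volume

/-- The quadratic form `q_ε(u) = ∫ |û(ξ)|² g(|ξ|) dξ` (for a fixed symbol `g`). -/
def qeps {d : ℕ} {s : ℝ} (g : ℝ → ℝ) (u : HsFn d s) : ℝ :=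
  ∫ ξ : Rd d, ‖u.ft ξ‖ ^ 2 * g ‖ξ‖

/-- The `L^p` norm (as a real number). -/
def LpN {d : ℕ} (p : ℝ) (f : Rd d → ℂ) : ℝ :=
  (eLpNorm f (ENNReal.ofReal p) volume).toReal

/-- The set of values of the Rayleigh quotient `q_ε(u)/‖u‖_p²` over nonzero
`u ∈ H^s` satisfying the symmetry constraint `P`. -/
def RayleighSet (d : ℕ) (s p : ℝ) (g : ℝ → ℝ) (P : (Rd d → ℂ) → Prop) : Set ℝ :=
  {t | ∃ u : HsFn d s, P u.toFun ∧ ¬ u.toFun =ᵐ[volume] (fun _ => (0 : ℂ)) ∧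
      MemLp u.toFun (ENNReal.ofReal p) volume ∧
      t = qeps g u / LpN p u.toFun ^ 2}

/-- The Rayleigh quotient infimum. -/
def Rayleigh (d : ℕ) (s p : ℝ) (g : ℝ → ℝ) (P : (Rd d → ℂ) → Prop) : ℝ :=
  sInf (RayleighSet d s p g P)

/-- The Rayleigh quotient infimum is attained. -/
def Attained (d : ℕ) (s p : ℝ) (g : ℝ → ℝ) (P : (Rd d → ℂ) → Prop) : Prop :=
  ∃ u : HsFn d s, P u.toFun ∧ ¬ u.toFun =ᵐ[volume] (fun _ => (0 : ℂ)) ∧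
      MemLp u.toFun (ENNReal.ofReal p) volume ∧
      qeps g u / LpN p u.toFun ^ 2 = Rayleigh d s p g P

/-- A radial function. -/
def Radial {d : ℕ} (f : Rd d → ℂ) : Prop := ∀ x y : Rd d, ‖x‖ = ‖y‖ → f x = f y

/-- The squared norm of the first block of coordinates (the first `d - k` ones),
under the identification `ℝ^d = ℝ^{d-k} × ℝ^k`. -/
def blockSq (d k : ℕ) (x : Rd d) : ℝ := ∑ i : Fin d, if (i : ℕ) < d - k then x i ^ 2 else 0

/-- A `G_k = O(d-k) × O(k)`-symmetric function: it depends only on the norms of the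
two blocks of coordinates. -/
def GkSymmetric (d k : ℕ) (f : Rd d → ℂ) : Prop :=
  ∀ x y : Rd d, blockSq d k x = blockSq d k y → ‖x‖ = ‖y‖ → f x = f y

/-- An `(s,γ)`-admissible family of symbols, with admissibility constants `c, C`. -/
def IsAdmissible (s γ c C : ℝ) (g : ℝ → ℝ → ℝ) : Prop :=
  (∀ ε ∈ Set.Ioo (0:ℝ) 1, Measurable (g ε)) ∧
  (∀ ε ∈ Set.Ioo (0:ℝ) 1, ∀ r : ℝ, 0 < g ε r) ∧
  (∀ ε ∈ Set.Ioo (0:ℝ) 1, ∀ r : ℝ, 1/2 ≤ |r - 1| →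
      c * (1 + |r| ^ (2*s)) ≤ g ε r ∧ g ε r ≤ C * (1 + |r| ^ (2*s))) ∧
  (∀ ε ∈ Set.Ioo (0:ℝ) 1, ∀ r : ℝ, |r - 1| ≤ 1/2 →
      c * (ε + |r - 1| ^ γ) ≤ g ε r ∧ g ε r ≤ C * (ε + |r - 1| ^ γ))

/-- The `G_k`-symmetric Stein–Tomas exponent `2_⋆^k`. -/
def twoStarK (d k : ℕ) : ℝ :=
  2 * ((d : ℝ) + (min k (d - k) : ℕ)) / ((d : ℝ) - 2 + (min k (d - k) : ℕ))

/-- The interpolation parameter `α_k`. -/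
def alphaK (d k : ℕ) (p : ℝ) : ℝ := (1/2 - 1/p) / (1/2 - 1/twoStarK d k)

/-- The spherical shell `A_{ε,δ}` around the unit sphere (with `I_{ε,δ}` scale `ε^{1/γ}`). -/
def Aset (d : ℕ) (γ ε δ : ℝ) : Set (Rd d) :=
  {ξ | δ * ε ^ (1/γ) ≤ |‖ξ‖ - 1| ∧ |‖ξ‖ - 1| ≤ δ⁻¹ * ε ^ (1/γ)}

/-!
For frequencies away from the unit sphere the form `q_ε` controls the `Hˢ` norm, and the Sobolev
embedding bounds the `Lᵖ` norm. Near the sphere, Cauchy–Schwarz with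
`∫ dt / (ε + |t| ^ γ) ≍ ε ^ (1 / γ - 1)` bounds `∫ |û|`. Since the Fourier transform of the surface
measure decays like `|x| ^ (-a)` with `a = (d - 1) / 2`, the corresponding part of a radial `u` is
at most `(ε ^ (1 / γ - 1) q_ε(u)) ^ (1 / 2) * min 1 (|x| ^ (-a))`; beyond the radius
`R = ε ^ (-1 / γ)` this is combined with the `L²` bound `ε ‖u‖² ≲ q_ε(u)`. Hence
`‖u‖_p² ≲ ε ^ (1 / γ - 1) * q_ε(u) * (1 + ∫₁ᴿ y ^ (d - 1 - a p) dy + R ^ (d - a p)) ^ (2 / p)`,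
and the three regimes of the theorem are those of this integral.

The bound is sharp for `û` the indicator function of a shell of width comparable to `ε ^ (1 / γ)`
around the sphere. Up to radii comparable to `R` its inverse Fourier transform looks like that of
the surface measure, whose profile solves a Bessel equation. By equipartition of energy it is of
size `|x| ^ (-a)` in square mean, and Hölder's inequality with the weight `|x| ^ (-a (p - 2))`
turns this into a lower bound for the `Lᵖ` norm.
-/

/-! ### The Fourier transform on `L²` -/

section FourierTransform

variable {d : ℕ} {U V u v w : Rd d → ℂ}

lemma ae_eq_of_forall_integral_mul_schwartz_eq (hv : LocallyIntegrable v)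
    (hw : LocallyIntegrable w)
    (h : ∀ φ : SchwartzMap (Rd d) ℂ, ∫ x, v x * φ x = ∫ x, w x * φ x) : v =ᵐ[volume] w := by
  refine ae_eq_of_integral_contDiff_smul_eq hv hw fun φ hφ hφc => ?_
  have hφc' : HasCompactSupport (fun x => (φ x : ℂ)) :=
    hφc.comp_left (g := Complex.ofReal) Complex.ofReal_zero
  have hInt : ∫ x, v x * (φ x : ℂ) = ∫ x, w x * (φ x : ℂ) :=
    h (hφc'.toSchwartzMap (Complex.ofRealCLM.contDiff.comp hφ))
  simpa [mul_comm] using hInt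

lemma integrable_mul_schwartz (hv : MemLp v 2) (φ : SchwartzMap (Rd d) ℂ) :
    Integrable (fun x => v x * φ x) :=
  hv.integrable_mul (φ.memLp 2 volume)

lemma isFT_fourierInv_toLp (hV : MemLp V 2) :
    IsFT V (𝓕⁻ (hV.toLp V) : Lp ℂ 2 (volume : Measure (Rd d))) := by
  intro φ
  have key := congrArg (fun T => T (𝓕 φ)) (Lp.fourierInv_toTemperedDistribution_eq (hV.toLp V))
  simp only [TemperedDistribution.fourierInv_apply, Lp.toTemperedDistribution_apply,
    FourierTransform.fourierInv_fourier_eq, smul_eq_mul] at key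
  calc ∫ ξ, V ξ * φ ξ = ∫ ξ, φ ξ * (hV.toLp V) ξ := by
        refine integral_congr_ae ?_
        filter_upwards [hV.coeFn_toLp] with ξ hξ
        rw [hξ, mul_comm]
    _ = ∫ x, (𝓕 φ : SchwartzMap (Rd d) ℂ) x *
          (𝓕⁻ (hV.toLp V) : Lp ℂ 2 (volume : Measure (Rd d))) x := key
    _ = _ := by simp only [mul_comm, SchwartzMap.fourier_coe]

lemma IsFT.ae_eq (hv : LocallyIntegrable v) (hw : LocallyIntegrable w)
    (hVv : IsFT V v) (hVw : IsFT V w) : v =ᵐ[volume] w := by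
  refine ae_eq_of_forall_integral_mul_schwartz_eq hv hw fun φ => ?_
  have hφ : (𝓕 (⇑(𝓕⁻ φ : SchwartzMap (Rd d) ℂ)) : Rd d → ℂ) = φ := by
    rw [← SchwartzMap.fourier_coe, FourierTransform.fourier_fourierInv_eq]
  simpa only [hφ] using (hVv (𝓕⁻ φ)).symm.trans (hVw (𝓕⁻ φ))

lemma IsFT.eLpNorm_two_eq (hU : MemLp U 2) (hu : MemLp u 2) (h : IsFT U u) :
    eLpNorm u 2 volume = eLpNorm U 2 volume := by
  have hae := h.ae_eq (hu.locallyIntegrable one_le_two)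
    ((Lp.memLp _).locallyIntegrable one_le_two) (isFT_fourierInv_toLp hU)
  have plancherel :
      ‖(𝓕⁻ (hU.toLp U) : Lp ℂ 2 (volume : Measure (Rd d)))‖ = ‖hU.toLp U‖ := by
    rw [← Lp.norm_fourier_eq, FourierTransform.fourier_fourierInv_eq]
  rw [Lp.norm_def, Lp.norm_def,
    ENNReal.toReal_eq_toReal_iff' (Lp.eLpNorm_ne_top _) (Lp.eLpNorm_ne_top _)] at plancherel
  rw [eLpNorm_congr_ae hae, plancherel, eLpNorm_congr_ae hU.coeFn_toLp]

lemma isFT_fourierInv (hV : Integrable V) : IsFT V (𝓕⁻ V) := by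
  intro φ
  have key := VectorFourier.integral_fourierIntegral_smul_eq_flip (L := -innerₗ (Rd d)) (e := 𝐞)
    (μ := volume) (ν := volume) Real.continuous_fourierChar
    (by simp only [LinearMap.neg_apply, innerₗ_apply_apply]; fun_prop) hV
    (𝓕 φ : SchwartzMap (Rd d) ℂ).integrable
  have hV' (x) : VectorFourier.fourierIntegral 𝐞 volume (-innerₗ (Rd d)) V x = 𝓕⁻ V x := rfl
  have hφ (x) : VectorFourier.fourierIntegral 𝐞 volume (-innerₗ (Rd d)).flip
      (⇑(𝓕 φ : SchwartzMap (Rd d) ℂ)) x = φ x := by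
    have inversion : 𝓕⁻ (⇑(𝓕 φ : SchwartzMap (Rd d) ℂ)) x = φ x := by
      rw [← SchwartzMap.fourierInv_coe, FourierTransform.fourierInv_fourier_eq]
    rw [← inversion, Real.fourierInv_eq]
    simp [VectorFourier.fourierIntegral, real_inner_comm]
  simp only [hV', hφ, smul_eq_mul] at key
  exact key.symm

lemma continuous_fourierInv (hV : Integrable V) : Continuous (𝓕⁻ V) :=
  VectorFourier.fourierIntegral_continuous Real.continuous_fourierChar
    (by simp only [LinearMap.neg_apply, innerₗ_apply_apply]; fun_prop) hV

lemma memLp_two_fourierInv (hV : Integrable V) (hV2 : MemLp V 2) : MemLp (𝓕⁻ V) 2 :=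
  have hae := (isFT_fourierInv hV).ae_eq (continuous_fourierInv hV).locallyIntegrable
    ((Lp.memLp _).locallyIntegrable one_le_two) (isFT_fourierInv_toLp hV2)
  (memLp_congr_ae hae).2 (Lp.memLp _)

lemma IsFT.sub (hU : MemLp U 2) (hu : MemLp u 2) (hV : MemLp V 2) (hv : MemLp v 2)
    (hUu : IsFT U u) (hVv : IsFT V v) : IsFT (fun ξ => U ξ - V ξ) (fun x => u x - v x) := by
  intro φ
  simp only [sub_mul, ← SchwartzMap.fourier_coe]
  rw [integral_sub (integrable_mul_schwartz hU φ) (integrable_mul_schwartz hV φ),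
    integral_sub (integrable_mul_schwartz hu (𝓕 φ)) (integrable_mul_schwartz hv (𝓕 φ)),
    hUu φ, hVv φ, SchwartzMap.fourier_coe]

lemma IsFT.comp_linearIsometryEquiv_ae_eq (hU : MemLp U 2) (hu : Radial u) (h : IsFT U u)
    (R : Rd d ≃ₗᵢ[ℝ] Rd d) : (fun ξ => U (R ξ)) =ᵐ[volume] U := by
  have hR := R.measurePreserving
  have hRe := R.toHomeomorph.measurableEmbedding
  refine ae_eq_of_forall_integral_mul_schwartz_eq
    ((hU.comp_measurePreserving hR).locallyIntegrable one_le_two)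
    (hU.locallyIntegrable one_le_two) fun φ => ?_
  let ψ : SchwartzMap (Rd d) ℂ :=
    SchwartzMap.compCLMOfContinuousLinearEquiv ℂ R.symm.toContinuousLinearEquiv φ
  have fourier_ψ (x) : 𝓕 (⇑ψ) x = 𝓕 (⇑φ) (R.symm x) :=
    Real.fourier_comp_linearIsometry R.symm φ x
  calc ∫ ξ, U (R ξ) * φ ξ = ∫ ξ, U (R ξ) * ψ (R ξ) := by simp [ψ]
    _ = ∫ ξ, U ξ * ψ ξ := hR.integral_comp hRe fun ξ => U ξ * ψ ξ
    _ = ∫ x, u x * 𝓕 (⇑φ) (R.symm x) := by simp only [h ψ, fourier_ψ]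
    _ = ∫ x, u (R x) * 𝓕 (⇑φ) (R.symm (R x)) :=
        (hR.integral_comp hRe fun x => u x * 𝓕 (⇑φ) (R.symm x)).symm
    _ = ∫ x, u x * 𝓕 (⇑φ) x := by
        simp only [R.symm_apply_apply, hu (R _) _ (R.norm_map _)]
    _ = ∫ ξ, U ξ * φ ξ := (h φ).symm

end FourierTransform

/-! ### The Fourier transform of the unit sphere -/

section IntegralTrig

variable {α : Type*} [MeasurableSpace α] {μ : Measure α} [IsFiniteMeasure μ] {h A T : α → ℝ}
  {b B : ℝ}

lemma hasDerivAt_integral_mul_cos (hh : Measurable h) (hA : Measurable A) (hT : Measurable T)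
    (hb : ∀ᵐ x ∂μ, |h x| ≤ b) (hB : ∀ᵐ x ∂μ, |T x| ≤ B) (t : ℝ) :
    HasDerivAt (fun t => ∫ x, h x * cos (A x + t * T x) ∂μ)
      (∫ x, h x * (-sin (A x + t * T x) * T x) ∂μ) t := by
  refine (hasDerivAt_integral_of_dominated_loc_of_deriv_le (bound := fun _ => b * B)
    (F := fun t x => h x * cos (A x + t * T x))
    (F' := fun t x => h x * (-sin (A x + t * T x) * T x))
    (Metric.ball_mem_nhds t one_pos) ?_ ?_ ?_ ?_ (integrable_const _) ?_).2
  · exact Eventually.of_forall fun s => (by fun_prop : Measurable _).aestronglyMeasurable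
  · refine Integrable.of_bound (by fun_prop : Measurable _).aestronglyMeasurable b ?_
    filter_upwards [hb] with x hx
    rw [norm_mul]
    exact (mul_le_of_le_one_right (abs_nonneg _) (abs_cos_le_one _)).trans hx
  · exact (by fun_prop : Measurable _).aestronglyMeasurable
  · filter_upwards [hb, hB] with x hx hTx s _
    rw [norm_mul, norm_mul, norm_neg]
    refine mul_le_mul hx ?_ (by positivity) ((abs_nonneg _).trans hx)
    exact (mul_le_of_le_one_left (abs_nonneg _) (abs_sin_le_one _)).trans hTx
  · refine Eventually.of_forall fun x s _ => ?_
    have : HasDerivAt (fun s => A x + s * T x) (T x) s := by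
      simpa using ((hasDerivAt_id s).mul_const (T x)).const_add (A x)
    exact this.cos.const_mul (h x)

lemma hasDerivAt_integral_mul_sin (hh : Measurable h) (hA : Measurable A) (hT : Measurable T)
    (hb : ∀ᵐ x ∂μ, |h x| ≤ b) (hB : ∀ᵐ x ∂μ, |T x| ≤ B) (t : ℝ) :
    HasDerivAt (fun t => ∫ x, h x * sin (A x + t * T x) ∂μ)
      (∫ x, h x * (cos (A x + t * T x) * T x) ∂μ) t := by
  have phase_shift (x t : ℝ) (y : ℝ) : y - π / 2 + t * x = (y + t * x) - π / 2 := by ring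
  simpa only [phase_shift, cos_sub_pi_div_two, sin_sub_pi_div_two, neg_neg] using
    hasDerivAt_integral_mul_cos (μ := μ) hh (hA.sub_const (π / 2)) hT hb hB t

end IntegralTrig

lemma exists_linearIsometryEquiv_apply_eq {d : ℕ} {y z : Rd d} (h : ‖y‖ = ‖z‖) :
    ∃ R : Rd d ≃ₗᵢ[ℝ] Rd d, R y = z :=
  ⟨_, Submodule.reflection_sub h⟩

/-- The normalised surface measure of the unit sphere, as a measure on `ℝ^d`: the law of the
direction `x / |x|` of a uniform point `x` of the unit ball. -/
def sphereMeasure (d : ℕ) : Measure (Rd d) :=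
  (ProbabilityTheory.cond volume (Metric.ball 0 1)).map fun x => ‖x‖⁻¹ • x

section SphereMeasure

variable {d : ℕ}

lemma measurable_norm_inv_smul : Measurable fun x : Rd d => ‖x‖⁻¹ • x := by fun_prop

instance : IsProbabilityMeasure (sphereMeasure d) :=
  have : IsProbabilityMeasure
      (ProbabilityTheory.cond (volume : Measure (Rd d)) (Metric.ball 0 1)) :=
    ProbabilityTheory.cond_isProbabilityMeasure_of_finite
      (Metric.measure_ball_pos _ _ one_pos).ne' measure_ball_lt_top.ne
  Measure.isProbabilityMeasure_map measurable_norm_inv_smul.aemeasurable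

lemma measurePreserving_sphereMeasure (R : Rd d ≃ₗᵢ[ℝ] Rd d) :
    MeasurePreserving R (sphereMeasure d) (sphereMeasure d) := by
  have hball : R ⁻¹' Metric.ball 0 1 = Metric.ball 0 1 := by ext x; simp
  have hcond : Measure.map R (ProbabilityTheory.cond volume (Metric.ball 0 1)) =
      ProbabilityTheory.cond volume (Metric.ball 0 1) := by
    have := R.measurePreserving.restrict_preimage (s := Metric.ball 0 1) measurableSet_ball
    rw [hball] at this
    rw [ProbabilityTheory.cond, Measure.map_smul, this.map_eq]
  have hR : Measurable R := R.continuous.measurable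
  refine ⟨hR, ?_⟩
  conv_rhs => rw [sphereMeasure, ← hcond, Measure.map_map measurable_norm_inv_smul hR]
  rw [sphereMeasure, Measure.map_map hR measurable_norm_inv_smul]
  congr 1
  ext1 x
  simp

lemma norm_eq_one_ae_sphereMeasure [NeZero d] : ∀ᵐ ω ∂(sphereMeasure d), ‖ω‖ = 1 := by
  rw [sphereMeasure, ae_map_iff measurable_norm_inv_smul.aemeasurable
    (measurableSet_eq_fun measurable_norm measurable_const)]
  have hne : ∀ᵐ x ∂(volume : Measure (Rd d)), x ≠ 0 := by simp [ae_iff]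
  filter_upwards [ProbabilityTheory.cond_absolutelyContinuous.ae_le hne] with x hx
  rw [norm_smul, norm_inv, norm_norm, inv_mul_cancel₀ (norm_ne_zero_iff.2 hx)]

lemma abs_two_pi_mul_coord_le_ae [NeZero d] (i : Fin d) :
    ∀ᵐ ω ∂(sphereMeasure d), |2 * π * ω i| ≤ 2 * π := by
  filter_upwards [norm_eq_one_ae_sphereMeasure] with ω hω
  have hi : |ω i| ≤ 1 := hω ▸ PiLp.norm_apply_le ω i
  rw [abs_mul, abs_of_pos two_pi_pos]
  exact mul_le_of_le_one_right two_pi_pos.le hi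

end SphereMeasure

/-- The Fourier transform of `sphereMeasure d` at distance `r` from the origin, that is, up to a
constant, `r ^ (1 - d / 2) * J_{d / 2 - 1} (2 π r)` with `J` the Bessel function. -/
def sphereFT (d : ℕ) [NeZero d] (r : ℝ) : ℝ := ∫ ω, cos (r * (2 * π * ω 0)) ∂(sphereMeasure d)

section SphereFT

variable {d : ℕ} [NeZero d]

lemma integral_cos_inner_sphereMeasure (y : Rd d) :
    ∫ ω, cos (2 * π * inner ℝ y ω) ∂(sphereMeasure d) = sphereFT d ‖y‖ := by
  obtain ⟨R, hR⟩ := exists_linearIsometryEquiv_apply_eq (y := y)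
    (z := EuclideanSpace.single (0 : Fin d) ‖y‖) (by simp)
  rw [sphereFT, ← (measurePreserving_sphereMeasure R).integral_comp
    R.toHomeomorph.measurableEmbedding fun ω => cos (‖y‖ * (2 * π * ω 0))]
  congr 1 with ω
  rw [← R.inner_map_map, hR, EuclideanSpace.inner_single_left]
  simp only [conj_trivial]
  ring_nf

lemma integral_cos_two_coords {j : Fin d} (hj : j ≠ 0) (r t : ℝ) :
    ∫ ω, cos (r * (2 * π * ω 0) + t * (2 * π * ω j)) ∂(sphereMeasure d) =
      sphereFT d (√(r ^ 2 + t ^ 2)) := by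
  have hnorm : ‖(EuclideanSpace.single 0 r + EuclideanSpace.single j t : Rd d)‖ =
      √(r ^ 2 + t ^ 2) := by
    rw [← sqrt_sq (norm_nonneg _), @norm_add_sq_real]
    simp [EuclideanSpace.inner_single_left, hj.symm]
  rw [← hnorm, ← integral_cos_inner_sphereMeasure]
  congr 1 with ω
  rw [inner_add_left, EuclideanSpace.inner_single_left, EuclideanSpace.inner_single_left]
  simp only [conj_trivial]
  ring_nf

lemma abs_sphereFT_le_one (r : ℝ) : |sphereFT d r| ≤ 1 := by
  simpa [sphereFT] using norm_integral_le_of_norm_le_const (μ := sphereMeasure d) (C := 1)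
    (f := fun ω => cos (r * (2 * π * ω 0)))
    (Eventually.of_forall fun _ => abs_cos_le_one _)

lemma sphereFT_ge {r : ℝ} (hr : |r| ≤ 1 / (4 * π)) : 7 / 8 ≤ sphereFT d r := by
  have hle : ∫ _, (7 / 8 : ℝ) ∂(sphereMeasure d) ≤ sphereFT d r := by
    refine integral_mono_ae (integrable_const _) ?_ ?_
    · exact Integrable.of_bound (C := 1) (by fun_prop : Measurable _).aestronglyMeasurable
        (Eventually.of_forall fun ω => abs_cos_le_one _)
    · filter_upwards [abs_two_pi_mul_coord_le_ae (0 : Fin d)] with ω hω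
      have hphase : |r * (2 * π * ω 0)| ≤ 1 / 2 := by
        rw [abs_mul]
        calc _ ≤ 1 / (4 * π) * (2 * π) := by gcongr
          _ = 1 / 2 := by field_simp; norm_num
      have hsq : (r * (2 * π * ω 0)) ^ 2 ≤ (1 / 2) ^ 2 := sq_le_sq.2 (hphase.trans (le_abs_self _))
      linarith [one_sub_sq_div_two_le_cos (x := r * (2 * π * ω 0))]
  simpa using hle

lemma hasDerivAt_sphereFT_integral (r : ℝ) :
    HasDerivAt (sphereFT d)
      (-∫ ω, (2 * π * ω 0) * sin (r * (2 * π * ω 0)) ∂(sphereMeasure d)) r := by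
  have := hasDerivAt_integral_mul_cos (μ := sphereMeasure d) (h := fun _ => 1) (A := fun _ => 0)
    (T := fun ω => 2 * π * ω 0) measurable_const measurable_const (by fun_prop)
    (Eventually.of_forall fun _ => abs_one.le) (abs_two_pi_mul_coord_le_ae 0) r
  simp only [zero_add, one_mul] at this
  rw [← integral_neg]
  convert! this using 3
  ring

lemma hasDerivAt_sphereFT (r : ℝ) : HasDerivAt (sphereFT d) (deriv (sphereFT d) r) r :=
  (hasDerivAt_sphereFT_integral r).differentiableAt.hasDerivAt

lemma continuous_sphereFT : Continuous (sphereFT d) :=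
  continuous_iff_continuousAt.2 fun r => (hasDerivAt_sphereFT r).continuousAt

lemma hasDerivAt_deriv_sphereFT (r : ℝ) :
    HasDerivAt (deriv (sphereFT d))
      (-∫ ω, (2 * π * ω 0) ^ 2 * cos (r * (2 * π * ω 0)) ∂(sphereMeasure d)) r := by
  have hInt := (hasDerivAt_integral_mul_sin (μ := sphereMeasure d) (h := fun ω => 2 * π * ω 0)
    (A := fun _ => 0) (T := fun ω => 2 * π * ω 0) (by fun_prop) measurable_const (by fun_prop)
    (abs_two_pi_mul_coord_le_ae 0) (abs_two_pi_mul_coord_le_ae 0) r).fun_neg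
  simp only [zero_add] at hInt
  have hsq (ω : Rd d) : (2 * π * ω 0) ^ 2 * cos (r * (2 * π * ω 0)) =
      2 * π * ω 0 * (cos (r * (2 * π * ω 0)) * (2 * π * ω 0)) := by ring
  rw [show deriv (sphereFT d) = _ from funext fun r => (hasDerivAt_sphereFT_integral r).deriv]
  simpa only [hsq] using hInt

lemma hasDerivAt_sqrt_sq_add_sq {r : ℝ} (hr : 0 < r) (t : ℝ) :
    HasDerivAt (fun t => √(r ^ 2 + t ^ 2)) (t / √(r ^ 2 + t ^ 2)) t := by
  have hsq : HasDerivAt (fun t => r ^ 2 + t ^ 2) (2 * t) t := by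
    simpa using (hasDerivAt_pow 2 t).const_add (r ^ 2)
  convert! hsq.sqrt (by positivity) using 1
  field_simp

lemma integral_coord_mul_sin {j : Fin d} (hj : j ≠ 0) {r : ℝ} (hr : 0 < r) (t : ℝ) :
    ∫ ω, (2 * π * ω j) * sin (r * (2 * π * ω 0) + t * (2 * π * ω j)) ∂(sphereMeasure d) =
      -(t * (deriv (sphereFT d) (√(r ^ 2 + t ^ 2)) / √(r ^ 2 + t ^ 2))) := by
  have hInt := hasDerivAt_integral_mul_cos (μ := sphereMeasure d) (h := fun _ => 1)
    (A := fun ω => r * (2 * π * ω 0)) (T := fun ω => 2 * π * ω j) measurable_const (by fun_prop)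
    (by fun_prop) (Eventually.of_forall fun _ => abs_one.le) (abs_two_pi_mul_coord_le_ae j) t
  simp only [one_mul, integral_cos_two_coords hj] at hInt
  have hchain := (hasDerivAt_sphereFT (d := d) (√(r ^ 2 + t ^ 2))).comp t
    (hasDerivAt_sqrt_sq_add_sq hr t)
  calc _ = -∫ ω, -sin (r * (2 * π * ω 0) + t * (2 * π * ω j)) * (2 * π * ω j)
        ∂(sphereMeasure d) := by rw [← integral_neg]; congr 1 with ω; ring
    _ = _ := by rw [hInt.unique hchain]; ring

lemma neg_integral_coord_sq_mul_cos {j : Fin d} (hj : j ≠ 0) {r : ℝ} (hr : 0 < r) :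
    -∫ ω, (2 * π * ω j) ^ 2 * cos (r * (2 * π * ω 0)) ∂(sphereMeasure d) =
      deriv (sphereFT d) r / r := by
  have hInt := hasDerivAt_integral_mul_sin (μ := sphereMeasure d) (h := fun ω => 2 * π * ω j)
    (A := fun ω => r * (2 * π * ω 0)) (T := fun ω => 2 * π * ω j) (by fun_prop) (by fun_prop)
    (by fun_prop) (abs_two_pi_mul_coord_le_ae j) (abs_two_pi_mul_coord_le_ae j) 0
  simp only [integral_coord_mul_sin hj hr] at hInt
  have hquot : DifferentiableAt ℝ
      (fun t => deriv (sphereFT d) (√(r ^ 2 + t ^ 2)) / √(r ^ 2 + t ^ 2)) 0 := by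
    have hsqrt := (hasDerivAt_sqrt_sq_add_sq hr 0).differentiableAt
    exact ((hasDerivAt_deriv_sphereFT (d := d) _).differentiableAt.comp 0 hsqrt).fun_div hsqrt
      (by positivity)
  have hprod := ((hasDerivAt_id' (0 : ℝ)).mul hquot.hasDerivAt).neg
  have heq := hInt.unique hprod
  simp only [zero_mul, add_zero, one_mul, ne_eq, OfNat.ofNat_ne_zero, not_false_eq_true, zero_pow,
    sqrt_sq hr.le] at heq
  rw [← neg_eq_iff_eq_neg.2 heq]
  congr 2 with ω
  ring

/-- The Helmholtz equation `ΔF = -4π²F` for `F y = sphereFT d |y|`, in polar coordinates. -/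
lemma deriv_deriv_sphereFT {r : ℝ} (hr : 0 < r) :
    deriv (deriv (sphereFT d)) r =
      -(4 * π ^ 2) * sphereFT d r - (d - 1) * (deriv (sphereFT d) r / r) := by
  have laplacian : ∑ j : Fin d,
      (-∫ ω, (2 * π * ω j) ^ 2 * cos (r * (2 * π * ω 0)) ∂(sphereMeasure d)) =
        -(4 * π ^ 2) * sphereFT d r := by
    rw [Finset.sum_neg_distrib, ← integral_finsetSum, neg_mul, sphereFT, ← integral_const_mul]
    · congr 1
      refine integral_congr_ae ?_
      filter_upwards [norm_eq_one_ae_sphereMeasure] with ω hω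
      have hsum : ∑ i, ω i ^ 2 = 1 := by rw [← EuclideanSpace.real_norm_sq_eq, hω, one_pow]
      simp only [← Finset.sum_mul, mul_pow, ← Finset.mul_sum, hsum]
      ring
    · intro j _
      refine Integrable.of_bound (C := (2 * π) ^ 2)
        (by fun_prop : Measurable _).aestronglyMeasurable ?_
      filter_upwards [abs_two_pi_mul_coord_le_ae j] with ω hω
      rw [norm_mul, norm_pow]
      exact (mul_le_of_le_one_right (by positivity) (abs_cos_le_one _)).trans
        (pow_le_pow_left₀ (norm_nonneg _) hω 2)
  rw [Fintype.sum_eq_add_sum_compl (0 : Fin d), ← (hasDerivAt_deriv_sphereFT r).deriv,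
    Finset.sum_congr rfl fun j hj => neg_integral_coord_sq_mul_cos (by simpa using hj) hr,
    Finset.sum_const, Finset.card_compl, nsmul_eq_mul, Fintype.card_fin, Finset.card_singleton,
    Nat.cast_sub (Nat.one_le_iff_ne_zero.2 (NeZero.ne d)), Nat.cast_one] at laplacian
  linarith

end SphereFT

/-! ### Bessel's equation in normal form -/

section BesselEquation

/-- `w'' = (κ / r² - lam) w` on `(0, ∞)`, the normal form of Bessel's equation. -/
structure IsBesselSolution (κ lam : ℝ) (w : ℝ → ℝ) : Prop where
  hasDerivAt : ∀ {r}, 0 < r → HasDerivAt w (deriv w r) r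
  hasDerivAt_deriv : ∀ {r}, 0 < r → HasDerivAt (deriv w) ((κ / r ^ 2 - lam) * w r) r

/-- The energy of the harmonic oscillator `w'' = -lam * w`, which a solution of Bessel's equation
almost conserves. -/
def oscEnergy (lam : ℝ) (w : ℝ → ℝ) (r : ℝ) : ℝ := deriv w r ^ 2 + lam * w r ^ 2

lemma hasDerivAt_exp_div (k : ℝ) {r : ℝ} (hr : 0 < r) :
    HasDerivAt (fun r => exp (k / r)) (exp (k / r) * (-k / r ^ 2)) r := by
  have : HasDerivAt (fun r => k / r) (-k / r ^ 2) r := by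
    simpa [div_eq_mul_inv, neg_mul] using (hasDerivAt_inv hr.ne').const_mul k
  exact this.exp

lemma antitoneOn_mul_exp_div {E E' : ℝ → ℝ} {k r₀ : ℝ} (hr₀ : 0 < r₀)
    (hE : ∀ r, r₀ ≤ r → HasDerivAt E (E' r) r) (hE' : ∀ r, r₀ ≤ r → E' r ≤ k / r ^ 2 * E r) :
    AntitoneOn (fun r => E r * exp (k / r)) (Set.Ici r₀) := by
  have hderiv (r) (hr : r₀ ≤ r) := (hE r hr).mul (hasDerivAt_exp_div k (hr₀.trans_le hr))
  refine antitoneOn_of_hasDerivWithinAt_nonpos (convex_Ici r₀)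
    (fun r hr => (hderiv r hr).continuousAt.continuousWithinAt)
    (fun r hr => (hderiv r (interior_subset hr)).hasDerivWithinAt) fun r hr => ?_
  have hfactor : E' r * exp (k / r) + E r * (exp (k / r) * (-k / r ^ 2)) =
      exp (k / r) * (E' r - k / r ^ 2 * E r) := by ring
  rw [hfactor]
  exact mul_nonpos_of_nonneg_of_nonpos (exp_pos _).le
    (sub_nonpos.2 (hE' r (interior_subset hr)))

lemma mul_exp_neg_le_and_le_mul_exp {E E' : ℝ → ℝ} {k r₀ r : ℝ} (hr₀ : 0 < r₀) (hk : 0 ≤ k)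
    (hE : ∀ r, r₀ ≤ r → HasDerivAt E (E' r) r) (hE0 : ∀ r, 0 ≤ E r)
    (hE' : ∀ r, r₀ ≤ r → |E' r| ≤ k / r ^ 2 * E r) (hr : r₀ ≤ r) :
    E r₀ * exp (-(k / r₀)) ≤ E r ∧ E r ≤ E r₀ * exp (k / r₀) := by
  have hkr : 0 ≤ k / r := div_nonneg hk (hr₀.trans_le hr).le
  constructor
  · have hanti := antitoneOn_mul_exp_div (E := fun r => -E r) (k := -k) hr₀
      (fun r hr => (hE r hr).fun_neg) (fun r hr => by
        have := (abs_le.1 (hE' r hr)).1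
        rw [neg_div, neg_mul_neg]
        linarith) Set.self_mem_Ici hr hr
    simp only [neg_mul, neg_le_neg_iff, neg_div] at hanti
    exact hanti.trans (mul_le_of_le_one_right (hE0 r) (exp_le_one_iff.2 (neg_nonpos.2 hkr)))
  · have hanti := antitoneOn_mul_exp_div hr₀ hE (fun r hr => (abs_le.1 (hE' r hr)).2)
      Set.self_mem_Ici hr hr
    exact (le_mul_of_one_le_right (hE0 r) (one_le_exp hkr)).trans hanti

section Energy

variable {κ lam m M b r R : ℝ} {w : ℝ → ℝ}

lemma sq_le_oscEnergy (hlam : 1 ≤ lam) : w r ^ 2 ≤ oscEnergy lam w r := by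
  unfold oscEnergy; nlinarith [sq_nonneg (w r), sq_nonneg (deriv w r)]

lemma deriv_sq_le_oscEnergy (hlam : 0 ≤ lam) : deriv w r ^ 2 ≤ oscEnergy lam w r :=
  le_add_of_nonneg_right (by positivity)

lemma two_mul_abs_mul_deriv_le_oscEnergy (hlam : 1 ≤ lam) :
    2 * |w r * deriv w r| ≤ oscEnergy lam w r := by
  rw [abs_mul, oscEnergy, ← sq_abs (w r), ← sq_abs (deriv w r)]
  nlinarith [sq_nonneg (|w r| - |deriv w r|), sq_nonneg (|w r|)]

lemma IsBesselSolution.hasDerivAt_oscEnergy (h : IsBesselSolution κ lam w) (hr : 0 < r) :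
    HasDerivAt (oscEnergy lam w) (κ / r ^ 2 * (2 * (w r * deriv w r))) r := by
  have := ((h.hasDerivAt_deriv hr).pow 2).add (((h.hasDerivAt hr).pow 2).const_mul lam)
  convert! this using 1
  simp only [Nat.cast_ofNat, Nat.add_one_sub_one, pow_one]
  ring

lemma IsBesselSolution.oscEnergy_bounds (h : IsBesselSolution κ lam w) (hlam : 1 ≤ lam) {r₀ : ℝ}
    (hr₀ : 0 < r₀) (hr : r₀ ≤ r) :
    oscEnergy lam w r₀ * exp (-(|κ| / r₀)) ≤ oscEnergy lam w r ∧
      oscEnergy lam w r ≤ oscEnergy lam w r₀ * exp (|κ| / r₀) := by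
  refine mul_exp_neg_le_and_le_mul_exp hr₀ (abs_nonneg κ)
    (fun r hr => h.hasDerivAt_oscEnergy (hr₀.trans_le hr))
    (fun r => (sq_nonneg _).trans (sq_le_oscEnergy hlam)) (fun r _ => ?_) hr
  rw [abs_mul, abs_div, abs_sq, abs_mul, abs_two]
  gcongr
  exact two_mul_abs_mul_deriv_le_oscEnergy hlam

-- `(w w')' = w'² - lam w² + κ w² / r²`; the two subtracted terms absorb the derivative of the
-- weight and the potential `κ / r²`.
lemma IsBesselSolution.exists_hasDerivAt_ge (h : IsBesselSolution κ lam w) (hlam : 1 ≤ lam)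
    (hr : 1 ≤ r) (hb : 0 ≤ b) (hm : m ≤ oscEnergy lam w r) (hM : oscEnergy lam w r ≤ M) :
    ∃ D, HasDerivAt (fun ρ => ρ ^ (-b) * (w ρ * deriv w ρ) - M * ρ ^ (-b) - M * |κ| * ρ⁻¹) D r ∧
      r ^ (-b) * (m - 2 * lam * w r ^ 2) ≤ D := by
  have hr0 : 0 < r := one_pos.trans_le hr
  have hpow : HasDerivAt (fun ρ : ℝ => ρ ^ (-b)) (-b * r ^ (-b - 1)) r :=
    hasDerivAt_rpow_const (Or.inl hr0.ne')
  refine ⟨_, ((hpow.fun_mul ((h.hasDerivAt hr0).fun_mul (h.hasDerivAt_deriv hr0))).fun_sub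
    (hpow.const_mul M)).fun_sub ((hasDerivAt_inv hr0.ne').const_mul (M * |κ|)), ?_⟩
  have hweight : 0 ≤ b * r ^ (-b - 1) * (M - w r * deriv w r) := by
    have := two_mul_abs_mul_deriv_le_oscEnergy (w := w) (r := r) hlam
    refine mul_nonneg (by positivity) ?_
    linarith [le_abs_self (w r * deriv w r), abs_nonneg (w r * deriv w r)]
  have hpotential : -(|κ| * (r ^ 2)⁻¹ * M) ≤ r ^ (-b) * (κ / r ^ 2 * w r ^ 2) := by
    refine (abs_le.1 ?_).1
    have hrb : r ^ (-b) ≤ 1 := rpow_le_one_of_one_le_of_nonpos hr (neg_nonpos.2 hb)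
    rw [abs_mul, abs_mul, abs_div, abs_sq, abs_sq, abs_of_pos (rpow_pos_of_pos hr0 _),
      ← div_eq_mul_inv]
    calc _ ≤ 1 * (|κ| / r ^ 2 * M) := by gcongr; exact (sq_le_oscEnergy hlam).trans hM
      _ = _ := one_mul _
  have henergy : 0 ≤ r ^ (-b) * (oscEnergy lam w r - m) :=
    mul_nonneg (rpow_pos_of_pos hr0 _).le (sub_nonneg.2 hm)
  rw [oscEnergy] at henergy
  linear_combination hweight + hpotential + henergy

lemma IsBesselSolution.integral_rpow_mul_sub_le (h : IsBesselSolution κ lam w) (hlam : 1 ≤ lam)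
    (hm : ∀ r, 1 ≤ r → m ≤ oscEnergy lam w r) (hM : ∀ r, 1 ≤ r → oscEnergy lam w r ≤ M)
    (hb : 0 ≤ b) (hR : 1 ≤ R) :
    ∫ ρ in (1 : ℝ)..R, ρ ^ (-b) * (m - 2 * lam * w ρ ^ 2) ≤ (3 + |κ|) * M := by
  choose! D hD hle using fun r (hr : 1 ≤ r) =>
    h.exists_hasDerivAt_ge hlam hr hb (hm r hr) (hM r hr)
  have hcont : ContinuousOn w (Set.Icc 1 R) := fun x hx =>
    (h.hasDerivAt (one_pos.trans_le hx.1)).continuousAt.continuousWithinAt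
  have hcont_rpow : ContinuousOn (fun ρ : ℝ => ρ ^ (-b)) (Set.Icc 1 R) := fun x hx =>
    (continuousAt_rpow_const _ _ (Or.inl (one_pos.trans_le hx.1).ne')).continuousWithinAt
  have hFTC := intervalIntegral.integral_le_sub_of_hasDeriv_right_of_le hR
    (fun x hx => (hD x hx.1).continuousAt.continuousWithinAt)
    (fun x hx => (hD x hx.1.le).hasDerivWithinAt)
    (hcont_rpow.mul (by fun_prop)).integrableOn_Icc (fun x hx => hle x hx.1.le)
  refine hFTC.trans ?_
  have habs (r) (hr : 1 ≤ r) : |w r * deriv w r| ≤ M := by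
    linarith [two_mul_abs_mul_deriv_le_oscEnergy (w := w) (r := r) hlam, hM r hr,
      abs_nonneg (w r * deriv w r)]
  have hM0 : 0 ≤ M := (abs_nonneg _).trans (habs 1 le_rfl)
  have hRb : R ^ (-b) ≤ 1 := rpow_le_one_of_one_le_of_nonpos hR (neg_nonpos.2 hb)
  have hend : R ^ (-b) * (w R * deriv w R) ≤ M := by
    calc _ ≤ R ^ (-b) * M := by gcongr; exact (le_abs_self _).trans (habs R hR)
      _ ≤ M := mul_le_of_le_one_left hM0 hRb
  have hstart := (abs_le.1 (habs 1 le_rfl)).1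
  have hweight : 0 ≤ M * R ^ (-b) := by positivity
  have hpotential : 0 ≤ M * |κ| * R⁻¹ := by positivity
  simp only [one_rpow, inv_one]
  linarith

lemma IsBesselSolution.mul_integral_rpow_sub_le (h : IsBesselSolution κ lam w) (hlam : 1 ≤ lam)
    (hm : ∀ r, 1 ≤ r → m ≤ oscEnergy lam w r) (hM : ∀ r, 1 ≤ r → oscEnergy lam w r ≤ M)
    (hb : 0 ≤ b) (hR : 1 ≤ R) :
    m * (∫ ρ in (1 : ℝ)..R, ρ ^ (-b)) - (3 + |κ|) * M ≤
      2 * lam * ∫ ρ in (1 : ℝ)..R, ρ ^ (-b) * w ρ ^ 2 := by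
  have hcont : ContinuousOn w (Set.uIcc 1 R) := by
    rw [Set.uIcc_of_le hR]
    exact fun x hx => (h.hasDerivAt (one_pos.trans_le hx.1)).continuousAt.continuousWithinAt
  have hcont_rpow : ContinuousOn (fun ρ : ℝ => ρ ^ (-b)) (Set.uIcc 1 R) := by
    rw [Set.uIcc_of_le hR]
    exact fun x hx =>
      (continuousAt_rpow_const _ _ (Or.inl (one_pos.trans_le hx.1).ne')).continuousWithinAt
  have hsplit : ∫ ρ in (1 : ℝ)..R, ρ ^ (-b) * (m - 2 * lam * w ρ ^ 2) =
      m * (∫ ρ in (1 : ℝ)..R, ρ ^ (-b)) - 2 * lam * ∫ ρ in (1 : ℝ)..R, ρ ^ (-b) * w ρ ^ 2 := by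
    rw [← intervalIntegral.integral_const_mul, ← intervalIntegral.integral_const_mul,
      ← intervalIntegral.integral_sub]
    · congr 1 with ρ
      ring
    · exact (continuousOn_const.mul hcont_rpow).intervalIntegrable
    · exact (continuousOn_const.mul (hcont_rpow.mul (hcont.pow 2))).intervalIntegrable
  have := h.integral_rpow_mul_sub_le hlam hm hM hb hR
  linarith

end Energy

end BesselEquation

/-- The exponent `(d - 1) / 2` of the decay of the Fourier transform of the sphere. -/
def decayExponent (d : ℕ) : ℝ := ((d : ℝ) - 1) / 2

lemma decayExponent_nonneg (d : ℕ) [NeZero d] : 0 ≤ decayExponent d :=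
  div_nonneg (sub_nonneg.2 (Nat.one_le_cast.2 NeZero.one_le)) zero_le_two

/-- The function `sphereFT d` without its decay; it solves Bessel's equation in normal form. -/
def sphereAmplitude (d : ℕ) [NeZero d] (r : ℝ) : ℝ := r ^ decayExponent d * sphereFT d r

section SphereAmplitude

variable (d : ℕ) [NeZero d]

lemma hasDerivAt_sphereAmplitude {r : ℝ} (hr : 0 < r) :
    HasDerivAt (sphereAmplitude d)
      (decayExponent d * r ^ (decayExponent d - 1) * sphereFT d r +
        r ^ decayExponent d * deriv (sphereFT d) r) r :=
  (hasDerivAt_rpow_const (Or.inl hr.ne')).mul (hasDerivAt_sphereFT r)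

lemma isBesselSolution_sphereAmplitude :
    IsBesselSolution (decayExponent d * (decayExponent d - 1)) (4 * π ^ 2) (sphereAmplitude d) where
  hasDerivAt hr := (hasDerivAt_sphereAmplitude d hr).differentiableAt.hasDerivAt
  hasDerivAt_deriv {r} hr := by
    set a := decayExponent d with ha
    have hderiv : HasDerivAt (fun r => a * r ^ (a - 1) * sphereFT d r +
        r ^ a * deriv (sphereFT d) r) _ r :=
      (((hasDerivAt_rpow_const (p := a - 1) (Or.inl hr.ne')).const_mul a).mul
        (hasDerivAt_sphereFT r)).add ((hasDerivAt_rpow_const (p := a) (Or.inl hr.ne')).mul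
          (hasDerivAt_deriv_sphereFT r).differentiableAt.hasDerivAt)
    have heq : deriv (sphereAmplitude d) =ᶠ[𝓝 r] fun r => a * r ^ (a - 1) * sphereFT d r +
        r ^ a * deriv (sphereFT d) r := by
      filter_upwards [eventually_gt_nhds hr] with ρ hρ
      exact (hasDerivAt_sphereAmplitude d hρ).deriv
    convert! hderiv.congr_of_eventuallyEq heq using 1
    have hd : (d : ℝ) - 1 = 2 * a := by rw [ha, decayExponent]; ring
    rw [deriv_deriv_sphereFT hr, hd, sphereAmplitude, ← ha, rpow_sub_one hr.ne',
      rpow_sub_one hr.ne']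
    field_simp
    ring

lemma one_le_four_mul_pi_sq : 1 ≤ 4 * π ^ 2 := by nlinarith [pi_gt_three]

lemma exists_oscEnergy_sphereAmplitude_bounds :
    ∃ m M : ℝ, 0 < m ∧ ∀ r, 1 / 10 ≤ r →
      m ≤ oscEnergy (4 * π ^ 2) (sphereAmplitude d) r ∧
        oscEnergy (4 * π ^ 2) (sphereAmplitude d) r ≤ M := by
  set r₀ : ℝ := 1 / (4 * π)
  have hr₀ : 0 < r₀ := by positivity
  have hr₀_le : r₀ ≤ 1 / 10 :=
    one_div_le_one_div_of_le (by norm_num) (by linarith [pi_gt_three])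
  have hamp : 0 < sphereAmplitude d r₀ := by
    have : 7 / 8 ≤ sphereFT d r₀ := sphereFT_ge (abs_of_pos hr₀).le
    exact mul_pos (rpow_pos_of_pos hr₀ _) (by linarith)
  have henergy : 0 < oscEnergy (4 * π ^ 2) (sphereAmplitude d) r₀ := by
    unfold oscEnergy; positivity
  exact ⟨_, _, mul_pos henergy (exp_pos _), fun r hr =>
    (isBesselSolution_sphereAmplitude d).oscEnergy_bounds one_le_four_mul_pi_sq hr₀
      (hr₀_le.trans hr)⟩

lemma exists_abs_sphereAmplitude_le :
    ∃ M : ℝ, 0 < M ∧ (∀ r, 1 / 10 ≤ r → |sphereAmplitude d r| ≤ M) ∧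
      ∀ x y, 1 / 10 ≤ x → 1 / 10 ≤ y →
        |sphereAmplitude d x - sphereAmplitude d y| ≤ M * |x - y| := by
  obtain ⟨m, M, hm, hE⟩ := exists_oscEnergy_sphereAmplitude_bounds d
  have hM : 0 < M := hm.trans_le ((hE 1 (by norm_num)).1.trans (hE 1 (by norm_num)).2)
  refine ⟨√M, sqrt_pos.2 hM, fun r hr => abs_le_sqrt
    ((sq_le_oscEnergy one_le_four_mul_pi_sq).trans (hE r hr).2), fun x y hx hy => ?_⟩
  exact (convex_Ici (1 / 10)).norm_image_sub_le_of_norm_hasDerivWithin_le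
    (fun r hr => ((isBesselSolution_sphereAmplitude d).hasDerivAt
      (by linarith [Set.mem_Ici.1 hr])).hasDerivWithinAt)
    (fun r hr => abs_le_sqrt ((deriv_sq_le_oscEnergy (by positivity)).trans (hE r hr).2)) hy hx

lemma exists_le_integral_sphereAmplitude_sq :
    ∃ m M : ℝ, 0 < m ∧ 0 < M ∧ ∀ b R : ℝ, 0 ≤ b → 1 ≤ R →
      m * (∫ ρ in (1 : ℝ)..R, ρ ^ (-b)) - M ≤
        ∫ ρ in (1 : ℝ)..R, ρ ^ (-b) * sphereAmplitude d ρ ^ 2 := by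
  obtain ⟨m, M, hm, hE⟩ := exists_oscEnergy_sphereAmplitude_bounds d
  have hM : 0 < M := hm.trans_le ((hE 1 (by norm_num)).1.trans (hE 1 (by norm_num)).2)
  refine ⟨m / (2 * (4 * π ^ 2)), (3 + |decayExponent d * (decayExponent d - 1)|) * M /
    (2 * (4 * π ^ 2)), by positivity, by positivity, fun b R hb hR => ?_⟩
  have := (isBesselSolution_sphereAmplitude d).mul_integral_rpow_sub_le one_le_four_mul_pi_sq
    (fun r hr => (hE r (by linarith)).1) (fun r hr => (hE r (by linarith)).2) hb hR
  rw [div_mul_eq_mul_div, ← sub_div, div_le_iff₀' (by positivity)]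
  exact this

lemma exists_abs_sphereFT_le :
    ∃ M : ℝ, 1 ≤ M ∧ ∀ r, 0 < r → |sphereFT d r| ≤ M * r ^ (-decayExponent d) := by
  obtain ⟨M, -, hM, -⟩ := exists_abs_sphereAmplitude_le d
  refine ⟨max 1 M, le_max_left _ _, fun r hr => ?_⟩
  rcases le_total (1 / 10) r with hr1 | hr1
  · have := (hM r hr1).trans (le_max_right 1 M)
    rwa [sphereAmplitude, abs_mul, abs_of_pos (rpow_pos_of_pos hr _),
      ← le_div_iff₀' (rpow_pos_of_pos hr _), div_eq_mul_inv, ← rpow_neg hr.le] at this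
  · calc |sphereFT d r| ≤ 1 * 1 := by rw [one_mul]; exact abs_sphereFT_le_one r
      _ ≤ max 1 M * r ^ (-decayExponent d) := by
        gcongr
        · exact le_max_left _ _
        · exact one_le_rpow_of_pos_of_le_one_of_nonpos hr (by linarith)
            (neg_nonpos.2 (decayExponent_nonneg d))

end SphereAmplitude

/-! ### Radial inverse Fourier transforms -/

section RadialFourierInv

variable {d : ℕ} {V : Rd d → ℂ}

lemma radial_fourierInv (h : ∀ R : Rd d ≃ₗᵢ[ℝ] Rd d, (fun ξ => V (R ξ)) =ᵐ[volume] V) :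
    Radial (𝓕⁻ V) := by
  intro x y hxy
  obtain ⟨R, hR⟩ := exists_linearIsometryEquiv_apply_eq hxy
  rw [← hR, ← Real.fourierInv_comp_linearIsometry R V x]
  exact (Real.fourierInv_congr_ae (h R) x).symm

lemma norm_fourierInv_le (V : Rd d → ℂ) (x : Rd d) : ‖𝓕⁻ V x‖ ≤ ∫ ξ, ‖V ξ‖ :=
  VectorFourier.norm_fourierIntegral_le_integral_norm _ _ _ _ _

lemma fourierInv_eq_integral_exp (V : Rd d → ℂ) (x : Rd d) :
    𝓕⁻ V x = ∫ ξ, Complex.exp (↑(2 * π * inner ℝ ξ x) * Complex.I) * V ξ := by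
  rw [Real.fourierInv_eq']
  simp

lemma fourierInv_eq_integral_cos (hV : Integrable V) (hr : Radial (𝓕⁻ V)) (x : Rd d) :
    𝓕⁻ V x = ∫ ξ, ((cos (2 * π * inner ℝ ξ x) : ℝ) : ℂ) * V ξ := by
  have hInt (x : Rd d) :
      Integrable fun ξ => Complex.exp (↑(2 * π * inner ℝ ξ x) * Complex.I) * V ξ := by
    refine hV.norm.mono ((by fun_prop : Continuous _).aestronglyMeasurable.mul hV.1)
      (Eventually.of_forall fun ξ => ?_)
    rw [norm_mul, Complex.norm_exp_ofReal_mul_I, one_mul, norm_norm]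
  have heven : 𝓕⁻ V x = (1 / 2 : ℂ) * (𝓕⁻ V x + 𝓕⁻ V (-x)) := by
    rw [hr (-x) x (norm_neg x)]; ring
  rw [heven, fourierInv_eq_integral_exp, fourierInv_eq_integral_exp,
    ← integral_add (hInt x) (hInt (-x)), ← integral_const_mul]
  congr 1 with ξ
  rw [Complex.ofReal_cos, Complex.cos]
  simp only [inner_neg_right, mul_neg, Complex.ofReal_neg]
  ring

variable [NeZero d]

lemma fourierInv_eq_integral_sphereFT (hV : Integrable V) (hr : Radial (𝓕⁻ V)) (x : Rd d) :
    𝓕⁻ V x = ∫ ξ, ((sphereFT d (‖x‖ * ‖ξ‖) : ℝ) : ℂ) * V ξ := by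
  have hmean : 𝓕⁻ V x = ∫ ω, 𝓕⁻ V (‖x‖ • ω) ∂(sphereMeasure d) := by
    rw [integral_congr_ae (g := fun _ => 𝓕⁻ V x)]
    · simp
    · filter_upwards [norm_eq_one_ae_sphereMeasure] with ω hω
      exact hr _ _ (by rw [norm_smul, norm_norm, hω, mul_one])
  have hInt : Integrable (Function.uncurry fun (ω ξ : Rd d) =>
      ((cos (2 * π * inner ℝ ξ (‖x‖ • ω)) : ℝ) : ℂ) * V ξ)
      ((sphereMeasure d).prod volume) := by
    refine ((integrable_const (1 : ℝ)).mul_prod hV.norm).mono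
      (((by fun_prop : Continuous _).aestronglyMeasurable).mul hV.1.comp_snd)
      (Eventually.of_forall fun p => ?_)
    simp only [Function.uncurry, norm_mul, Complex.norm_real, norm_norm, norm_one]
    gcongr
    exact abs_cos_le_one _
  rw [hmean]
  simp_rw [fourierInv_eq_integral_cos hV hr]
  rw [integral_integral_swap hInt]
  congr 1 with ξ
  rw [integral_mul_const, integral_complex_ofReal, ← norm_norm x, ← norm_smul, norm_norm,
    ← integral_cos_inner_sphereMeasure]
  simp only [real_inner_smul_left, real_inner_smul_right]

lemma exists_norm_fourierInv_le_rpow (d : ℕ) [NeZero d] :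
    ∃ M : ℝ, 1 ≤ M ∧ ∀ V : Rd d → ℂ, Integrable V → Radial (𝓕⁻ V) →
      ∀ δ, 0 < δ → (∀ ξ, ‖ξ‖ < δ → V ξ = 0) → ∀ x, x ≠ 0 →
        ‖𝓕⁻ V x‖ ≤ M * (‖x‖ * δ) ^ (-decayExponent d) * ∫ ξ, ‖V ξ‖ := by
  obtain ⟨M, hM, hJ⟩ := exists_abs_sphereFT_le d
  refine ⟨M, hM, fun V hV hr δ hδ hsupp x hx => ?_⟩
  rw [fourierInv_eq_integral_sphereFT hV hr x, ← integral_const_mul]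
  refine norm_integral_le_of_norm_le (hV.norm.const_mul _) (Eventually.of_forall fun ξ => ?_)
  rw [norm_mul, Complex.norm_real]
  by_cases hξ : ‖ξ‖ < δ
  · simp [hsupp ξ hξ]
  · push Not at hξ
    have hx0 : 0 < ‖x‖ := norm_pos_iff.2 hx
    gcongr
    refine (hJ _ (mul_pos hx0 (hδ.trans_le hξ))).trans ?_
    gcongr ?_ * ?_
    exact rpow_le_rpow_of_nonpos (by positivity) (by gcongr)
      (neg_nonpos.2 (decayExponent_nonneg d))

end RadialFourierInv

/-! ### Interpolation and Bernstein inequalities -/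

section Interpolation

variable {α E : Type*} [MeasurableSpace α] [NormedAddCommGroup E] {μ : Measure α} {f : α → E}

lemma eLpNorm_ofReal_le_iff {p : ℝ} {T : ℝ≥0∞} (hp : 0 < p) :
    eLpNorm f (ENNReal.ofReal p) μ ≤ T ↔ ∫⁻ x, ‖f x‖ₑ ^ p ∂μ ≤ T ^ p := by
  rw [eLpNorm_eq_lintegral_rpow_enorm_toReal (by simpa using hp) ENNReal.ofReal_ne_top,
    ENNReal.toReal_ofReal hp.le, one_div, ENNReal.rpow_inv_le_iff hp]

lemma eLpNorm_ofReal_rpow {p : ℝ} (hp : 0 < p) :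
    eLpNorm f (ENNReal.ofReal p) μ ^ p = ∫⁻ x, ‖f x‖ₑ ^ p ∂μ := by
  rw [eLpNorm_eq_lintegral_rpow_enorm_toReal (by simpa using hp) ENNReal.ofReal_ne_top,
    ENNReal.toReal_ofReal hp.le, one_div, ENNReal.rpow_inv_rpow hp.ne']

lemma lintegral_enorm_rpow_le {p q : ℝ} {B : ℝ≥0∞} (hq : 0 ≤ q) (hqp : q ≤ p)
    (hf : AEMeasurable (fun x => ‖f x‖ₑ) μ) (hB : ∀ᵐ x ∂μ, ‖f x‖ₑ ≤ B) :
    ∫⁻ x, ‖f x‖ₑ ^ p ∂μ ≤ B ^ (p - q) * ∫⁻ x, ‖f x‖ₑ ^ q ∂μ := by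
  rw [← lintegral_const_mul'' _ (hf.pow_const q)]
  refine lintegral_mono_ae (hB.mono fun x hx => ?_)
  calc ‖f x‖ₑ ^ p = ‖f x‖ₑ ^ (p - q) * ‖f x‖ₑ ^ q := by
        rw [← ENNReal.rpow_add_of_nonneg _ _ (sub_nonneg.2 hqp) hq, sub_add_cancel]
    _ ≤ B ^ (p - q) * ‖f x‖ₑ ^ q := by gcongr

lemma eLpNorm_le_rpow_mul_eLpNorm_rpow {p q : ℝ} {B : ℝ≥0∞} (hq : 0 < q) (hqp : q ≤ p)
    (hf : AEStronglyMeasurable f μ) (hB : ∀ᵐ x ∂μ, ‖f x‖ₑ ≤ B) :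
    eLpNorm f (ENNReal.ofReal p) μ ≤
      B ^ (1 - q / p) * eLpNorm f (ENNReal.ofReal q) μ ^ (q / p) := by
  have hp : 0 < p := hq.trans_le hqp
  rw [eLpNorm_ofReal_le_iff hp, ENNReal.mul_rpow_of_nonneg _ _ hp.le, ← ENNReal.rpow_mul,
    ← ENNReal.rpow_mul, div_mul_cancel₀ _ hp.ne', sub_mul, div_mul_cancel₀ _ hp.ne', one_mul,
    eLpNorm_ofReal_rpow hq]
  exact lintegral_enorm_rpow_le hq.le hqp hf.enorm hB

lemma eLpNorm_one_le_of_support {S : Set α} (hS : MeasurableSet S) (hf : AEStronglyMeasurable f μ)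
    (hfS : ∀ x ∉ S, f x = 0) : eLpNorm f 1 μ ≤ μ S ^ (1 / 2 : ℝ) * eLpNorm f 2 μ := by
  have hrestrict (p) : eLpNorm f p μ = eLpNorm f p (μ.restrict S) := by
    rw [← eLpNorm_indicator_eq_eLpNorm_restrict hS, Set.indicator_eq_self.2]
    exact fun x hx => not_imp_comm.1 (hfS x) hx
  rw [hrestrict, hrestrict 2, mul_comm]
  refine (eLpNorm_le_eLpNorm_mul_rpow_measure_univ one_le_two hf.restrict).trans_eq ?_
  rw [Measure.restrict_apply_univ]
  norm_num

end Interpolation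

section Bernstein

variable {d : ℕ} {V : Rd d → ℂ} {S : Set (Rd d)}

lemma integrable_of_support (hS : MeasurableSet S) (hSfin : volume S ≠ ∞) (hV : MemLp V 2)
    (hVS : ∀ ξ ∉ S, V ξ = 0) : Integrable V :=
  memLp_one_iff_integrable.1 ⟨hV.1, (eLpNorm_one_le_of_support hS hV.1 hVS).trans_lt
    (ENNReal.mul_lt_top (ENNReal.rpow_lt_top_of_nonneg (by norm_num) hSfin) hV.2)⟩

lemma enorm_fourierInv_le (V : Rd d → ℂ) (x : Rd d) : ‖𝓕⁻ V x‖ₑ ≤ eLpNorm V 1 := by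
  rw [eLpNorm_one_eq_lintegral_enorm, fourierInv_eq_integral_exp]
  refine (enorm_integral_le_lintegral_enorm _).trans_eq (lintegral_congr fun ξ => ?_)
  rw [enorm_mul, ← ofReal_norm, Complex.norm_exp_ofReal_mul_I, ENNReal.ofReal_one, one_mul]

lemma eLpNorm_fourierInv_le {p : ℝ} (hp : 2 ≤ p) (hV1 : Integrable V) (hV : MemLp V 2) :
    eLpNorm (𝓕⁻ V) (ENNReal.ofReal p) ≤ eLpNorm V 1 ^ (1 - 2 / p) * eLpNorm V 2 ^ (2 / p) := by
  have := eLpNorm_le_rpow_mul_eLpNorm_rpow (μ := volume) zero_lt_two hp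
    (continuous_fourierInv hV1).aestronglyMeasurable (ae_of_all _ (enorm_fourierInv_le V))
  rwa [ENNReal.ofReal_ofNat,
    (isFT_fourierInv hV1).eLpNorm_two_eq hV (memLp_two_fourierInv hV1 hV)] at this

lemma eLpNorm_fourierInv_le_of_support {p : ℝ} (hp : 2 ≤ p) (hS : MeasurableSet S)
    (hSfin : volume S ≠ ∞) (hV : MemLp V 2) (hVS : ∀ ξ ∉ S, V ξ = 0) :
    eLpNorm (𝓕⁻ V) (ENNReal.ofReal p) ≤ volume S ^ (1 / 2 - 1 / p) * eLpNorm V 2 := by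
  have hexp : 0 ≤ 1 - 2 / p := by rw [sub_nonneg, div_le_one (by linarith)]; exact hp
  calc eLpNorm (𝓕⁻ V) (ENNReal.ofReal p) volume
      ≤ eLpNorm V 1 volume ^ (1 - 2 / p) * eLpNorm V 2 volume ^ (2 / p) :=
        eLpNorm_fourierInv_le hp (integrable_of_support hS hSfin hV hVS) hV
    _ ≤ (volume S ^ (1 / 2 : ℝ) * eLpNorm V 2 volume) ^ (1 - 2 / p) *
          eLpNorm V 2 volume ^ (2 / p) :=
        mul_le_mul_left
          (ENNReal.rpow_le_rpow (eLpNorm_one_le_of_support hS hV.1 hVS) hexp) _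
    _ = volume S ^ (1 / 2 - 1 / p) * eLpNorm V 2 volume := by
        rw [ENNReal.mul_rpow_of_nonneg _ _ hexp, mul_assoc,
          ← ENNReal.rpow_add_of_nonneg _ _ hexp (by positivity), sub_add_cancel, ENNReal.rpow_one,
          ← ENNReal.rpow_mul]
        congr 2
        ring

end Bernstein

/-! ### The subcritical Sobolev embedding -/

section Sobolev

/-- The `H^s` norm of the function with Fourier transform `U`. -/
def sobolevNorm {d : ℕ} (s : ℝ) (U : Rd d → ℂ) : ℝ≥0∞ :=
  eLpNorm (fun ξ => (((1 + ‖ξ‖ ^ 2) ^ (s / 2) : ℝ) : ℂ) * U ξ) 2 volume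

/-- The restriction of `U` to frequencies of norm less than `A`. -/
def freqCutoff {d : ℕ} (A : ℝ) (U : Rd d → ℂ) : Rd d → ℂ := (Metric.ball 0 A).indicator U

variable {d : ℕ} {s p A : ℝ} {U V u : Rd d → ℂ}

lemma eLpNorm_two_le_rpow_neg_mul_sobolevNorm (hs : 0 ≤ s) (hA : 0 < A)
    (hV : ∀ ξ, V ξ = 0 ∨ V ξ = U ξ ∧ A ^ 2 ≤ 1 + ‖ξ‖ ^ 2) :
    eLpNorm V 2 ≤ ENNReal.ofReal (A ^ (-s)) * sobolevNorm s U := by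
  refine eLpNorm_le_mul_eLpNorm_of_ae_le_mul (ae_of_all _ fun ξ => ?_) 2
  rw [norm_mul, Complex.norm_real, norm_of_nonneg (by positivity), ← mul_assoc]
  rcases hV ξ with hξ | ⟨hξ, hAξ⟩
  · rw [hξ, norm_zero]; positivity
  · rw [hξ]
    refine le_mul_of_one_le_left (norm_nonneg _) ?_
    calc 1 = A ^ (-s) * (A ^ 2) ^ (s / 2) := by
          rw [← rpow_natCast, ← rpow_mul hA.le, ← rpow_add hA]
          norm_num
          ring_nf
          exact (rpow_zero A).symm
      _ ≤ A ^ (-s) * (1 + ‖ξ‖ ^ 2) ^ (s / 2) := by gcongr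

lemma eLpNorm_fourierInv_le_rpow_mul_sobolevNorm (hs : 0 ≤ s) (hp : 2 ≤ p) (hA : 0 < A)
    (hV2 : MemLp V 2) (hsupp : ∀ ξ ∉ Metric.ball 0 A, V ξ = 0)
    (hV : ∀ ξ, V ξ = 0 ∨ V ξ = U ξ ∧ (A / 2) ^ 2 ≤ 1 + ‖ξ‖ ^ 2) :
    eLpNorm (𝓕⁻ V) (ENNReal.ofReal p) ≤ ENNReal.ofReal (A ^ (d * (1 / 2 - 1 / p) - s)) *
      (ENNReal.ofReal (2 ^ s) * volume (Metric.ball (0 : Rd d) 1) ^ (1 / 2 - 1 / p) *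
        sobolevNorm s U) := by
  have hexp : 0 ≤ 1 / 2 - 1 / p := sub_nonneg.2 (one_div_le_one_div_of_le zero_lt_two hp)
  have hscale : (A ^ d) ^ (1 / 2 - 1 / p) * (A / 2) ^ (-s) =
      A ^ (d * (1 / 2 - 1 / p) - s) * 2 ^ s := by
    rw [div_rpow hA.le zero_le_two, rpow_neg zero_le_two, div_inv_eq_mul, ← rpow_natCast,
      ← rpow_mul hA.le, ← mul_assoc, ← rpow_add hA, ← sub_eq_add_neg]
  calc eLpNorm (𝓕⁻ V) (ENNReal.ofReal p) volume
      ≤ volume (Metric.ball (0 : Rd d) A) ^ (1 / 2 - 1 / p) * eLpNorm V 2 volume :=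
        eLpNorm_fourierInv_le_of_support hp measurableSet_ball measure_ball_lt_top.ne hV2 hsupp
    _ ≤ volume (Metric.ball (0 : Rd d) A) ^ (1 / 2 - 1 / p) *
          (ENNReal.ofReal ((A / 2) ^ (-s)) * sobolevNorm s U) :=
        mul_le_mul_right (eLpNorm_two_le_rpow_neg_mul_sobolevNorm hs (half_pos hA) hV) _
    _ = ENNReal.ofReal ((A ^ d) ^ (1 / 2 - 1 / p) * (A / 2) ^ (-s)) *
          (volume (Metric.ball (0 : Rd d) 1) ^ (1 / 2 - 1 / p) * sobolevNorm s U) := by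
        rw [Measure.addHaar_ball_of_pos _ _ hA, finrank_euclideanSpace_fin,
          ENNReal.mul_rpow_of_nonneg _ _ hexp, ENNReal.ofReal_rpow_of_nonneg (by positivity) hexp,
          ENNReal.ofReal_mul (by positivity)]
        ring
    _ = _ := by rw [hscale, ENNReal.ofReal_mul (by positivity)]; ring

lemma memLp_freqCutoff (hU : MemLp U 2) (A : ℝ) : MemLp (freqCutoff A U) 2 :=
  hU.indicator measurableSet_ball

lemma freqCutoff_of_notMem {ξ : Rd d} (hξ : ξ ∉ Metric.ball 0 A) : freqCutoff A U ξ = 0 :=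
  Set.indicator_of_notMem hξ U

lemma integrable_freqCutoff (hU : MemLp U 2) (A : ℝ) : Integrable (freqCutoff A U) :=
  integrable_of_support measurableSet_ball measure_ball_lt_top.ne (memLp_freqCutoff hU A)
    fun _ => freqCutoff_of_notMem

lemma eLpNorm_fourierInv_le_add_sub {V W : Rd d → ℂ} (hp : 1 ≤ p) (hV : Integrable V)
    (hW : Integrable W) :
    eLpNorm (𝓕⁻ V) (ENNReal.ofReal p) ≤
      eLpNorm (𝓕⁻ W) (ENNReal.ofReal p) + eLpNorm (𝓕⁻ (V - W)) (ENNReal.ofReal p) := by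
  have hadd : 𝓕⁻ (W + (V - W)) = 𝓕⁻ W + 𝓕⁻ (V - W) :=
    VectorFourier.fourierIntegral_add continuous_fourierChar (continuous_inner.neg) hW (hV.sub hW)
  rw [add_sub_cancel] at hadd
  rw [hadd]
  exact eLpNorm_add_le (continuous_fourierInv hW).aestronglyMeasurable
    (continuous_fourierInv (hV.sub hW)).aestronglyMeasurable (ENNReal.one_le_ofReal.2 hp)

lemma freqCutoff_sub_freqCutoff_eq (A : ℝ) (ξ : Rd d) :
    (freqCutoff (2 * A) U - freqCutoff A U) ξ = 0 ∨
      (freqCutoff (2 * A) U - freqCutoff A U) ξ = U ξ ∧ A ≤ ‖ξ‖ := by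
  by_cases h : ‖ξ‖ < A
  · left
    have h2 : ‖ξ‖ < 2 * A := by linarith [norm_nonneg ξ]
    simp [freqCutoff, Set.indicator, h, h2]
  · by_cases h2 : ‖ξ‖ < 2 * A
    · right
      exact ⟨by simp [freqCutoff, Set.indicator, h, h2], not_lt.1 h⟩
    · left
      simp [freqCutoff, Set.indicator, h, h2]

lemma eLpNorm_fourierInv_freqCutoff_le_sum (hs : 0 ≤ s) (hp : 2 ≤ p) (hU : MemLp U 2) (n : ℕ) :
    eLpNorm (𝓕⁻ (freqCutoff (2 ^ n) U)) (ENNReal.ofReal p) ≤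
      (∑ j ∈ Finset.range (n + 1), ENNReal.ofReal (2 ^ (d * (1 / 2 - 1 / p) - s)) ^ j) *
        (ENNReal.ofReal (2 ^ s) * volume (Metric.ball (0 : Rd d) 1) ^ (1 / 2 - 1 / p) *
          sobolevNorm s U) := by
  induction n with
  | zero =>
    have := eLpNorm_fourierInv_le_rpow_mul_sobolevNorm hs hp one_pos (memLp_freqCutoff hU 1)
      (fun ξ => freqCutoff_of_notMem) fun ξ => by
        by_cases h : ξ ∈ Metric.ball (0 : Rd d) 1
        · exact .inr ⟨Set.indicator_of_mem h U, by nlinarith [sq_nonneg ‖ξ‖]⟩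
        · exact .inl (freqCutoff_of_notMem h)
    simpa using this
  | succ n ih =>
    have hpow : ENNReal.ofReal (((2 : ℝ) ^ (n + 1)) ^ (d * (1 / 2 - 1 / p) - s)) =
        ENNReal.ofReal (2 ^ (d * (1 / 2 - 1 / p) - s)) ^ (n + 1) := by
      rw [← ENNReal.ofReal_pow (by positivity), ← rpow_natCast, ← rpow_natCast,
        ← rpow_mul zero_le_two, ← rpow_mul zero_le_two, mul_comm]
    rw [Finset.sum_range_succ, add_mul, ← hpow]
    refine (eLpNorm_fourierInv_le_add_sub (by linarith)
      (integrable_freqCutoff hU _) (integrable_freqCutoff hU (2 ^ n))).trans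
      (add_le_add ih (eLpNorm_fourierInv_le_rpow_mul_sobolevNorm hs hp (by positivity)
        ((memLp_freqCutoff hU _).sub (memLp_freqCutoff hU _)) (fun ξ hξ => ?_) fun ξ => ?_))
    · have hξ' : ξ ∉ Metric.ball 0 (2 ^ n) := fun h =>
        hξ (Metric.ball_subset_ball (pow_le_pow_right₀ one_le_two n.le_succ) h)
      rw [Pi.sub_apply, freqCutoff_of_notMem hξ, freqCutoff_of_notMem hξ', sub_zero]
    · rw [pow_succ', mul_div_cancel_left₀ _ two_ne_zero]
      refine (freqCutoff_sub_freqCutoff_eq _ ξ).imp_right fun h => ⟨h.1, ?_⟩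
      have := pow_le_pow_left₀ (by positivity) h.2 2
      linarith

lemma tendsto_eLpNorm_fourierInv_freqCutoff_sub (hs : 0 < s) (hU : MemLp U 2) (hu : MemLp u 2)
    (h : IsFT U u) (hN : sobolevNorm s U ≠ ∞) :
    Tendsto (fun n : ℕ => eLpNorm (𝓕⁻ (freqCutoff (2 ^ n) U) - u) 2 volume) atTop (𝓝 0) := by
  have hle (n : ℕ) : eLpNorm (𝓕⁻ (freqCutoff (2 ^ n) U) - u) 2 volume ≤
      ENNReal.ofReal ((2 ^ (-s)) ^ n) * sobolevNorm s U := by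
    have hV := memLp_freqCutoff hU (2 ^ n)
    have hV1 := integrable_freqCutoff hU (2 ^ n)
    have hpow : ((2 : ℝ) ^ (-s)) ^ n = (2 ^ n) ^ (-s) := by
      rw [← rpow_natCast, ← rpow_natCast, ← rpow_mul zero_le_two, ← rpow_mul zero_le_two, mul_comm]
    have hsub := h.sub hU hu hV (memLp_two_fourierInv hV1 hV) (isFT_fourierInv hV1)
    rw [eLpNorm_sub_comm, hpow,
      hsub.eLpNorm_two_eq (hU.sub hV) (hu.sub (memLp_two_fourierInv hV1 hV))]
    refine eLpNorm_two_le_rpow_neg_mul_sobolevNorm hs.le (by positivity) fun ξ => ?_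
    by_cases hξ : ξ ∈ Metric.ball (0 : Rd d) (2 ^ n)
    · exact .inl (by rw [Pi.sub_apply, freqCutoff, Set.indicator_of_mem hξ, sub_self])
    · refine .inr ⟨by rw [Pi.sub_apply, freqCutoff_of_notMem hξ, sub_zero], ?_⟩
      have := pow_le_pow_left₀ (by positivity) (not_lt.1 (mem_ball_zero_iff.not.1 hξ)) 2
      linarith
  have hgeom := ENNReal.Tendsto.mul_const (b := sobolevNorm s U) (ENNReal.tendsto_ofReal
    (tendsto_pow_atTop_nhds_zero_of_lt_one (by positivity : (0 : ℝ) ≤ 2 ^ (-s))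
      (rpow_lt_one_of_one_lt_of_neg one_lt_two (neg_lt_zero.2 hs)))) (.inr hN)
  rw [ENNReal.ofReal_zero, zero_mul] at hgeom
  exact tendsto_of_tendsto_of_tendsto_of_le_of_le tendsto_const_nhds hgeom (fun _ => zero_le) hle

theorem exists_eLpNorm_le_mul_sobolevNorm (d : ℕ) (hs : 0 < s) (hp : 2 ≤ p)
    (hsub : d * (1 / 2 - 1 / p) < s) :
    ∃ K : ℝ, 0 < K ∧ ∀ U u : Rd d → ℂ, MemLp U 2 → MemLp u 2 → IsFT U u →
      eLpNorm u (ENNReal.ofReal p) ≤ ENNReal.ofReal K * sobolevNorm s U := by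
  set r : ℝ≥0∞ := ENNReal.ofReal (2 ^ (d * (1 / 2 - 1 / p) - s))
  have hr : r < 1 := ENNReal.ofReal_lt_one.2
    (rpow_lt_one_of_one_lt_of_neg one_lt_two (sub_neg.2 hsub))
  set C : ℝ≥0∞ :=
    (1 - r)⁻¹ * (ENNReal.ofReal (2 ^ s) * volume (Metric.ball (0 : Rd d) 1) ^ (1 / 2 - 1 / p))
  have hvol := Metric.measure_ball_pos volume (0 : Rd d) one_pos
  have hvol_fin := measure_ball_lt_top (μ := volume) (x := (0 : Rd d)) (r := 1)
  have hexp : 0 ≤ 1 / 2 - 1 / p := sub_nonneg.2 (one_div_le_one_div_of_le zero_lt_two hp)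
  have hC0 : C ≠ 0 := by
    refine mul_ne_zero (ENNReal.inv_ne_zero.2 (tsub_le_self.trans_lt ENNReal.one_lt_top).ne)
      (mul_ne_zero (ENNReal.ofReal_pos.2 (by positivity)).ne' ?_)
    exact (ENNReal.rpow_pos hvol hvol_fin.ne).ne'
  have hC : C ≠ ∞ :=
    ENNReal.mul_ne_top (ENNReal.inv_ne_top.2 (tsub_pos_of_lt hr).ne')
      (ENNReal.mul_ne_top ENNReal.ofReal_ne_top (ENNReal.rpow_ne_top_of_nonneg hexp hvol_fin.ne))
  refine ⟨C.toReal, ENNReal.toReal_pos hC0 hC, fun U u hU hu h => ?_⟩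
  rw [ENNReal.ofReal_toReal hC]
  by_cases hN : sobolevNorm s U = ∞
  · simp [hN, ENNReal.mul_top hC0]
  refine eLpNorm_le_of_tendstoInMeasure (Eventually.of_forall fun n => ?_)
    (tendstoInMeasure_of_tendsto_eLpNorm two_ne_zero
      (fun n => (continuous_fourierInv (integrable_freqCutoff hU _)).aestronglyMeasurable) hu.1
      (tendsto_eLpNorm_fourierInv_freqCutoff_sub hs hU hu h hN))
    (fun n => (continuous_fourierInv (integrable_freqCutoff hU _)).aestronglyMeasurable)
  refine (eLpNorm_fourierInv_freqCutoff_le_sum hs.le hp hU n).trans ?_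
  rw [mul_assoc (1 - r)⁻¹, ← ENNReal.tsum_geometric]
  exact mul_le_mul_left (ENNReal.sum_le_tsum _) _

end Sobolev

/-! ### Polar coordinates -/

section Polar

lemma lintegral_fun_norm_eq {E : Type*} [NormedAddCommGroup E] [NormedSpace ℝ E]
    [MeasurableSpace E] [BorelSpace E] [FiniteDimensional ℝ E] [Nontrivial E] (μ : Measure E)
    [μ.IsAddHaarMeasure] {f : ℝ → ℝ≥0∞} (hf : Measurable f) :
    ∫⁻ x, f ‖x‖ ∂μ = Module.finrank ℝ E * μ (Metric.ball 0 1) *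
      ∫⁻ y in Set.Ioi (0 : ℝ), ENNReal.ofReal (y ^ (Module.finrank ℝ E - 1)) * f y := by
  have hsnd : Measurable fun y : Set.Ioi (0 : ℝ) => f y := hf.comp measurable_subtype_coe
  calc ∫⁻ x, f ‖x‖ ∂μ = ∫⁻ x : ({0}ᶜ : Set E), f ‖x.1‖ ∂(μ.comap (↑)) := by
        rw [lintegral_subtype_comap (measurableSet_singleton _).compl fun x => f ‖x‖,
          restrict_compl_singleton]
    _ = ∫⁻ x, f x.2 ∂μ.toSphere.prod (.volumeIoiPow (Module.finrank ℝ E - 1)) := by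
        simpa using μ.measurePreserving_homeomorphUnitSphereProd.lintegral_comp_emb
          (Homeomorph.measurableEmbedding _) (f ∘ Subtype.val ∘ Prod.snd)
    _ = μ.toSphere Set.univ *
          ∫⁻ y : Set.Ioi (0 : ℝ), f y ∂.volumeIoiPow (Module.finrank ℝ E - 1) := by
        simpa using lintegral_prod_mul (μ := μ.toSphere) (f := fun _ => 1) aemeasurable_const
          hsnd.aemeasurable (ν := .volumeIoiPow (Module.finrank ℝ E - 1))
    _ = _ := by
        rw [μ.toSphere_apply_univ, Measure.volumeIoiPow,
          lintegral_withDensity_eq_lintegral_mul _ (by fun_prop) hsnd]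
        exact congrArg _ (lintegral_subtype_comap measurableSet_Ioi fun y : ℝ =>
          ENNReal.ofReal (y ^ (Module.finrank ℝ E - 1)) * f y)

variable {d : ℕ} [NeZero d]

lemma setLIntegral_fun_norm_eq {S : Set ℝ} (hS : MeasurableSet S) (hS0 : S ⊆ Set.Ioi 0)
    {f : ℝ → ℝ≥0∞} (hf : Measurable f) :
    ∫⁻ x in {x : Rd d | ‖x‖ ∈ S}, f ‖x‖ = d * volume (Metric.ball (0 : Rd d) 1) *
      ∫⁻ y in S, ENNReal.ofReal (y ^ (d - 1)) * f y := by
  have hind (y : ℝ) : ENNReal.ofReal (y ^ (d - 1)) * S.indicator f y =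
      S.indicator (fun y => ENNReal.ofReal (y ^ (d - 1)) * f y) y :=
    (Set.indicator_mul_right S (fun y => ENNReal.ofReal (y ^ (d - 1))) f).symm
  have hpre : MeasurableSet {x : Rd d | ‖x‖ ∈ S} := hS.preimage measurable_norm
  rw [← lintegral_indicator hpre]
  refine (lintegral_fun_norm_eq volume (hf.indicator hS)).trans ?_
  simp only [finrank_euclideanSpace_fin, hind]
  rw [lintegral_indicator hS, Measure.restrict_restrict hS, Set.inter_eq_left.2 hS0]

lemma setLIntegral_norm_mem_Ioc_eq {a b : ℝ} (ha : 0 ≤ a) (hab : a ≤ b) {f : ℝ → ℝ}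
    (hf : Measurable f) (hf0 : ∀ y ∈ Set.Ioc a b, 0 ≤ f y)
    (hfi : IntervalIntegrable (fun y => y ^ (d - 1) * f y) volume a b) :
    ∫⁻ x in {x : Rd d | ‖x‖ ∈ Set.Ioc a b}, ENNReal.ofReal (f ‖x‖) =
      d * volume (Metric.ball (0 : Rd d) 1) *
        ENNReal.ofReal (∫ y in a..b, y ^ (d - 1) * f y) := by
  have hpow (y : ℝ) (hy : y ∈ Set.Ioc a b) : 0 ≤ y ^ (d - 1) := pow_nonneg (ha.trans hy.1.le) _
  rw [setLIntegral_fun_norm_eq measurableSet_Ioc (fun y hy => ha.trans_lt hy.1)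
    (f := fun y => ENNReal.ofReal (f y)) hf.ennreal_ofReal, intervalIntegral.integral_of_le hab,
    ofReal_integral_eq_lintegral_ofReal hfi.1]
  · congr 1
    exact setLIntegral_congr_fun measurableSet_Ioc fun y hy =>
      (ENNReal.ofReal_mul (hpow y hy)).symm
  · filter_upwards [ae_restrict_mem measurableSet_Ioc] with y hy using
      mul_nonneg (hpow y hy) (hf0 y hy)

lemma setLIntegral_norm_mem_Ioc_le {a b : ℝ} (ha : 0 ≤ a) {f : ℝ → ℝ≥0∞} (hf : Measurable f) :
    ∫⁻ x in {x : Rd d | ‖x‖ ∈ Set.Ioc a b}, f ‖x‖ ≤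
      d * volume (Metric.ball (0 : Rd d) 1) * (ENNReal.ofReal (b ^ (d - 1)) * ∫⁻ y, f y) := by
  rw [setLIntegral_fun_norm_eq measurableSet_Ioc (fun y hy => ha.trans_lt hy.1) hf,
    ← lintegral_const_mul _ hf]
  refine mul_le_mul_right ((setLIntegral_mono (by fun_prop) fun y hy => ?_).trans
    (setLIntegral_le_lintegral _ _)) _
  have := ha.trans hy.1.le
  have := hy.2
  gcongr

end Polar

section Resolvent

variable {γ : ℝ}

lemma integrable_inv_one_add_abs_rpow (hγ : 1 < γ) : Integrable fun t : ℝ => (1 + |t| ^ γ)⁻¹ := by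
  have hjap : Integrable fun t : ℝ => (1 + ‖t‖) ^ (-γ) := integrable_one_add_norm (by simpa)
  refine (hjap.const_mul (2 ^ γ)).mono' (Measurable.aestronglyMeasurable (by fun_prop))
    (ae_of_all _ fun t => ?_)
  have hmax : (1 + |t|) ^ γ ≤ 2 ^ γ * (1 + |t| ^ γ) := by
    have h1 : 1 ≤ 1 + |t| ^ γ := le_add_of_nonneg_right (by positivity)
    rcases le_total |t| 1 with ht | ht
    · calc (1 + |t|) ^ γ ≤ 2 ^ γ := by gcongr; linarith
        _ ≤ 2 ^ γ * (1 + |t| ^ γ) := le_mul_of_one_le_right (by positivity) h1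
    · calc (1 + |t|) ^ γ ≤ (2 * |t|) ^ γ := by gcongr; linarith
        _ = 2 ^ γ * |t| ^ γ := mul_rpow zero_le_two (abs_nonneg t)
        _ ≤ 2 ^ γ * (1 + |t| ^ γ) := by gcongr; linarith
  rw [norm_of_nonneg (by positivity), rpow_neg (by positivity),
    inv_le_iff_one_le_mul₀ (by positivity), mul_right_comm, norm_eq_abs, ← div_eq_mul_inv,
    one_le_div (by positivity)]
  exact hmax

lemma lintegral_inv_add_abs_sub_rpow (hγ : 0 < γ) (a : ℝ) {ε : ℝ} (hε : 0 < ε) :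
    ∫⁻ y : ℝ, ENNReal.ofReal (ε + |y - a| ^ γ)⁻¹ =
      ENNReal.ofReal (ε ^ (1 / γ - 1)) * ∫⁻ t : ℝ, ENNReal.ofReal (1 + |t| ^ γ)⁻¹ := by
  have hscale : 0 < ε ^ (-(1 / γ)) := by positivity
  have hpt (y : ℝ) : ENNReal.ofReal (ε + |y| ^ γ)⁻¹ =
      ENNReal.ofReal ε⁻¹ * ENNReal.ofReal (1 + |ε ^ (-(1 / γ)) * y| ^ γ)⁻¹ := by
    rw [abs_mul, abs_of_pos hscale, mul_rpow hscale.le (abs_nonneg y), ← rpow_mul hε.le, neg_mul,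
      one_div_mul_cancel hγ.ne', rpow_neg_one, ← ENNReal.ofReal_mul (by positivity), ← mul_inv,
      mul_add, mul_one, mul_inv_cancel_left₀ hε.ne']
  calc ∫⁻ y : ℝ, ENNReal.ofReal (ε + |y - a| ^ γ)⁻¹
      = ∫⁻ y : ℝ, ENNReal.ofReal (ε + |y| ^ γ)⁻¹ :=
        lintegral_sub_right_eq_self (fun y : ℝ => ENNReal.ofReal (ε + |y| ^ γ)⁻¹) a
    _ = ENNReal.ofReal ε⁻¹ *
          ∫⁻ t, ENNReal.ofReal (1 + |t| ^ γ)⁻¹ ∂(volume.map (ε ^ (-(1 / γ)) * ·)) := by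
        simp_rw [hpt]
        rw [lintegral_const_mul _ (by fun_prop), lintegral_map (by fun_prop) (by fun_prop)]
    _ = ENNReal.ofReal (ε ^ (1 / γ - 1)) * ∫⁻ t : ℝ, ENNReal.ofReal (1 + |t| ^ γ)⁻¹ := by
        rw [Real.map_volume_mul_left hscale.ne', lintegral_smul_measure, smul_eq_mul, ← mul_assoc,
          ← ENNReal.ofReal_mul (by positivity), abs_of_pos (by positivity), ← rpow_neg hε.le,
          neg_neg, sub_eq_neg_add, rpow_add hε, rpow_neg_one]

lemma exists_setLIntegral_inv_add_abs_norm_sub_rpow_le (d : ℕ) [NeZero d] (hγ : 1 < γ) {a b : ℝ}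
    (ha : 0 ≤ a) :
    ∃ K : ℝ, 0 < K ∧ ∀ ε > 0,
      ∫⁻ x in {x : Rd d | ‖x‖ ∈ Set.Ioc a b}, ENNReal.ofReal (ε + |‖x‖ - 1| ^ γ)⁻¹ ≤
        ENNReal.ofReal (K * ε ^ (1 / γ - 1)) := by
  set C : ℝ≥0∞ := d * volume (Metric.ball (0 : Rd d) 1) * (ENNReal.ofReal (b ^ (d - 1)) *
    ∫⁻ t : ℝ, ENNReal.ofReal (1 + |t| ^ γ)⁻¹)
  have hC : C ≠ ∞ := ENNReal.mul_ne_top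
    (ENNReal.mul_ne_top (ENNReal.natCast_ne_top d) measure_ball_lt_top.ne)
    (ENNReal.mul_ne_top ENNReal.ofReal_ne_top
      (integrable_inv_one_add_abs_rpow hγ).lintegral_lt_top.ne)
  refine ⟨C.toReal + 1, by positivity, fun ε hε => ?_⟩
  calc ∫⁻ x in {x : Rd d | ‖x‖ ∈ Set.Ioc a b}, ENNReal.ofReal (ε + |‖x‖ - 1| ^ γ)⁻¹
      ≤ d * volume (Metric.ball (0 : Rd d) 1) * (ENNReal.ofReal (b ^ (d - 1)) *
          ∫⁻ y : ℝ, ENNReal.ofReal (ε + |y - 1| ^ γ)⁻¹) :=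
        setLIntegral_norm_mem_Ioc_le ha (f := fun y => ENNReal.ofReal (ε + |y - 1| ^ γ)⁻¹)
          (by fun_prop)
    _ = C * ENNReal.ofReal (ε ^ (1 / γ - 1)) := by
        rw [lintegral_inv_add_abs_sub_rpow (by linarith) 1 hε]
        ring
    _ ≤ ENNReal.ofReal ((C.toReal + 1) * ε ^ (1 / γ - 1)) := by
        rw [ENNReal.ofReal_mul (by positivity)]
        gcongr
        exact ENNReal.le_ofReal_iff_toReal_le hC (by positivity) |>.2 (by linarith)

end Resolvent

section RadialMass

/-- Up to constants, `radialMass (d - 1 - a * p) R` is the integral of `min 1 ‖x‖⁻ᵃ ^ p` over the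
ball of radius `R` in `ℝᵈ`. The last summand, the share of the outermost dyadic shell, is dominated
by the others but lets the mass outside the ball be absorbed without case distinctions. -/
def radialMass (β R : ℝ) : ℝ := 1 + (∫ y in (1 : ℝ)..R, y ^ β) + R ^ (β + 1)

lemma integral_rpow_nonneg (β : ℝ) {R : ℝ} (hR : 1 ≤ R) : 0 ≤ ∫ y in (1 : ℝ)..R, y ^ β :=
  intervalIntegral.integral_nonneg hR fun _ hy => rpow_nonneg (zero_le_one.trans hy.1) _

lemma one_le_radialMass (β : ℝ) {R : ℝ} (hR : 1 ≤ R) : 1 ≤ radialMass β R := by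
  have := integral_rpow_nonneg β hR
  have := rpow_nonneg (zero_le_one.trans hR) (β + 1)
  rw [radialMass]
  linarith

variable {d : ℕ} {a p B R : ℝ} {f : Rd d → ℂ}

lemma setLIntegral_ball_enorm_rpow_le [NeZero d] (hp : 0 ≤ p) (hB : 0 ≤ B) (hf : ∀ x, ‖f x‖ ≤ B) :
    ∫⁻ x in Metric.closedBall 0 1, ‖f x‖ₑ ^ p ≤
      ENNReal.ofReal (B ^ p) * volume (Metric.ball (0 : Rd d) 1) := by
  rw [← Measure.addHaar_closedBall_eq_addHaar_ball, ← setLIntegral_const,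
    ← ENNReal.ofReal_rpow_of_nonneg hB hp]
  refine lintegral_mono fun x => ENNReal.rpow_le_rpow ?_ hp
  rw [← ofReal_norm]
  exact ENNReal.ofReal_le_ofReal (hf x)

lemma setLIntegral_shell_enorm_rpow_le [NeZero d] (hp : 0 ≤ p) (hB : 0 ≤ B) (hR : 1 ≤ R)
    (hf : ∀ x ≠ 0, ‖f x‖ ≤ B * ‖x‖ ^ (-a)) :
    ∫⁻ x in {x : Rd d | ‖x‖ ∈ Set.Ioc 1 R}, ‖f x‖ₑ ^ p ≤
      ENNReal.ofReal (B ^ p) * (d * volume (Metric.ball (0 : Rd d) 1) *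
        ENNReal.ofReal (∫ y in (1 : ℝ)..R, y ^ (d - 1 - a * p))) := by
  have hbound : ∀ x ∈ {x : Rd d | ‖x‖ ∈ Set.Ioc 1 R},
      ‖f x‖ₑ ^ p ≤ ENNReal.ofReal (B ^ p) * ENNReal.ofReal (‖x‖ ^ (-(a * p))) := fun x hx => by
    have hx0 : 0 < ‖x‖ := zero_lt_one.trans hx.1
    rw [← ENNReal.ofReal_mul (by positivity), ← neg_mul, rpow_mul hx0.le,
      ← mul_rpow hB (by positivity), ← ofReal_norm,
      ENNReal.ofReal_rpow_of_nonneg (norm_nonneg _) hp]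
    exact ENNReal.ofReal_le_ofReal
      (rpow_le_rpow (norm_nonneg _) (hf x (norm_pos_iff.1 hx0)) hp)
  have hpow : ∀ y ∈ Set.uIcc 1 R,
      y ^ (d - 1) * y ^ (-(a * p)) = y ^ (d - 1 - a * p) := fun y hy => by
    have hy0 : 0 < y := zero_lt_one.trans_le (Set.uIcc_of_le hR ▸ hy).1
    rw [← rpow_natCast, ← rpow_add hy0, Nat.cast_sub NeZero.one_le, Nat.cast_one,
      sub_eq_add_neg _ (a * p)]
  have hInt : IntervalIntegrable (fun y : ℝ => y ^ (d - 1 - a * p)) volume 1 R :=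
    intervalIntegral.intervalIntegrable_rpow (.inr fun h => by
      rw [Set.uIcc_of_le hR] at h; linarith [h.1])
  refine (setLIntegral_mono (by fun_prop) hbound).trans_eq ?_
  rw [lintegral_const_mul _ (by fun_prop), setLIntegral_norm_mem_Ioc_eq zero_le_one hR
    (f := fun y => y ^ (-(a * p))) (by fun_prop) (fun y hy => by have := hy.1; positivity) ?_,
    intervalIntegral.integral_congr hpow]
  exact hInt.congr fun y hy => (hpow y (Set.uIoc_subset_uIcc hy)).symm

lemma setLIntegral_tail_enorm_rpow_le (hp : 2 ≤ p) (ha : 0 ≤ a) (hB : 0 ≤ B) (hR : 0 < R)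
    (hmeas : AEStronglyMeasurable f) (hf : ∀ x ≠ 0, ‖f x‖ ≤ B * ‖x‖ ^ (-a))
    (hf2 : eLpNorm f 2 ≤ ENNReal.ofReal (B * R ^ (d / 2 - a))) :
    ∫⁻ x in (Metric.closedBall 0 R)ᶜ, ‖f x‖ₑ ^ p ≤
      ENNReal.ofReal (B ^ p) * ENNReal.ofReal (R ^ (d - a * p)) := by
  have hbound : ∀ᵐ x ∂volume.restrict (Metric.closedBall (0 : Rd d) R)ᶜ,
      ‖f x‖ₑ ≤ ENNReal.ofReal (B * R ^ (-a)) := by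
    filter_upwards [ae_restrict_mem measurableSet_closedBall.compl] with x hx
    have hx : R < ‖x‖ := by simpa using hx
    rw [← ofReal_norm]
    refine ENNReal.ofReal_le_ofReal ((hf x (norm_pos_iff.1 (hR.trans hx))).trans ?_)
    exact mul_le_mul_of_nonneg_left (rpow_le_rpow_of_nonpos hR hx.le (neg_nonpos.2 ha)) hB
  have hsq : ∫⁻ x in (Metric.closedBall 0 R)ᶜ, ‖f x‖ₑ ^ (2 : ℝ) ≤
      ENNReal.ofReal (B * R ^ (d / 2 - a)) ^ (2 : ℝ) :=
    (setLIntegral_le_lintegral _ _).trans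
      ((eLpNorm_ofReal_le_iff zero_lt_two).1 (by rwa [ENNReal.ofReal_ofNat]))
  refine (lintegral_enorm_rpow_le zero_le_two hp hmeas.restrict.enorm hbound).trans
    ((mul_le_mul_right hsq _).trans_eq ?_)
  rw [ENNReal.ofReal_rpow_of_nonneg (by positivity) (sub_nonneg.2 hp),
    ENNReal.ofReal_rpow_of_nonneg (by positivity) zero_le_two, ← ENNReal.ofReal_mul (by positivity),
    ← ENNReal.ofReal_mul (by positivity), mul_rpow hB (by positivity), mul_rpow hB (by positivity),
    mul_mul_mul_comm, ← rpow_add_of_nonneg hB (sub_nonneg.2 hp) zero_le_two, ← rpow_mul hR.le,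
    ← rpow_mul hR.le, ← rpow_add hR]
  congr 3 <;> ring

lemma lintegral_enorm_rpow_le_radialMass [NeZero d] (hp : 2 ≤ p) (ha : 0 ≤ a) (hB : 0 ≤ B)
    (hR : 1 ≤ R) (hmeas : AEStronglyMeasurable f) (hfB : ∀ x, ‖f x‖ ≤ B)
    (hf : ∀ x ≠ 0, ‖f x‖ ≤ B * ‖x‖ ^ (-a))
    (hf2 : eLpNorm f 2 ≤ ENNReal.ofReal (B * R ^ (d / 2 - a))) :
    ∫⁻ x, ‖f x‖ₑ ^ p ≤ (1 + (1 + d) * volume (Metric.ball (0 : Rd d) 1)) *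
      ENNReal.ofReal (B ^ p * radialMass (d - 1 - a * p) R) := by
  set v := volume (Metric.ball (0 : Rd d) 1)
  set I := ∫ y in (1 : ℝ)..R, y ^ (d - 1 - a * p)
  have hI : 0 ≤ I := integral_rpow_nonneg _ hR
  have hball := setLIntegral_ball_enorm_rpow_le (zero_le_two.trans hp) hB hfB
  have hshell := setLIntegral_shell_enorm_rpow_le (zero_le_two.trans hp) hB hR hf
  have htail := setLIntegral_tail_enorm_rpow_le hp ha hB (zero_lt_one.trans_le hR) hmeas hf hf2
  have hcover : (Set.univ : Set (Rd d)) ⊆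
      (Metric.closedBall 0 1 ∪ {x | ‖x‖ ∈ Set.Ioc 1 R}) ∪ (Metric.closedBall 0 R)ᶜ := fun x _ => by
    simp only [Set.mem_union, mem_closedBall_zero_iff, Set.mem_ofPred_eq, Set.mem_Ioc,
      Set.mem_compl_iff]
    grind
  calc ∫⁻ x, ‖f x‖ₑ ^ p
      ≤ (∫⁻ x in Metric.closedBall 0 1, ‖f x‖ₑ ^ p) +
          (∫⁻ x in {x | ‖x‖ ∈ Set.Ioc 1 R}, ‖f x‖ₑ ^ p) +
          ∫⁻ x in (Metric.closedBall 0 R)ᶜ, ‖f x‖ₑ ^ p := by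
        rw [← setLIntegral_univ]
        exact (lintegral_mono_set hcover).trans ((lintegral_union_le _ _ _).trans
          (add_le_add_left (lintegral_union_le _ _ _) _))
    _ ≤ ENNReal.ofReal (B ^ p) * v + ENNReal.ofReal (B ^ p) * (d * v * ENNReal.ofReal I) +
          ENNReal.ofReal (B ^ p) * ENNReal.ofReal (R ^ (d - a * p)) := by gcongr
    _ = ENNReal.ofReal (B ^ p) *
          (v * 1 + d * v * ENNReal.ofReal I + 1 * ENNReal.ofReal (R ^ (d - a * p))) := by ring
    _ ≤ ENNReal.ofReal (B ^ p) * ((1 + (1 + d) * v) *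
          (1 + ENNReal.ofReal I + ENNReal.ofReal (R ^ (d - a * p)))) := by
        gcongr
        rw [mul_add, mul_add]
        gcongr ?_ * _ + ?_ * _ + ?_ * _
        · exact le_add_left (le_mul_of_one_le_left' le_self_add)
        · exact le_add_left (mul_le_mul_left le_add_self v)
        · exact le_self_add
    _ = _ := by
        rw [radialMass, ENNReal.ofReal_mul (by positivity), ENNReal.ofReal_add (by positivity)
          (by positivity), ENNReal.ofReal_add zero_le_one hI, ENNReal.ofReal_one]
        ring_nf

end RadialMass

/-! ### The quadratic form of an admissible symbol -/

section Energy

/-- The function `√g û`, whose `L²` norm is the square root of the quadratic form `qeps g u`. -/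
def weightedFT {d : ℕ} {s : ℝ} (g : ℝ → ℝ) (u : HsFn d s) (ξ : Rd d) : ℂ := √(g ‖ξ‖) * u.ft ξ

/-- The frequencies at which an admissible symbol is compared with `ε + |‖ξ‖ - 1| ^ γ`; half-open
in order to match the polar coordinate formulas. -/
def unitAnnulus (d : ℕ) : Set (Rd d) := {ξ | ‖ξ‖ ∈ Set.Ioc (1 / 2) (3 / 2)}

variable {d : ℕ} {s γ c C ε : ℝ} {g : ℝ → ℝ → ℝ}

lemma IsAdmissible.le_mul_one_add_sq_rpow {r : ℝ} (h : IsAdmissible s γ c C g) (hs : 0 ≤ s)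
    (hγ : 0 ≤ γ) (hC : 0 ≤ C) (hε : ε ∈ Set.Ioo 0 1) (hr : 0 ≤ r) :
    g ε r ≤ 2 * C * (1 + r ^ 2) ^ s := by
  have hone : 1 ≤ (1 + r ^ 2) ^ s := one_le_rpow (by nlinarith) hs
  rw [mul_comm 2 C, mul_assoc]
  rcases le_total (1 / 2) |r - 1| with hfar | hnear
  · have hpow : |r| ^ (2 * s) ≤ (1 + r ^ 2) ^ s := by
      rw [abs_of_nonneg hr, rpow_mul hr, rpow_two]
      gcongr
      linarith
    exact (h.2.2.1 ε hε r hfar).2.trans (by gcongr; linarith)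
  · have hpow : |r - 1| ^ γ ≤ 1 := rpow_le_one (abs_nonneg _) (by linarith) hγ
    exact (h.2.2.2 ε hε r hnear).2.trans (by gcongr; linarith [hε.2])

lemma norm_weightedFT_sq {g : ℝ → ℝ} (hg : ∀ r, 0 < g r) (u : HsFn d s) (ξ : Rd d) :
    ‖weightedFT g u ξ‖ ^ 2 = ‖u.ft ξ‖ ^ 2 * g ‖ξ‖ := by
  rw [weightedFT, norm_mul, Complex.norm_real, mul_pow, norm_of_nonneg (sqrt_nonneg _),
    sq_sqrt (hg _).le, mul_comm]

lemma IsAdmissible.memLp_weightedFT (h : IsAdmissible s γ c C g) (hs : 0 ≤ s) (hγ : 0 ≤ γ)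
    (hC : 0 ≤ C) (hε : ε ∈ Set.Ioo 0 1) (u : HsFn d s) : MemLp (weightedFT (g ε) u) 2 := by
  have hmeas : AEStronglyMeasurable (weightedFT (g ε) u) :=
    (Complex.measurable_ofReal.comp
      ((h.1 ε hε).comp measurable_norm).sqrt).aestronglyMeasurable.mul u.ft_memL2.1
  refine (memLp_two_iff_integrable_sq_norm hmeas).2
    ((u.memHs.const_mul (2 * C)).mono (hmeas.norm.pow 2) (ae_of_all _ fun ξ => ?_))
  rw [norm_weightedFT_sq (h.2.1 ε hε), norm_of_nonneg (mul_nonneg (sq_nonneg _) (h.2.1 ε hε _).le),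
    norm_of_nonneg (by positivity), mul_left_comm]
  gcongr
  exact h.le_mul_one_add_sq_rpow hs hγ hC hε (norm_nonneg ξ)

lemma IsAdmissible.eLpNorm_weightedFT (h : IsAdmissible s γ c C g) (hs : 0 ≤ s) (hγ : 0 ≤ γ)
    (hC : 0 ≤ C) (hε : ε ∈ Set.Ioo 0 1) (u : HsFn d s) :
    eLpNorm (weightedFT (g ε) u) 2 = ENNReal.ofReal √(qeps (g ε) u) := by
  rw [(h.memLp_weightedFT hs hγ hC hε u).eLpNorm_eq_integral_rpow_norm two_ne_zero
    ENNReal.ofNat_ne_top, sqrt_eq_rpow, qeps, ENNReal.toReal_ofNat, one_div]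
  simp only [rpow_two, norm_weightedFT_sq (h.2.1 ε hε)]

lemma IsAdmissible.qeps_nonneg (h : IsAdmissible s γ c C g) (hε : ε ∈ Set.Ioo 0 1)
    (u : HsFn d s) : 0 ≤ qeps (g ε) u :=
  integral_nonneg fun _ => mul_nonneg (sq_nonneg _) (h.2.1 ε hε _).le

lemma IsAdmissible.eLpNorm_two_le {f : Rd d → ℂ} {k : ℝ} (h : IsAdmissible s γ c C g) (hs : 0 ≤ s)
    (hγ : 0 ≤ γ) (hC : 0 ≤ C) (hε : ε ∈ Set.Ioo 0 1) (u : HsFn d s) (hk : 0 ≤ k)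
    (hf : ∀ ξ, ‖f ξ‖ ^ 2 ≤ k * (‖u.ft ξ‖ ^ 2 * g ε ‖ξ‖)) :
    eLpNorm f 2 ≤ ENNReal.ofReal √(k * qeps (g ε) u) := by
  rw [sqrt_mul hk, ENNReal.ofReal_mul (sqrt_nonneg k), ← h.eLpNorm_weightedFT hs hγ hC hε u]
  refine eLpNorm_le_mul_eLpNorm_of_ae_le_mul (ae_of_all _ fun ξ => ?_) 2
  refine le_of_sq_le_sq ?_ (by positivity)
  rw [mul_pow, sq_sqrt hk, norm_weightedFT_sq (h.2.1 ε hε)]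
  exact hf ξ

lemma measurableSet_unitAnnulus (d : ℕ) : MeasurableSet (unitAnnulus d) :=
  measurableSet_Ioc.preimage measurable_norm

lemma volume_unitAnnulus_ne_top (d : ℕ) : volume (unitAnnulus d) ≠ ∞ :=
  ((measure_mono fun ξ (hξ : ‖ξ‖ ∈ Set.Ioc (1 / 2 : ℝ) (3 / 2)) =>
    mem_closedBall_zero_iff.2 hξ.2).trans_lt measure_closedBall_lt_top).ne

lemma abs_norm_sub_one_le_of_mem_unitAnnulus {ξ : Rd d} (hξ : ξ ∈ unitAnnulus d) :
    |‖ξ‖ - 1| ≤ 1 / 2 := by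
  obtain ⟨hlow, hup⟩ : 1 / 2 < ‖ξ‖ ∧ ‖ξ‖ ≤ 3 / 2 := hξ
  exact abs_le.2 ⟨by linarith, by linarith⟩

lemma le_abs_norm_sub_one_of_notMem_unitAnnulus {ξ : Rd d} (hξ : ξ ∉ unitAnnulus d) :
    1 / 2 ≤ |‖ξ‖ - 1| := by
  rcases le_or_gt ‖ξ‖ (1 / 2) with hlow | hlow
  · exact le_abs.2 (.inr (by linarith))
  · have hup : 3 / 2 < ‖ξ‖ := not_le.1 fun hup => hξ ⟨hlow, hup⟩
    exact le_abs.2 (.inl (by linarith))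

lemma integrable_indicator_unitAnnulus_ft (u : HsFn d s) :
    Integrable ((unitAnnulus d).indicator u.ft) :=
  integrable_of_support (measurableSet_unitAnnulus d) (volume_unitAnnulus_ne_top d)
    (u.ft_memL2.indicator (measurableSet_unitAnnulus d)) fun _ hξ => Set.indicator_of_notMem hξ _

lemma memLp_two_indicator_unitAnnulus_ft (u : HsFn d s) :
    MemLp ((unitAnnulus d).indicator u.ft) 2 :=
  u.ft_memL2.indicator (measurableSet_unitAnnulus d)

lemma radial_fourierInv_indicator_unitAnnulus_ft (u : HsFn d s) (hu : Radial u.toFun) :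
    Radial (𝓕⁻ ((unitAnnulus d).indicator u.ft)) := by
  refine radial_fourierInv fun R => ?_
  filter_upwards [u.isFT.comp_linearIsometryEquiv_ae_eq u.ft_memL2 hu R] with ξ hξ
  simp only [Set.indicator, unitAnnulus, Set.mem_ofPred_eq, LinearIsometryEquiv.norm_map, hξ]
  congr

lemma IsAdmissible.eLpNorm_two_indicator_unitAnnulus_le (h : IsAdmissible s γ c C g) (hs : 0 ≤ s)
    (hγ : 0 ≤ γ) (hc : 0 < c) (hC : 0 ≤ C) (hε : ε ∈ Set.Ioo 0 1) (u : HsFn d s) :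
    eLpNorm ((unitAnnulus d).indicator u.ft) 2 ≤ ENNReal.ofReal √((c * ε)⁻¹ * qeps (g ε) u) := by
  have hε0 := hε.1
  refine h.eLpNorm_two_le hs hγ hC hε u (by positivity) fun ξ => ?_
  by_cases hξ : ξ ∈ unitAnnulus d
  · have hg : c * ε ≤ g ε ‖ξ‖ :=
      le_trans (by gcongr; exact le_add_of_nonneg_right (by positivity))
        (h.2.2.2 ε hε ‖ξ‖ (abs_norm_sub_one_le_of_mem_unitAnnulus hξ)).1
    rw [Set.indicator_of_mem hξ, mul_left_comm]
    exact le_mul_of_one_le_right (sq_nonneg _) ((one_le_inv_mul₀ (by positivity)).2 hg)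
  · rw [Set.indicator_of_notMem hξ, norm_zero, zero_pow two_ne_zero]
    exact mul_nonneg (by positivity) (mul_nonneg (sq_nonneg _) (h.2.1 ε hε _).le)

lemma one_add_sq_rpow_le {r : ℝ} (hr : 0 ≤ r) (hs : 0 ≤ s) :
    (1 + r ^ 2) ^ s ≤ 2 ^ s * (1 + r ^ (2 * s)) := by
  rcases le_total r 1 with h1 | h1
  · calc (1 + r ^ 2) ^ s ≤ 2 ^ s := by gcongr; nlinarith
      _ ≤ 2 ^ s * (1 + r ^ (2 * s)) :=
        le_mul_of_one_le_right (by positivity) (le_add_of_nonneg_right (by positivity))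
  · calc (1 + r ^ 2) ^ s ≤ (2 * r ^ 2) ^ s := by gcongr; nlinarith
      _ = 2 ^ s * r ^ (2 * s) := by
        rw [mul_rpow zero_le_two (sq_nonneg r), rpow_mul hr, rpow_two]
      _ ≤ 2 ^ s * (1 + r ^ (2 * s)) := by gcongr; linarith

lemma IsAdmissible.sobolevNorm_sub_indicator_unitAnnulus_le (h : IsAdmissible s γ c C g)
    (hs : 0 ≤ s) (hγ : 0 ≤ γ) (hc : 0 < c) (hC : 0 ≤ C) (hε : ε ∈ Set.Ioo 0 1) (u : HsFn d s) :
    sobolevNorm s (u.ft - (unitAnnulus d).indicator u.ft) ≤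
      ENNReal.ofReal √(2 ^ s / c * qeps (g ε) u) := by
  refine h.eLpNorm_two_le hs hγ hC hε u (by positivity) fun ξ => ?_
  by_cases hξ : ξ ∈ unitAnnulus d
  · rw [Pi.sub_apply, Set.indicator_of_mem hξ, sub_self, mul_zero, norm_zero, zero_pow two_ne_zero]
    exact mul_nonneg (by positivity) (mul_nonneg (sq_nonneg _) (h.2.1 ε hε _).le)
  · have hg := (h.2.2.1 ε hε ‖ξ‖ (le_abs_norm_sub_one_of_notMem_unitAnnulus hξ)).1
    rw [abs_norm] at hg
    rw [Pi.sub_apply, Set.indicator_of_notMem hξ, sub_zero, norm_mul, mul_pow, Complex.norm_real,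
      norm_of_nonneg (by positivity), ← rpow_mul_natCast (by positivity), Nat.cast_ofNat,
      div_mul_cancel₀ s two_ne_zero, mul_comm, mul_left_comm]
    gcongr
    calc (1 + ‖ξ‖ ^ 2) ^ s ≤ 2 ^ s * (1 + ‖ξ‖ ^ (2 * s)) := one_add_sq_rpow_le (norm_nonneg ξ) hs
      _ = 2 ^ s / c * (c * (1 + ‖ξ‖ ^ (2 * s))) := by field_simp
      _ ≤ 2 ^ s / c * g ε ‖ξ‖ := by gcongr

lemma IsAdmissible.eLpNorm_indicator_inv_sqrt_le {K : ℝ} (h : IsAdmissible s γ c C g)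
    (hc : 0 < c) (hε : ε ∈ Set.Ioo 0 1) (hK0 : 0 ≤ K)
    (hK : ∫⁻ ξ in unitAnnulus d, ENNReal.ofReal (ε + |‖ξ‖ - 1| ^ γ)⁻¹ ≤ ENNReal.ofReal K) :
    eLpNorm ((unitAnnulus d).indicator fun ξ => (√(g ε ‖ξ‖))⁻¹) 2 ≤ ENNReal.ofReal √(K / c) := by
  have hpt (ξ : Rd d) (hξ : ξ ∈ unitAnnulus d) : ‖(√(g ε ‖ξ‖))⁻¹‖ₑ ^ (2 : ℝ) ≤
      ENNReal.ofReal c⁻¹ * ENNReal.ofReal (ε + |‖ξ‖ - 1| ^ γ)⁻¹ := by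
    have hden : 0 < ε + |‖ξ‖ - 1| ^ γ := add_pos_of_pos_of_nonneg hε.1 (by positivity)
    rw [enorm_of_nonneg (by positivity), ENNReal.ofReal_rpow_of_nonneg (by positivity) zero_le_two,
      rpow_two, inv_pow, sq_sqrt (h.2.1 ε hε _).le, ← ENNReal.ofReal_mul (by positivity),
      ← mul_inv]
    exact ENNReal.ofReal_le_ofReal (inv_anti₀ (by positivity)
      (h.2.2.2 ε hε ‖ξ‖ (abs_norm_sub_one_le_of_mem_unitAnnulus hξ)).1)
  rw [eLpNorm_indicator_eq_eLpNorm_restrict (measurableSet_unitAnnulus d)]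
  suffices ∫⁻ ξ in unitAnnulus d, ‖(√(g ε ‖ξ‖))⁻¹‖ₑ ^ (2 : ℝ) ≤ ENNReal.ofReal √(K / c) ^ (2 : ℝ) by
    simpa only [ENNReal.ofReal_ofNat] using (eLpNorm_ofReal_le_iff two_pos).2 this
  calc ∫⁻ ξ in unitAnnulus d, ‖(√(g ε ‖ξ‖))⁻¹‖ₑ ^ (2 : ℝ)
      ≤ ∫⁻ ξ in unitAnnulus d, ENNReal.ofReal c⁻¹ * ENNReal.ofReal (ε + |‖ξ‖ - 1| ^ γ)⁻¹ :=
        setLIntegral_mono' (measurableSet_unitAnnulus d) hpt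
    _ ≤ ENNReal.ofReal c⁻¹ * ENNReal.ofReal K := by
        rw [lintegral_const_mul' _ _ ENNReal.ofReal_ne_top]
        gcongr
    _ = ENNReal.ofReal √(K / c) ^ (2 : ℝ) := by
        rw [← ENNReal.ofReal_mul (by positivity), ENNReal.rpow_two,
          ← ENNReal.ofReal_pow (sqrt_nonneg _), inv_mul_eq_div,
          sq_sqrt (by positivity)]

lemma exists_eLpNorm_one_indicator_unitAnnulus_le (d : ℕ) [NeZero d] (hs : 0 ≤ s) (hγ : 1 < γ)
    (hc : 0 < c) (hC : 0 ≤ C) : ∃ K, 0 < K ∧ ∀ (g : ℝ → ℝ → ℝ) (ε : ℝ), IsAdmissible s γ c C g →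
      ε ∈ Set.Ioo 0 1 → ∀ u : HsFn d s, eLpNorm ((unitAnnulus d).indicator u.ft) 1 ≤
        ENNReal.ofReal (K * √(qeps (g ε) u * ε ^ (1 / γ - 1))) := by
  obtain ⟨K, hK, hInt⟩ := exists_setLIntegral_inv_add_abs_norm_sub_rpow_le d hγ
    (a := 1 / 2) (b := 3 / 2) (by norm_num)
  refine ⟨√(K / c), by positivity, fun g ε h hε u => ?_⟩
  have hε0 := hε.1
  have hfactor : (unitAnnulus d).indicator u.ft =
      ((unitAnnulus d).indicator fun ξ => (√(g ε ‖ξ‖))⁻¹) • weightedFT (g ε) u := by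
    ext ξ
    by_cases hξ : ξ ∈ unitAnnulus d
    · have hsqrt : (√(g ε ‖ξ‖) : ℂ) ≠ 0 :=
        Complex.ofReal_ne_zero.2 (sqrt_pos.2 (h.2.1 ε hε _)).ne'
      rw [Pi.smul_apply', Set.indicator_of_mem hξ, Set.indicator_of_mem hξ, weightedFT,
        Complex.real_smul, Complex.ofReal_inv, inv_mul_cancel_left₀ hsqrt]
    · rw [Pi.smul_apply', Set.indicator_of_notMem hξ, Set.indicator_of_notMem hξ, zero_smul]
  have hmeas : Measurable ((unitAnnulus d).indicator fun ξ => (√(g ε ‖ξ‖))⁻¹) :=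
    ((h.1 ε hε).comp measurable_norm).sqrt.inv.indicator (measurableSet_unitAnnulus d)
  calc eLpNorm ((unitAnnulus d).indicator u.ft) 1 volume
      ≤ eLpNorm ((unitAnnulus d).indicator fun ξ => (√(g ε ‖ξ‖))⁻¹) 2 volume *
          eLpNorm (weightedFT (g ε) u) 2 volume := by
        rw [hfactor]
        exact eLpNorm_smul_le_mul_eLpNorm (h.memLp_weightedFT hs (by linarith) hC hε u).1
          hmeas.aestronglyMeasurable
    _ ≤ ENNReal.ofReal √(K * ε ^ (1 / γ - 1) / c) * ENNReal.ofReal √(qeps (g ε) u) := by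
        rw [h.eLpNorm_weightedFT hs (by linarith) hC hε u]
        gcongr
        exact h.eLpNorm_indicator_inv_sqrt_le hc hε (by positivity) (hInt ε hε0)
    _ = ENNReal.ofReal (√(K / c) * √(qeps (g ε) u * ε ^ (1 / γ - 1))) := by
        rw [← ENNReal.ofReal_mul (sqrt_nonneg _), ← sqrt_mul (by positivity),
          ← sqrt_mul (by positivity)]
        congr 2
        ring

end Energy

/-! ### Lower bound for the Rayleigh quotients -/

section LowerBound

variable {d : ℕ} {s γ p c C : ℝ}

lemma exists_eLpNorm_le_radialMass (d : ℕ) [NeZero d] (hp : 2 ≤ p) :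
    ∃ K, 0 < K ∧ ∀ (f : Rd d → ℂ) (B R : ℝ), 0 ≤ B → 1 ≤ R → AEStronglyMeasurable f →
      (∀ x, ‖f x‖ ≤ B) → (∀ x ≠ 0, ‖f x‖ ≤ B * ‖x‖ ^ (-decayExponent d)) →
      eLpNorm f 2 ≤ ENNReal.ofReal (B * √R) → eLpNorm f (ENNReal.ofReal p) ≤
        ENNReal.ofReal (K * (B * radialMass (d - 1 - decayExponent d * p) R ^ (1 / p))) := by
  have hp0 : 0 < p := by linarith
  have hKtop : 1 + (1 + d) * volume (Metric.ball (0 : Rd d) 1) ≠ ∞ := by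
    finiteness
  set K := (1 + (1 + d) * volume (Metric.ball (0 : Rd d) 1)).toReal with hK
  have hK0 : 0 < K := ENNReal.toReal_pos (by simp) hKtop
  refine ⟨K ^ (1 / p), by positivity, fun f B R hB hR hmeas hbound hdecay htwo => ?_⟩
  have hmass : 0 < radialMass (d - 1 - decayExponent d * p) R := by
    linarith [one_le_radialMass (d - 1 - decayExponent d * p) hR]
  have hexp : (d : ℝ) / 2 - decayExponent d = 1 / 2 := by unfold decayExponent; ring
  rw [eLpNorm_ofReal_le_iff hp0, ENNReal.ofReal_rpow_of_nonneg (by positivity) hp0.le,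
    mul_rpow (by positivity) (by positivity), mul_rpow hB (by positivity), ← rpow_mul hK0.le,
    ← rpow_mul hmass.le, one_div_mul_cancel hp0.ne', rpow_one, rpow_one,
    ENNReal.ofReal_mul hK0.le, hK, ENNReal.ofReal_toReal hKtop]
  exact lintegral_enorm_rpow_le_radialMass hp (decayExponent_nonneg d) hB hR hmeas hbound hdecay
    (by rwa [hexp, ← sqrt_eq_rpow])

lemma exists_norm_fourierInv_unitAnnulus_le (d : ℕ) [NeZero d] (s : ℝ) :
    ∃ M, 1 ≤ M ∧ ∀ (u : HsFn d s) (Y : ℝ), Radial u.toFun →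
      eLpNorm ((unitAnnulus d).indicator u.ft) 1 ≤ ENNReal.ofReal Y → 0 ≤ Y →
      (∀ x, ‖𝓕⁻ ((unitAnnulus d).indicator u.ft) x‖ ≤ M * Y) ∧
      ∀ x ≠ 0, ‖𝓕⁻ ((unitAnnulus d).indicator u.ft) x‖ ≤ M * Y * ‖x‖ ^ (-decayExponent d) := by
  obtain ⟨M, hM, hdecay⟩ := exists_norm_fourierInv_le_rpow d
  have hpow : 1 ≤ (2 : ℝ) ^ decayExponent d := one_le_rpow one_le_two (decayExponent_nonneg d)
  have hM' : 1 ≤ M * 2 ^ decayExponent d := one_le_mul_of_one_le_of_one_le hM hpow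
  refine ⟨M * 2 ^ decayExponent d, hM', fun u Y hu hY hY0 => ?_⟩
  have hInt := integrable_indicator_unitAnnulus_ft u
  have hone : ∫ ξ, ‖(unitAnnulus d).indicator u.ft ξ‖ ≤ Y := by
    rw [integral_norm_eq_lintegral_enorm hInt.1, ← eLpNorm_one_eq_lintegral_enorm]
    exact ENNReal.toReal_le_of_le_ofReal hY0 hY
  refine ⟨fun x => ?_, fun x hx => ?_⟩
  · exact (norm_fourierInv_le _ x).trans (hone.trans (le_mul_of_one_le_left hY0 hM'))
  · have hsupp (ξ : Rd d) (hξ : ‖ξ‖ < 1 / 2) : (unitAnnulus d).indicator u.ft ξ = 0 :=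
      Set.indicator_of_notMem (fun h => lt_asymm hξ h.1) _
    calc ‖𝓕⁻ ((unitAnnulus d).indicator u.ft) x‖
        ≤ M * (‖x‖ * (1 / 2)) ^ (-decayExponent d) *
            ∫ ξ, ‖(unitAnnulus d).indicator u.ft ξ‖ :=
          hdecay _ hInt (radial_fourierInv_indicator_unitAnnulus_ft u hu) _ one_half_pos hsupp x hx
      _ ≤ M * (‖x‖ * (1 / 2)) ^ (-decayExponent d) * Y := by gcongr
      _ = M * 2 ^ decayExponent d * Y * ‖x‖ ^ (-decayExponent d) := by
          rw [mul_rpow (norm_nonneg x) one_half_pos.le, one_div, inv_rpow zero_le_two,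
            rpow_neg zero_le_two, inv_inv]
          ring

lemma exists_eLpNorm_fourierInv_unitAnnulus_le (d : ℕ) [NeZero d] (hs : 0 ≤ s) (hγ : 1 < γ)
    (hp : 2 ≤ p) (hc : 0 < c) (hC : 0 ≤ C) :
    ∃ K, 0 < K ∧ ∀ (g : ℝ → ℝ → ℝ) (ε : ℝ), IsAdmissible s γ c C g → ε ∈ Set.Ioo 0 1 →
      ∀ u : HsFn d s, Radial u.toFun →
        eLpNorm (𝓕⁻ ((unitAnnulus d).indicator u.ft)) (ENNReal.ofReal p) ≤
          ENNReal.ofReal (K * (√(qeps (g ε) u * ε ^ (1 / γ - 1)) *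
            radialMass (d - 1 - decayExponent d * p) (ε ^ (-(1 / γ))) ^ (1 / p))) := by
  obtain ⟨K₁, hK₁, hone⟩ := exists_eLpNorm_one_indicator_unitAnnulus_le d hs hγ hc hC
  obtain ⟨M, hM, hbounds⟩ := exists_norm_fourierInv_unitAnnulus_le d s
  obtain ⟨K, hK, hmass⟩ := exists_eLpNorm_le_radialMass d hp
  refine ⟨K * (M * K₁ + √c⁻¹), by positivity, fun g ε h hε u hu => ?_⟩
  have hε0 := hε.1
  have hInt := integrable_indicator_unitAnnulus_ft u
  set Y := √(qeps (g ε) u * ε ^ (1 / γ - 1)) with hY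
  obtain ⟨hbound, hdecay⟩ := hbounds u (K₁ * Y) hu (hone g ε h hε u) (by positivity)
  have hB : M * (K₁ * Y) ≤ (M * K₁ + √c⁻¹) * Y := by
    rw [← mul_assoc]
    gcongr
    exact le_add_of_nonneg_right (sqrt_nonneg _)
  have hR : 1 ≤ ε ^ (-(1 / γ)) :=
    one_le_rpow_of_pos_of_le_one_of_nonpos hε0 hε.2.le (neg_nonpos.2 (by positivity))
  have htwo : √((c * ε)⁻¹ * qeps (g ε) u) ≤ (M * K₁ + √c⁻¹) * Y * √(ε ^ (-(1 / γ))) := by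
    have hscale : ε⁻¹ = ε ^ (1 / γ - 1) * ε ^ (-(1 / γ)) := by
      rw [← rpow_add hε0, ← rpow_neg_one]; congr 1; ring
    have hq := h.qeps_nonneg hε u
    calc √((c * ε)⁻¹ * qeps (g ε) u) = √c⁻¹ * Y * √(ε ^ (-(1 / γ))) := by
          rw [hY, ← sqrt_mul (by positivity), ← sqrt_mul (by positivity), mul_inv, hscale]
          congr 1; ring
      _ ≤ (M * K₁ + √c⁻¹) * Y * √(ε ^ (-(1 / γ))) := by
          gcongr; exact le_add_of_nonneg_left (by positivity)
  have hL2 := memLp_two_indicator_unitAnnulus_ft u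
  rw [mul_assoc K, ← mul_assoc _ Y]
  refine hmass _ _ _ (by positivity) hR (continuous_fourierInv hInt).aestronglyMeasurable
    (fun x => (hbound x).trans hB) (fun x hx => (hdecay x hx).trans (by gcongr)) ?_
  rw [(isFT_fourierInv hInt).eLpNorm_two_eq hL2 (memLp_two_fourierInv hInt hL2)]
  exact (h.eLpNorm_two_indicator_unitAnnulus_le hs (by linarith) hc hC hε u).trans
    (ENNReal.ofReal_le_ofReal htwo)

lemma exists_eLpNorm_sub_fourierInv_unitAnnulus_le (d : ℕ) (hs : 0 < s) (hγ : 0 ≤ γ) (hp : 2 ≤ p)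
    (hsub : d * (1 / 2 - 1 / p) < s) (hc : 0 < c) (hC : 0 ≤ C) :
    ∃ K, 0 < K ∧ ∀ (g : ℝ → ℝ → ℝ) (ε : ℝ), IsAdmissible s γ c C g → ε ∈ Set.Ioo 0 1 →
      ∀ u : HsFn d s, eLpNorm (u.toFun - 𝓕⁻ ((unitAnnulus d).indicator u.ft)) (ENNReal.ofReal p) ≤
        ENNReal.ofReal (K * √(qeps (g ε) u)) := by
  obtain ⟨K, hK, hsob⟩ := exists_eLpNorm_le_mul_sobolevNorm d hs hp hsub
  refine ⟨K * √(2 ^ s / c), by positivity, fun g ε h hε u => ?_⟩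
  have hInt := integrable_indicator_unitAnnulus_ft u
  have hL2 := memLp_two_indicator_unitAnnulus_ft u
  have hinv := memLp_two_fourierInv hInt hL2
  rw [mul_assoc, ENNReal.ofReal_mul hK.le, ← sqrt_mul (by positivity)]
  exact (hsob _ _ (u.ft_memL2.sub hL2) (u.memL2.sub hinv)
    (u.isFT.sub u.ft_memL2 u.memL2 hL2 hinv (isFT_fourierInv hInt))).trans
    (mul_le_mul_right (h.sobolevNorm_sub_indicator_unitAnnulus_le hs.le hγ hc hC hε u) _)

lemma exists_LpN_le (d : ℕ) [NeZero d] (hs : 0 < s) (hγ : 1 < γ) (hp : 2 ≤ p)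
    (hsub : d * (1 / 2 - 1 / p) < s) (hc : 0 < c) (hC : 0 ≤ C) :
    ∃ K, 0 < K ∧ ∀ (g : ℝ → ℝ → ℝ) (ε : ℝ), IsAdmissible s γ c C g → ε ∈ Set.Ioo 0 1 →
      ∀ u : HsFn d s, Radial u.toFun → LpN p u.toFun ≤ K * (√(qeps (g ε) u * ε ^ (1 / γ - 1)) *
        radialMass (d - 1 - decayExponent d * p) (ε ^ (-(1 / γ))) ^ (1 / p)) := by
  obtain ⟨K₁, hK₁, hnear⟩ := exists_eLpNorm_fourierInv_unitAnnulus_le d hs.le hγ hp hc hC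
  obtain ⟨K₂, hK₂, haway⟩ :=
    exists_eLpNorm_sub_fourierInv_unitAnnulus_le d hs (by linarith : 0 ≤ γ) hp hsub hc hC
  refine ⟨K₁ + K₂, by positivity, fun g ε h hε u hu => ?_⟩
  have hε0 := hε.1
  have hmeas := (continuous_fourierInv (integrable_indicator_unitAnnulus_ft u)).aestronglyMeasurable
    (μ := volume)
  have hW : 1 ≤ radialMass (d - 1 - decayExponent d * p) (ε ^ (-(1 / γ))) := one_le_radialMass _
    (one_le_rpow_of_pos_of_le_one_of_nonpos hε0 hε.2.le (neg_nonpos.2 (by positivity)))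
  set W := radialMass (d - 1 - decayExponent d * p) (ε ^ (-(1 / γ)))
  set Q := qeps (g ε) u
  have hQ : √Q ≤ √(Q * ε ^ (1 / γ - 1)) * W ^ (1 / p) := by
    have hγ1 : 1 / γ ≤ 1 := (div_le_one (by linarith)).2 hγ.le
    calc √Q ≤ √(Q * ε ^ (1 / γ - 1)) := sqrt_le_sqrt (le_mul_of_one_le_right (h.qeps_nonneg hε u)
          (one_le_rpow_of_pos_of_le_one_of_nonpos hε0 hε.2.le (by linarith)))
      _ ≤ √(Q * ε ^ (1 / γ - 1)) * W ^ (1 / p) :=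
          le_mul_of_one_le_right (sqrt_nonneg _) (one_le_rpow hW (by positivity))
  refine ENNReal.toReal_le_of_le_ofReal (by positivity) ?_
  calc eLpNorm u.toFun (ENNReal.ofReal p) volume
      = eLpNorm (𝓕⁻ ((unitAnnulus d).indicator u.ft) +
          (u.toFun - 𝓕⁻ ((unitAnnulus d).indicator u.ft))) (ENNReal.ofReal p) volume := by
        rw [add_sub_cancel]
    _ ≤ ENNReal.ofReal (K₁ * (√(Q * ε ^ (1 / γ - 1)) * W ^ (1 / p))) +
          ENNReal.ofReal (K₂ * √Q) :=
        (eLpNorm_add_le hmeas (u.memL2.1.sub hmeas) (ENNReal.one_le_ofReal.2 (by linarith))).trans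
          (add_le_add (hnear g ε h hε u hu) (haway g ε h hε u))
    _ ≤ ENNReal.ofReal ((K₁ + K₂) * (√(Q * ε ^ (1 / γ - 1)) * W ^ (1 / p))) := by
        rw [add_mul, ENNReal.ofReal_add (by positivity) (by positivity)]
        gcongr

lemma LpN_pos {f : Rd d → ℂ} (hp : 0 < p) (hf : MemLp f (ENNReal.ofReal p))
    (hne : ¬ f =ᵐ[volume] fun _ => 0) : 0 < LpN p f :=
  ENNReal.toReal_pos
    (fun h0 => hne ((eLpNorm_eq_zero_iff hf.1 (by simpa using hp)).1 h0)) hf.eLpNorm_ne_top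

theorem exists_one_le_mul_of_mem_rayleighSet (d : ℕ) [NeZero d] (hs : 0 < s) (hγ : 1 < γ)
    (hp : 2 ≤ p) (hsub : d * (1 / 2 - 1 / p) < s) (hc : 0 < c) (hC : 0 ≤ C) :
    ∃ K, 0 < K ∧ ∀ (g : ℝ → ℝ → ℝ) (ε : ℝ), IsAdmissible s γ c C g → ε ∈ Set.Ioo 0 1 →
      ∀ t ∈ RayleighSet d s p (g ε) Radial, 1 ≤ K * t * (ε ^ (1 / γ - 1) *
        radialMass (d - 1 - decayExponent d * p) (ε ^ (-(1 / γ))) ^ (2 / p)) := by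
  obtain ⟨K, hK, hle⟩ := exists_LpN_le d hs hγ hp hsub hc hC
  refine ⟨K ^ 2, by positivity, ?_⟩
  rintro g ε h hε _ ⟨u, hu, hne, hmem, rfl⟩
  have hε0 := hε.1
  have hQ := h.qeps_nonneg hε u
  have hpos := LpN_pos (by linarith) hmem hne
  have hW : 1 ≤ radialMass (d - 1 - decayExponent d * p) (ε ^ (-(1 / γ))) := one_le_radialMass _
    (one_le_rpow_of_pos_of_le_one_of_nonpos hε0 hε.2.le (neg_nonpos.2 (by positivity)))
  set W := radialMass (d - 1 - decayExponent d * p) (ε ^ (-(1 / γ)))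
  have hsq : LpN p u.toFun ^ 2 ≤ K ^ 2 * qeps (g ε) u * (ε ^ (1 / γ - 1) * W ^ (2 / p)) :=
    calc LpN p u.toFun ^ 2 ≤ (K * (√(qeps (g ε) u * ε ^ (1 / γ - 1)) * W ^ (1 / p))) ^ 2 :=
          pow_le_pow_left₀ hpos.le (hle g ε h hε u hu) 2
      _ = K ^ 2 * qeps (g ε) u * (ε ^ (1 / γ - 1) * W ^ (2 / p)) := by
          rw [mul_pow, mul_pow, sq_sqrt (by positivity), ← rpow_mul_natCast (by linarith),
            Nat.cast_ofNat, one_div_mul_eq_div]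
          ring
  rwa [mul_div_assoc', div_mul_eq_mul_div, one_le_div (by positivity)]

end LowerBound

/-! ### Lower bounds for the `Lᵖ` norm of a radial function -/

section RadialHolder

lemma lintegral_enorm_sq_mul_le {α E : Type*} {_ : MeasurableSpace α} {μ : Measure α}
    [NormedAddCommGroup E] {p : ℝ} (hp : 2 < p) {f : α → E} (hf : AEStronglyMeasurable f μ)
    {w : α → ℝ≥0∞} (hw : AEMeasurable w μ) :
    ∫⁻ x, ‖f x‖ₑ ^ (2 : ℝ) * w x ∂μ ≤
      eLpNorm f (ENNReal.ofReal p) μ ^ (2 : ℝ) * (∫⁻ x, w x ^ (p / (p - 2)) ∂μ) ^ (1 - 2 / p) := by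
  have hp0 : 0 < p := by linarith
  have hp2 : p - 2 ≠ 0 := by linarith
  have hconj : (p / 2).HolderConjugate (p / (p - 2)) :=
    Real.holderConjugate_iff.2 ⟨by linarith, by field_simp; ring⟩
  refine (ENNReal.lintegral_mul_le_Lp_mul_Lq μ hconj (hf.enorm.pow_const 2) hw).trans_eq ?_
  have hpow (x : α) : (‖f x‖ₑ ^ (2 : ℝ)) ^ (p / 2) = ‖f x‖ₑ ^ p := by
    rw [← ENNReal.rpow_mul, mul_div_cancel₀ p two_ne_zero]
  simp only [hpow]
  rw [← eLpNorm_ofReal_rpow hp0, ← ENNReal.rpow_mul]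
  congr 2 <;> field_simp

variable {d : ℕ} [NeZero d] {a p R : ℝ} {h : ℝ → ℝ} {f : Rd d → ℂ}

lemma intervalIntegrable_pow_mul_rpow (hR : 1 ≤ R) (hh : Continuous h) (n : ℕ) (b : ℝ) :
    IntervalIntegrable (fun y => y ^ n * (h y ^ 2 * y ^ b)) volume 1 R := by
  refine ContinuousOn.intervalIntegrable fun y hy => ContinuousAt.continuousWithinAt ?_
  have hy0 : y ≠ 0 := (zero_lt_one.trans_le (Set.uIcc_of_le hR ▸ hy).1).ne'
  have := continuousAt_rpow_const y b (.inl hy0)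
  fun_prop

lemma setLIntegral_sq_mul_rpow_eq (hR : 1 ≤ R) (hh : Continuous h) (b : ℝ) :
    ∫⁻ x in {x : Rd d | ‖x‖ ∈ Set.Ioc 1 R}, ENNReal.ofReal (h ‖x‖ ^ 2 * ‖x‖ ^ b) =
      ENNReal.ofReal (d * volume.real (Metric.ball (0 : Rd d) 1) *
        ∫ y in (1 : ℝ)..R, y ^ (d - 1) * (h y ^ 2 * y ^ b)) := by
  rw [setLIntegral_norm_mem_Ioc_eq zero_le_one hR (f := fun y => h y ^ 2 * y ^ b) (by fun_prop)
      (fun y hy => mul_nonneg (sq_nonneg _) (rpow_nonneg (zero_le_one.trans hy.1.le) _))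
      (intervalIntegrable_pow_mul_rpow hR hh _ _), ENNReal.ofReal_mul (by positivity),
    ENNReal.ofReal_mul (Nat.cast_nonneg d), ENNReal.ofReal_natCast,
    ofReal_measureReal measure_ball_lt_top.ne]

/-- Hölder's inequality with the weight `‖x‖ ^ (-a * (p - 2))`, for which equality holds when
`|f x|` is a multiple of `‖x‖ ^ (-a)`. -/
lemma integral_sq_mul_rpow_le_LpN_sq (a : ℝ) (hp : 2 < p) (hR : 1 ≤ R) (hh : Continuous h)
    (hfh : ∀ x, f x = (h ‖x‖ : ℂ)) (hf : MemLp f (ENNReal.ofReal p)) :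
    d * volume.real (Metric.ball (0 : Rd d) 1) *
        ∫ y in (1 : ℝ)..R, y ^ (d - 1) * (h y ^ 2 * y ^ (-(a * (p - 2)))) ≤
      LpN p f ^ 2 * (d * volume.real (Metric.ball (0 : Rd d) 1) *
        ∫ y in (1 : ℝ)..R, y ^ (d - 1) * y ^ (-(a * p))) ^ (1 - 2 / p) := by
  set S : Set (Rd d) := {x | ‖x‖ ∈ Set.Ioc 1 R}
  have hp2 : 0 < p - 2 := by linarith
  have hexp : 0 ≤ 1 - 2 / p := sub_nonneg.2 ((div_le_one (by linarith)).2 hp.le)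
  have hI : 0 ≤ ∫ y in (1 : ℝ)..R, y ^ (d - 1) * y ^ (-(a * p)) :=
    intervalIntegral.integral_nonneg hR fun y hy => by
      have : 0 ≤ y := zero_le_one.trans hy.1
      positivity
  have hleft (x : Rd d) : ENNReal.ofReal (h ‖x‖ ^ 2 * ‖x‖ ^ (-(a * (p - 2)))) =
      ‖f x‖ₑ ^ (2 : ℝ) * ENNReal.ofReal (‖x‖ ^ (-(a * (p - 2)))) := by
    rw [hfh, ← ofReal_norm, Complex.norm_real, ENNReal.ofReal_rpow_of_nonneg (norm_nonneg _)
      zero_le_two, rpow_two, norm_eq_abs, sq_abs, ENNReal.ofReal_mul (sq_nonneg _)]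
  have hright (x : Rd d) : ENNReal.ofReal (‖x‖ ^ (-(a * (p - 2)))) ^ (p / (p - 2)) =
      ENNReal.ofReal (‖x‖ ^ (-(a * p))) := by
    rw [ENNReal.ofReal_rpow_of_nonneg (by positivity) (by positivity), ← rpow_mul (norm_nonneg x)]
    congr 2
    field_simp
  have hweight := setLIntegral_sq_mul_rpow_eq (d := d) hR (continuous_const (y := (1 : ℝ)))
    (-(a * p))
  simp only [one_pow, one_mul] at hweight
  refine (ENNReal.ofReal_le_ofReal_iff (by positivity)).1 ?_
  calc ENNReal.ofReal (d * volume.real (Metric.ball (0 : Rd d) 1) *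
        ∫ y in (1 : ℝ)..R, y ^ (d - 1) * (h y ^ 2 * y ^ (-(a * (p - 2)))))
      = ∫⁻ x in S, ‖f x‖ₑ ^ (2 : ℝ) * ENNReal.ofReal (‖x‖ ^ (-(a * (p - 2)))) := by
        simp only [← setLIntegral_sq_mul_rpow_eq hR hh, hleft, S]
    _ ≤ eLpNorm f (ENNReal.ofReal p) (volume.restrict S) ^ (2 : ℝ) *
          (∫⁻ x in S, ENNReal.ofReal (‖x‖ ^ (-(a * (p - 2)))) ^ (p / (p - 2))) ^ (1 - 2 / p) :=
        lintegral_enorm_sq_mul_le hp hf.1.restrict (by fun_prop)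
    _ ≤ eLpNorm f (ENNReal.ofReal p) volume ^ (2 : ℝ) *
          (∫⁻ x in S, ENNReal.ofReal (‖x‖ ^ (-(a * p)))) ^ (1 - 2 / p) := by
        simp only [hright]
        gcongr
        exact Measure.restrict_le_self
    _ = _ := by
        rw [hweight, ENNReal.ofReal_rpow_of_nonneg (by positivity) hexp,
          ENNReal.ofReal_mul (sq_nonneg _), LpN, ENNReal.ofReal_pow ENNReal.toReal_nonneg,
          ENNReal.ofReal_toReal hf.2.ne, ENNReal.rpow_two]

end RadialHolder

/-! ### The test function -/

section Shell

/-- The shell of width `2 * δ` around the unit sphere. -/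
def shell (d : ℕ) (δ : ℝ) : Set (Rd d) := {ξ | ‖ξ‖ ∈ Set.Ioc (1 - δ) (1 + δ)}

/-- The indicator function of the shell, which is the Fourier transform of the test function. -/
def shellFT (d : ℕ) (δ : ℝ) : Rd d → ℂ := (shell d δ).indicator fun _ => 1

/-- The radial profile of the inverse Fourier transform of `shellFT d δ`. -/
def shellProfile (d : ℕ) [NeZero d] (δ ρ : ℝ) : ℝ :=
  d * volume.real (Metric.ball (0 : Rd d) 1) *
    ∫ y in (1 - δ)..(1 + δ), y ^ (d - 1) * sphereFT d (ρ * y)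

variable (d : ℕ) (δ : ℝ)

lemma measurableSet_shell : MeasurableSet (shell d δ) := measurableSet_Ioc.preimage measurable_norm

lemma shell_subset_closedBall : shell d δ ⊆ Metric.closedBall 0 (1 + δ) := fun ξ hξ =>
  mem_closedBall_zero_iff.2 (show ‖ξ‖ ∈ Set.Ioc (1 - δ) (1 + δ) from hξ).2

lemma volume_shell_ne_top : volume (shell d δ) ≠ ∞ :=
  ((measure_mono (shell_subset_closedBall d δ)).trans_lt measure_closedBall_lt_top).ne

lemma memLp_shellFT (p : ℝ≥0∞) : MemLp (shellFT d δ) p :=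
  memLp_indicator_const p (measurableSet_shell d δ) 1 (.inr (volume_shell_ne_top d δ))

lemma integrable_shellFT : Integrable (shellFT d δ) :=
  memLp_one_iff_integrable.1 (memLp_shellFT d δ 1)

lemma norm_shellFT_sq_mul (f : Rd d → ℝ) :
    (fun ξ => ‖shellFT d δ ξ‖ ^ 2 * f ξ) = (shell d δ).indicator f := by
  ext ξ
  by_cases hξ : ξ ∈ shell d δ <;> simp [shellFT, hξ]

lemma radial_fourierInv_shellFT : Radial (𝓕⁻ (shellFT d δ)) :=
  radial_fourierInv fun R => ae_of_all _ fun ξ => by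
    simp only [shellFT, shell, Set.indicator, Set.mem_ofPred_eq, LinearIsometryEquiv.norm_map]
    congr

/-- The inverse Fourier transform of the indicator function of the shell, as an element of `Hˢ`. -/
def shellFn (s : ℝ) : HsFn d s where
  toFun := 𝓕⁻ (shellFT d δ)
  ft := shellFT d δ
  memL2 := memLp_two_fourierInv (integrable_shellFT d δ) (memLp_shellFT d δ 2)
  ft_memL2 := memLp_shellFT d δ 2
  isFT := isFT_fourierInv (integrable_shellFT d δ)
  memHs := by
    have hcont : Continuous fun ξ : Rd d => (1 + ‖ξ‖ ^ 2) ^ s :=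
      Continuous.rpow_const (by fun_prop) fun ξ => .inl (by positivity)
    rw [norm_shellFT_sq_mul, integrable_indicator_iff (measurableSet_shell d δ)]
    exact (hcont.locallyIntegrable.integrableOn_isCompact
      (isCompact_closedBall 0 (1 + δ))).mono_set (shell_subset_closedBall d δ)

variable {d δ}

lemma memLp_fourierInv_shellFT {p : ℝ} (hp : 2 ≤ p) :
    MemLp (𝓕⁻ (shellFT d δ)) (ENNReal.ofReal p) := by
  refine ⟨(continuous_fourierInv (integrable_shellFT d δ)).aestronglyMeasurable,
    (eLpNorm_fourierInv_le hp (integrable_shellFT d δ) (memLp_shellFT d δ 2)).trans_lt ?_⟩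
  have hexp : 0 ≤ 1 - 2 / p := sub_nonneg.2 ((div_le_one (by linarith)).2 hp)
  exact ENNReal.mul_lt_top (ENNReal.rpow_lt_top_of_nonneg hexp (memLp_shellFT d δ 1).2.ne)
    (ENNReal.rpow_lt_top_of_nonneg (by positivity) (memLp_shellFT d δ 2).2.ne)

variable [NeZero d]

lemma continuous_shellProfile : Continuous (shellProfile d δ) := by
  have := continuous_sphereFT (d := d)
  refine continuous_const.mul
    (intervalIntegral.continuous_parametric_intervalIntegral_of_continuous' ?_ _ _)
  unfold Function.uncurry
  fun_prop

lemma setIntegral_shell_fun_norm_eq {f : ℝ → ℝ} (h0 : 0 ≤ δ) (h1 : δ ≤ 1) :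
    ∫ ξ in shell d δ, f ‖ξ‖ = d * volume.real (Metric.ball (0 : Rd d) 1) *
      ∫ y in (1 - δ)..(1 + δ), y ^ (d - 1) * f y := by
  have hsub : Set.Ioc (1 - δ) (1 + δ) ⊆ Set.Ioi 0 := fun y hy => (sub_nonneg.2 h1).trans_lt hy.1
  have hind (y : ℝ) : y ^ (d - 1) * (Set.Ioc (1 - δ) (1 + δ)).indicator f y =
      (Set.Ioc (1 - δ) (1 + δ)).indicator (fun y => y ^ (d - 1) * f y) y :=
    (Set.indicator_mul_right _ (fun y => y ^ (d - 1)) f).symm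
  rw [← integral_indicator (measurableSet_shell d δ), intervalIntegral.integral_of_le (by linarith)]
  refine (integral_fun_norm_addHaar volume ((Set.Ioc (1 - δ) (1 + δ)).indicator f)).trans ?_
  simp only [finrank_euclideanSpace_fin, smul_eq_mul, nsmul_eq_mul, hind]
  rw [integral_indicator measurableSet_Ioc, Measure.restrict_restrict measurableSet_Ioc,
    Set.inter_eq_left.2 hsub, mul_assoc]

lemma fourierInv_shellFT (h0 : 0 ≤ δ) (h1 : δ ≤ 1) (x : Rd d) :
    𝓕⁻ (shellFT d δ) x = shellProfile d δ ‖x‖ := by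
  have hind (ξ : Rd d) : (sphereFT d (‖x‖ * ‖ξ‖) : ℂ) * shellFT d δ ξ =
      (shell d δ).indicator (fun ξ => (sphereFT d (‖x‖ * ‖ξ‖) : ℂ)) ξ := by
    by_cases hξ : ξ ∈ shell d δ <;> simp [shellFT, hξ]
  rw [fourierInv_eq_integral_sphereFT (integrable_shellFT d δ) (radial_fourierInv_shellFT d δ),
    shellProfile, ← setIntegral_shell_fun_norm_eq (f := fun y => sphereFT d (‖x‖ * y)) h0 h1,
    ← integral_complex_ofReal]
  simp only [hind]
  exact integral_indicator (measurableSet_shell d δ)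

lemma volume_real_shell_le (h0 : 0 ≤ δ) (h1 : δ ≤ 1) :
    volume.real (shell d δ) ≤ d * volume.real (Metric.ball (0 : Rd d) 1) * 2 ^ d * δ := by
  have hInt : ∫ y in (1 - δ)..(1 + δ), y ^ (d - 1) * (1 : ℝ) ≤
      ∫ _ in (1 - δ)..(1 + δ), (2 : ℝ) ^ (d - 1) :=
    intervalIntegral.integral_mono_on (by linarith)
      (Continuous.intervalIntegrable (by fun_prop) _ _) intervalIntegrable_const fun y hy => by
        have : 0 ≤ y := (sub_nonneg.2 h1).trans hy.1
        rw [mul_one]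
        gcongr
        linarith [hy.2]
  calc volume.real (shell d δ) = ∫ ξ in shell d δ, 1 := by simp
    _ = d * volume.real (Metric.ball (0 : Rd d) 1) *
          ∫ y in (1 - δ)..(1 + δ), y ^ (d - 1) * (1 : ℝ) :=
        setIntegral_shell_fun_norm_eq (f := fun _ => 1) h0 h1
    _ ≤ d * volume.real (Metric.ball (0 : Rd d) 1) * ∫ _ in (1 - δ)..(1 + δ), 2 ^ (d - 1) := by
        gcongr
    _ = d * volume.real (Metric.ball (0 : Rd d) 1) * 2 ^ d * δ := by
        rw [intervalIntegral.integral_const, smul_eq_mul, ← mul_pow_sub_one (NeZero.ne d)]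
        ring

lemma IsAdmissible.qeps_shellFn_le {s γ c C ε : ℝ} {g : ℝ → ℝ → ℝ} (h : IsAdmissible s γ c C g)
    (hγ : 0 ≤ γ) (hC : 0 ≤ C) (hε : ε ∈ Set.Ioo 0 1) (h0 : 0 ≤ δ) (h1 : δ ≤ 1 / 2)
    (hδε : δ ^ γ ≤ ε) :
    qeps (g ε) (shellFn d δ s) ≤
      2 * C * (d * volume.real (Metric.ball (0 : Rd d) 1) * 2 ^ d) * ε * δ := by
  have hg : ∀ ξ ∈ shell d δ, ‖g ε ‖ξ‖‖ ≤ 2 * C * ε := fun ξ hξ => by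
    have hξ : ‖ξ‖ ∈ Set.Ioc (1 - δ) (1 + δ) := hξ
    have hnear : |‖ξ‖ - 1| ≤ δ := abs_le.2 ⟨by linarith [hξ.1], by linarith [hξ.2]⟩
    have hpow : |‖ξ‖ - 1| ^ γ ≤ ε := (rpow_le_rpow (abs_nonneg _) hnear hγ).trans hδε
    rw [norm_of_nonneg (h.2.1 ε hε _).le, mul_comm 2 C, mul_assoc, two_mul]
    exact (h.2.2.2 ε hε _ (hnear.trans h1)).2.trans (by gcongr)
  calc qeps (g ε) (shellFn d δ s) = ∫ ξ in shell d δ, g ε ‖ξ‖ := by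
        rw [← integral_indicator (measurableSet_shell d δ), ← norm_shellFT_sq_mul]
        rfl
    _ ≤ 2 * C * ε * volume.real (shell d δ) :=
        (le_norm_self _).trans
          (norm_setIntegral_le_of_norm_le_const (volume_shell_ne_top d δ).lt_top hg)
    _ ≤ 2 * C * ε * (d * volume.real (Metric.ball (0 : Rd d) 1) * 2 ^ d * δ) := by
        have := hε.1
        gcongr
        exact volume_real_shell_le h0 (by linarith)
    _ = _ := by ring

lemma mul_le_shellProfile {ρ : ℝ} (h0 : 0 ≤ δ) (h1 : δ ≤ 1 / 2) (hρ : |ρ| ≤ 1 / (8 * π)) :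
    d * volume.real (Metric.ball (0 : Rd d) 1) * ((1 / 2) ^ (d - 1) * (7 / 8) * 2) * δ ≤
      shellProfile d δ ρ := by
  have := continuous_sphereFT (d := d)
  have hle : ∫ _ in (1 - δ)..(1 + δ), (1 / 2 : ℝ) ^ (d - 1) * (7 / 8) ≤
      ∫ y in (1 - δ)..(1 + δ), y ^ (d - 1) * sphereFT d (ρ * y) := by
    refine intervalIntegral.integral_mono_on (by linarith) intervalIntegrable_const
      (Continuous.intervalIntegrable (by fun_prop) _ _) fun y hy => ?_
    have hy2 : 1 / 2 ≤ y := by linarith [hy.1]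
    have hρy : |ρ * y| ≤ 1 / (4 * π) := by
      calc |ρ * y| = |ρ| * y := by rw [abs_mul, abs_of_nonneg (a := y) (by linarith)]
        _ ≤ 1 / (8 * π) * 2 := by gcongr; linarith [hy.2]
        _ = 1 / (4 * π) := by ring
    gcongr
    exact sphereFT_ge hρy
  rw [shellProfile, mul_assoc]
  gcongr
  refine le_trans (le_of_eq ?_) hle
  rw [intervalIntegral.integral_const, smul_eq_mul]
  ring

lemma rpow_decayExponent_sq {y : ℝ} (hy : 0 ≤ y) : (y ^ decayExponent d) ^ 2 = y ^ (d - 1) := by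
  rw [← rpow_mul_natCast hy, decayExponent, ← rpow_natCast, Nat.cast_sub NeZero.one_le]
  push_cast
  congr 1
  ring

lemma rpow_mul_shellProfile {ρ : ℝ} (h0 : 0 ≤ δ) (h1 : δ ≤ 1) (hρ : 0 ≤ ρ) :
    ρ ^ decayExponent d * shellProfile d δ ρ = d * volume.real (Metric.ball (0 : Rd d) 1) *
      ∫ y in (1 - δ)..(1 + δ), y ^ decayExponent d * sphereAmplitude d (ρ * y) := by
  rw [shellProfile, mul_left_comm, ← intervalIntegral.integral_const_mul]
  congr 1
  refine intervalIntegral.integral_congr fun y hy => ?_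
  have hy0 : 0 ≤ y := (sub_nonneg.2 h1).trans (Set.uIcc_of_le (by linarith : 1 - δ ≤ 1 + δ) ▸ hy).1
  simp only [sphereAmplitude]
  rw [mul_rpow hρ hy0, ← rpow_decayExponent_sq hy0]
  ring

lemma continuous_rpow_decayExponent : Continuous fun y : ℝ => y ^ decayExponent d :=
  continuous_rpow_const (decayExponent_nonneg d)

lemma continuous_sphereAmplitude : Continuous (sphereAmplitude d) :=
  continuous_rpow_decayExponent.mul continuous_sphereFT

lemma mul_le_integral_rpow_decayExponent (h0 : 0 ≤ δ) (h1 : δ ≤ 1 / 2) :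
    (1 / 2) ^ decayExponent d * (2 * δ) ≤ ∫ y in (1 - δ)..(1 + δ), y ^ decayExponent d := by
  have ha := decayExponent_nonneg d
  calc (1 / 2) ^ decayExponent d * (2 * δ)
      = ∫ _ in (1 - δ)..(1 + δ), (1 / 2 : ℝ) ^ decayExponent d := by
        rw [intervalIntegral.integral_const, smul_eq_mul]
        ring
    _ ≤ ∫ y in (1 - δ)..(1 + δ), y ^ decayExponent d := by
        refine intervalIntegral.integral_mono_on (by linarith) intervalIntegrable_const
          (continuous_rpow_decayExponent.intervalIntegrable _ _) fun y hy => ?_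
        gcongr
        linarith [hy.1]

lemma abs_integral_rpow_mul_sphereAmplitude_sub_le {M ρ : ℝ} (hM : 0 ≤ M)
    (hlip : ∀ x y, 1 / 10 ≤ x → 1 / 10 ≤ y →
      |sphereAmplitude d x - sphereAmplitude d y| ≤ M * |x - y|)
    (h0 : 0 ≤ δ) (h1 : δ ≤ 1 / 2) (hρ : 1 ≤ ρ) :
    |(∫ y in (1 - δ)..(1 + δ), y ^ decayExponent d * sphereAmplitude d (ρ * y)) -
        (∫ y in (1 - δ)..(1 + δ), y ^ decayExponent d) * sphereAmplitude d ρ| ≤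
      (∫ y in (1 - δ)..(1 + δ), y ^ decayExponent d) * (M * (ρ * δ)) := by
  have hρ0 : 0 ≤ ρ := zero_le_one.trans hρ
  have hrpow := continuous_rpow_decayExponent (d := d)
  have hamp := continuous_sphereAmplitude (d := d)
  rw [← intervalIntegral.integral_mul_const, ← intervalIntegral.integral_sub
    (Continuous.intervalIntegrable (by fun_prop) _ _)
    (Continuous.intervalIntegrable (by fun_prop) _ _),
    ← intervalIntegral.integral_mul_const, ← norm_eq_abs]
  refine intervalIntegral.norm_integral_le_of_norm_le (by linarith) (ae_of_all _ fun y hy => ?_)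
    (Continuous.intervalIntegrable (by fun_prop) _ _)
  have hy2 : 1 / 2 ≤ y := by linarith [hy.1]
  have hy0 : 0 ≤ y := by linarith
  have hyδ : |y - 1| ≤ δ := abs_le.2 ⟨by linarith [hy.1], by linarith [hy.2]⟩
  rw [← mul_sub, norm_mul, norm_of_nonneg (rpow_nonneg hy0 _), norm_eq_abs]
  gcongr
  calc |sphereAmplitude d (ρ * y) - sphereAmplitude d ρ| ≤ M * |ρ * y - ρ| :=
        hlip _ _ (by nlinarith) (by linarith)
    _ = M * (ρ * |y - 1|) := by rw [← mul_sub_one, abs_mul, abs_of_nonneg hρ0]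
    _ ≤ M * (ρ * δ) := by gcongr

lemma sq_div_two_sub_sq_le_sq {x y z : ℝ} (h : |x - y| ≤ z) : y ^ 2 / 2 - z ^ 2 ≤ x ^ 2 := by
  have : (x - y) ^ 2 ≤ z ^ 2 := sq_le_sq' (neg_le_of_abs_le h) (le_of_abs_le h)
  nlinarith [sq_nonneg (2 * x - y)]

lemma mul_sphereAmplitude_sq_sub_le {M ρ κ : ℝ} (hM : 0 ≤ M)
    (hlip : ∀ x y, 1 / 10 ≤ x → 1 / 10 ≤ y →
      |sphereAmplitude d x - sphereAmplitude d y| ≤ M * |x - y|)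
    (h0 : 0 ≤ δ) (h1 : δ ≤ 1 / 2) (hρ : 1 ≤ ρ) (hκ : ρ * δ ≤ κ) :
    (d * volume.real (Metric.ball (0 : Rd d) 1) *
        ∫ y in (1 - δ)..(1 + δ), y ^ decayExponent d) ^ 2 *
      (sphereAmplitude d ρ ^ 2 / 2 - (M * κ) ^ 2) ≤ ρ ^ (d - 1) * shellProfile d δ ρ ^ 2 := by
  set v := d * volume.real (Metric.ball (0 : Rd d) 1)
  set m := ∫ y in (1 - δ)..(1 + δ), y ^ decayExponent d
  set X := ∫ y in (1 - δ)..(1 + δ), y ^ decayExponent d * sphereAmplitude d (ρ * y)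
  have hm : 0 ≤ m := le_trans (by positivity) (mul_le_integral_rpow_decayExponent h0 h1)
  have hX : |X - m * sphereAmplitude d ρ| ≤ m * (M * κ) :=
    (abs_integral_rpow_mul_sphereAmplitude_sub_le hM hlip h0 h1 hρ).trans (by gcongr)
  have hρ0 : 0 ≤ ρ := zero_le_one.trans hρ
  calc (v * m) ^ 2 * (sphereAmplitude d ρ ^ 2 / 2 - (M * κ) ^ 2)
      = v ^ 2 * ((m * sphereAmplitude d ρ) ^ 2 / 2 - (m * (M * κ)) ^ 2) := by ring
    _ ≤ v ^ 2 * X ^ 2 := by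
        gcongr
        exact sq_div_two_sub_sq_le_sq hX
    _ = ρ ^ (d - 1) * shellProfile d δ ρ ^ 2 := by
        rw [← rpow_decayExponent_sq hρ0, ← mul_pow, ← mul_pow,
          rpow_mul_shellProfile h0 (by linarith) hρ0]

lemma mul_sub_le_integral_shellProfile_sq {M R κ b : ℝ} (hM : 0 ≤ M)
    (hlip : ∀ x y, 1 / 10 ≤ x → 1 / 10 ≤ y →
      |sphereAmplitude d x - sphereAmplitude d y| ≤ M * |x - y|)
    (h0 : 0 ≤ δ) (h1 : δ ≤ 1 / 2) (hR : 1 ≤ R) (hκ : R * δ ≤ κ) :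
    (d * volume.real (Metric.ball (0 : Rd d) 1) *
        ∫ y in (1 - δ)..(1 + δ), y ^ decayExponent d) ^ 2 *
      ((∫ y in (1 : ℝ)..R, y ^ (-b) * sphereAmplitude d y ^ 2) / 2 -
        (M * κ) ^ 2 * ∫ y in (1 : ℝ)..R, y ^ (-b)) ≤
      ∫ y in (1 : ℝ)..R, y ^ (d - 1) * (shellProfile d δ y ^ 2 * y ^ (-b)) := by
  have hamp := continuous_sphereAmplitude (d := d)
  have hpow : IntervalIntegrable (fun y : ℝ => y ^ (-b)) volume 1 R :=
    intervalIntegral.intervalIntegrable_rpow (Or.inr fun h =>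
      zero_lt_one.not_ge (Set.uIcc_of_le hR ▸ h).1)
  have hpowAmp : IntervalIntegrable (fun y : ℝ => y ^ (-b) * sphereAmplitude d y ^ 2) volume 1 R :=
    hpow.mul_continuousOn (by fun_prop)
  set D := (d * volume.real (Metric.ball (0 : Rd d) 1) *
    ∫ y in (1 - δ)..(1 + δ), y ^ decayExponent d) ^ 2
  rw [← intervalIntegral.integral_div, ← intervalIntegral.integral_const_mul ((M * κ) ^ 2),
    ← intervalIntegral.integral_sub (hpowAmp.div_const 2) (hpow.const_mul _),
    ← intervalIntegral.integral_const_mul D]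
  refine intervalIntegral.integral_mono_on hR
    (((hpowAmp.div_const 2).sub (hpow.const_mul _)).const_mul _)
    (intervalIntegrable_pow_mul_rpow hR continuous_shellProfile (d - 1) _) fun y hy => ?_
  have hyκ : y * δ ≤ κ := le_trans (by gcongr; exact hy.2) hκ
  have hyb : 0 ≤ y ^ (-b) := rpow_nonneg (zero_le_one.trans hy.1) _
  linarith [mul_le_mul_of_nonneg_right
    (mul_sphereAmplitude_sq_sub_le hM hlip h0 h1 hy.1 hyκ) hyb]

lemma volume_real_ball_pos (d : ℕ) : 0 < volume.real (Metric.ball (0 : Rd d) 1) :=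
  ENNReal.toReal_pos (Metric.measure_ball_pos _ _ one_pos).ne' measure_ball_lt_top.ne

lemma exists_mul_integral_rpow_le_integral_shellProfile_sq (d : ℕ) [NeZero d] :
    ∃ k κ L : ℝ, 0 < k ∧ 0 < κ ∧ 0 < L ∧ ∀ δ R b : ℝ, 0 ≤ δ → δ ≤ 1 / 2 → 1 ≤ R → R * δ ≤ κ →
      0 ≤ b → L ≤ (∫ y in (1 : ℝ)..R, y ^ (-b)) →
        k * δ ^ 2 * (∫ y in (1 : ℝ)..R, y ^ (-b)) ≤
          ∫ y in (1 : ℝ)..R, y ^ (d - 1) * (shellProfile d δ y ^ 2 * y ^ (-b)) := by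
  obtain ⟨N, hN, -, hlip⟩ := exists_abs_sphereAmplitude_le d
  obtain ⟨m, M, hm, hM, hosc⟩ := exists_le_integral_sphereAmplitude_sq d
  have hd : (0 : ℝ) < d := Nat.cast_pos.2 (NeZero.pos d)
  have hball := volume_real_ball_pos d
  refine ⟨(d * volume.real (Metric.ball (0 : Rd d) 1) * ((1 / 2) ^ decayExponent d * 2)) ^ 2 *
    (m / 8), √(m / 4) / N, 4 * M / m, by positivity, by positivity, by positivity,
    fun δ R b hδ hδ2 hR hRδ hb hL => ?_⟩
  have hshell := mul_sub_le_integral_shellProfile_sq (b := b) hN.le hlip hδ hδ2 hR hRδ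
  rw [mul_div_cancel₀ _ hN.ne', sq_sqrt (by positivity)] at hshell
  set v := d * volume.real (Metric.ball (0 : Rd d) 1)
  set I := ∫ y in (1 : ℝ)..R, y ^ (-b)
  have hI : 0 ≤ I := integral_rpow_nonneg _ hR
  have hMI : 4 * M ≤ m * I := by rwa [div_le_iff₀' hm] at hL
  calc (v * ((1 / 2) ^ decayExponent d * 2)) ^ 2 * (m / 8) * δ ^ 2 * I
      = (v * ((1 / 2) ^ decayExponent d * (2 * δ))) ^ 2 * (m / 8 * I) := by ring
    _ ≤ (v * ∫ y in (1 - δ)..(1 + δ), y ^ decayExponent d) ^ 2 * (m / 8 * I) := by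
        gcongr
        exact mul_le_integral_rpow_decayExponent hδ hδ2
    _ ≤ (v * ∫ y in (1 - δ)..(1 + δ), y ^ decayExponent d) ^ 2 *
          ((∫ y in (1 : ℝ)..R, y ^ (-b) * sphereAmplitude d y ^ 2) / 2 - m / 4 * I) := by
        gcongr
        linarith [hosc b R hb hR]
    _ ≤ _ := hshell

end Shell

section TestFunctionNorm

variable {d : ℕ} {p : ℝ}

lemma mul_rpow_volume_le_LpN {f : Rd d → ℂ} {S : Set (Rd d)} {b : ℝ} (hp : 0 < p)
    (hf : MemLp f (ENNReal.ofReal p)) (hS : MeasurableSet S) (hb : 0 ≤ b)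
    (hbf : ∀ x ∈ S, b ≤ ‖f x‖) : b * volume.real S ^ (1 / p) ≤ LpN p f := by
  have hle : eLpNorm (S.indicator fun _ => b) (ENNReal.ofReal p) volume ≤
      eLpNorm f (ENNReal.ofReal p) volume := by
    refine eLpNorm_mono fun x => ?_
    by_cases hx : x ∈ S
    · simpa [hx, abs_of_nonneg hb] using hbf x hx
    · simp [hx]
  rw [eLpNorm_indicator_const hS (by simpa using hp) ENNReal.ofReal_ne_top,
    ENNReal.toReal_ofReal hp.le] at hle
  simpa [LpN, measureReal_def, abs_of_nonneg hb, ENNReal.toReal_rpow] using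
    ENNReal.toReal_mono hf.2.ne hle

lemma exists_mul_sq_le_LpN_fourierInv_shellFT_sq (d : ℕ) [NeZero d] (hp : 2 ≤ p) :
    ∃ k, 0 < k ∧ ∀ δ, 0 ≤ δ → δ ≤ 1 / 2 → k * δ ^ 2 ≤ LpN p (𝓕⁻ (shellFT d δ)) ^ 2 := by
  have hd : (0 : ℝ) < d := Nat.cast_pos.2 (NeZero.pos d)
  have hball := volume_real_ball_pos d
  set B := Metric.closedBall (0 : Rd d) (1 / (8 * π))
  have hB : 0 < volume.real B := ENNReal.toReal_pos
    (Metric.measure_closedBall_pos _ _ (by positivity)).ne' measure_closedBall_lt_top.ne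
  set m := d * volume.real (Metric.ball (0 : Rd d) 1) * ((1 / 2) ^ (d - 1) * (7 / 8) * 2)
  refine ⟨(m * volume.real B ^ (1 / p)) ^ 2, by positivity, fun δ h0 h1 => ?_⟩
  calc (m * volume.real B ^ (1 / p)) ^ 2 * δ ^ 2
      = (m * δ * volume.real B ^ (1 / p)) ^ 2 := by ring
    _ ≤ LpN p (𝓕⁻ (shellFT d δ)) ^ 2 := by
        gcongr
        refine mul_rpow_volume_le_LpN (by linarith) (memLp_fourierInv_shellFT hp)
          measurableSet_closedBall (by positivity) fun x hx => ?_
        rw [fourierInv_shellFT h0 (by linarith), Complex.norm_real]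
        exact (mul_le_shellProfile h0 h1 (by simpa [B] using hx)).trans (le_abs_self _)

lemma integral_pow_mul_rpow_neg (d : ℕ) [NeZero d] (b : ℝ) {R : ℝ} (hR : 1 ≤ R) :
    ∫ y in (1 : ℝ)..R, y ^ (d - 1) * y ^ (-b) = ∫ y in (1 : ℝ)..R, y ^ (d - 1 - b) :=
  intervalIntegral.integral_congr fun y hy => by
    have hy0 : 0 < y := zero_lt_one.trans_le (Set.uIcc_of_le hR ▸ hy).1
    rw [← rpow_natCast, ← rpow_add hy0, Nat.cast_sub NeZero.one_le, Nat.cast_one, ← sub_eq_add_neg]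

lemma exists_mul_integral_rpow_le_LpN_fourierInv_shellFT_sq (d : ℕ) [NeZero d] (hp : 2 < p) :
    ∃ k κ L : ℝ, 0 < k ∧ 0 < κ ∧ 0 < L ∧ ∀ δ R : ℝ, 0 ≤ δ → δ ≤ 1 / 2 → 1 ≤ R → R * δ ≤ κ →
      L ≤ (∫ y in (1 : ℝ)..R, y ^ (d - 1 - decayExponent d * p)) →
        k * δ ^ 2 * (∫ y in (1 : ℝ)..R, y ^ (d - 1 - decayExponent d * p)) ^ (2 / p) ≤
          LpN p (𝓕⁻ (shellFT d δ)) ^ 2 := by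
  obtain ⟨k, κ, L, hk, hκ, hL, hprofile⟩ :=
    exists_mul_integral_rpow_le_integral_shellProfile_sq d
  have hd : (0 : ℝ) < d := Nat.cast_pos.2 (NeZero.pos d)
  have hball := volume_real_ball_pos d
  set v := d * volume.real (Metric.ball (0 : Rd d) 1)
  set a := decayExponent d with ha
  have ha0 : 0 ≤ a := decayExponent_nonneg d
  have hexp : -(a * (p - 2)) = d - 1 - a * p := by rw [ha, decayExponent]; ring
  refine ⟨k * v ^ (2 / p), κ, L, by positivity, hκ, hL, fun δ R h0 h1 hR hRδ hLI => ?_⟩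
  have hprof := hprofile δ R (a * (p - 2)) h0 h1 hR hRδ (mul_nonneg ha0 (by linarith))
    (by rwa [hexp])
  have hholder := integral_sq_mul_rpow_le_LpN_sq a hp hR continuous_shellProfile
    (fourierInv_shellFT (d := d) h0 (by linarith)) (memLp_fourierInv_shellFT hp.le)
  rw [hexp] at hprof hholder
  rw [integral_pow_mul_rpow_neg d _ hR] at hholder
  set I := ∫ y in (1 : ℝ)..R, y ^ (d - 1 - a * p)
  have hI : 0 < I := hL.trans_le hLI
  have hsplit : (v * I) ^ (2 / p) * (v * I) ^ (1 - 2 / p) = v * I := by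
    rw [← rpow_add (by positivity), add_sub_cancel, rpow_one]
  refine le_of_mul_le_mul_right ?_ (show 0 < (v * I) ^ (1 - 2 / p) by positivity)
  calc k * v ^ (2 / p) * δ ^ 2 * I ^ (2 / p) * (v * I) ^ (1 - 2 / p)
      = k * δ ^ 2 * ((v * I) ^ (2 / p) * (v * I) ^ (1 - 2 / p)) := by
        rw [mul_rpow (z := 2 / p) (by positivity) hI.le]
        ring
    _ = v * (k * δ ^ 2 * I) := by rw [hsplit]; ring
    _ ≤ LpN p (𝓕⁻ (shellFT d δ)) ^ 2 * (v * I) ^ (1 - 2 / p) :=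
        (mul_le_mul_of_nonneg_left hprof (by positivity)).trans hholder

lemma rpow_add_one_eq_one_add_mul_integral {R : ℝ} (β : ℝ) (hR : 1 ≤ R) :
    R ^ (β + 1) = 1 + (β + 1) * ∫ y in (1 : ℝ)..R, y ^ β := by
  rcases eq_or_ne β (-1) with rfl | hβ
  · simp
  · have hβ1 : β + 1 ≠ 0 := fun h => hβ (by linarith)
    rw [integral_rpow (.inr ⟨hβ, fun h => zero_lt_one.not_ge (Set.uIcc_of_le hR ▸ h).1⟩),
      one_rpow, mul_div_cancel₀ _ hβ1, add_sub_cancel]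

lemma radialMass_le_mul_one_add_integral {R : ℝ} (β : ℝ) (hR : 1 ≤ R) :
    radialMass β R ≤ (2 + |β + 1|) * (1 + ∫ y in (1 : ℝ)..R, y ^ β) := by
  have hI := integral_rpow_nonneg β hR
  rw [radialMass, rpow_add_one_eq_one_add_mul_integral β hR]
  nlinarith [mul_le_mul_of_nonneg_right (le_abs_self (β + 1)) hI, abs_nonneg (β + 1)]

lemma exists_mul_radialMass_le_LpN_fourierInv_shellFT_sq (d : ℕ) [NeZero d] (hp : 2 < p) :
    ∃ k κ : ℝ, 0 < k ∧ 0 < κ ∧ ∀ δ R : ℝ, 0 ≤ δ → δ ≤ 1 / 2 → 1 ≤ R → R * δ ≤ κ →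
      k * δ ^ 2 * radialMass (d - 1 - decayExponent d * p) R ^ (2 / p) ≤
        LpN p (𝓕⁻ (shellFT d δ)) ^ 2 := by
  obtain ⟨k₁, hk₁, hsmall⟩ := exists_mul_sq_le_LpN_fourierInv_shellFT_sq d hp.le
  obtain ⟨k₂, κ, L, hk₂, hκ, hL, hlarge⟩ :=
    exists_mul_integral_rpow_le_LpN_fourierInv_shellFT_sq d hp
  set β := d - 1 - decayExponent d * p
  set A₁ := ((2 + |β + 1|) * (1 + L)) ^ (2 / p)
  set A₂ := ((2 + |β + 1|) * (L⁻¹ + 1)) ^ (2 / p)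
  have hA₁ : 0 < A₁ := by positivity
  have hA₂ : 0 < A₂ := by positivity
  refine ⟨min (k₁ / A₁) (k₂ / A₂), κ, by positivity, hκ, fun δ R h0 h1 hR hRδ => ?_⟩
  have hmass := radialMass_le_mul_one_add_integral β hR
  have hmass0 : 0 ≤ radialMass β R := zero_le_one.trans (one_le_radialMass β hR)
  have hI := integral_rpow_nonneg β hR
  specialize hlarge δ R h0 h1 hR hRδ
  set I := ∫ y in (1 : ℝ)..R, y ^ β
  rcases lt_or_ge I L with hIL | hLI
  · calc min (k₁ / A₁) (k₂ / A₂) * δ ^ 2 * radialMass β R ^ (2 / p)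
        ≤ k₁ / A₁ * δ ^ 2 * A₁ := by
          gcongr
          · exact min_le_left _ _
          · exact rpow_le_rpow hmass0 (hmass.trans (by gcongr)) (by positivity)
      _ = k₁ * δ ^ 2 := by field_simp
      _ ≤ _ := hsmall δ h0 h1
  · have hone : 1 ≤ L⁻¹ * I := (one_le_inv_mul₀ hL).2 hLI
    have hmassI : radialMass β R ≤ (2 + |β + 1|) * (L⁻¹ + 1) * I := by
      rw [mul_assoc]
      exact hmass.trans (by gcongr; linarith)
    calc min (k₁ / A₁) (k₂ / A₂) * δ ^ 2 * radialMass β R ^ (2 / p)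
        ≤ k₂ / A₂ * δ ^ 2 * (A₂ * I ^ (2 / p)) := by
          rw [← mul_rpow (by positivity) hI]
          gcongr
          exact min_le_right _ _
      _ = k₂ * δ ^ 2 * I ^ (2 / p) := by field_simp
      _ ≤ _ := hlarge hLI

end TestFunctionNorm

/-! ### Two-sided bounds for the infimum of the Rayleigh quotients -/

section Rate

variable {d : ℕ} {s γ p c C : ℝ}

/-- The order of magnitude of the radial Rayleigh infimum: the value obtained from a shell of width
`ε ^ (1 / γ)` around the unit sphere, whose inverse Fourier transform decays like
`‖x‖ ^ (-decayExponent d)` up to the radius `ε ^ (-(1 / γ))`. -/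
def rayleighRate (d : ℕ) (γ p ε : ℝ) : ℝ :=
  ε ^ (1 - 1 / γ) * radialMass (d - 1 - decayExponent d * p) (ε ^ (-(1 / γ))) ^ (-(2 / p))

lemma one_le_rpow_neg_one_div {ε : ℝ} (hγ : 0 ≤ γ) (hε : ε ∈ Set.Ioo (0 : ℝ) 1) :
    1 ≤ ε ^ (-(1 / γ)) :=
  one_le_rpow_of_pos_of_le_one_of_nonpos hε.1 hε.2.le (neg_nonpos.2 (by positivity))

lemma radialMass_rpow_pos {ε : ℝ} (β : ℝ) (hγ : 0 ≤ γ) (hε : ε ∈ Set.Ioo (0 : ℝ) 1) :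
    0 < radialMass β (ε ^ (-(1 / γ))) :=
  zero_lt_one.trans_le (one_le_radialMass β (one_le_rpow_neg_one_div hγ hε))

lemma rayleighRate_pos {ε : ℝ} (d : ℕ) (p : ℝ) (hγ : 0 ≤ γ) (hε : ε ∈ Set.Ioo (0 : ℝ) 1) :
    0 < rayleighRate d γ p ε :=
  mul_pos (rpow_pos_of_pos hε.1 _) (rpow_pos_of_pos (radialMass_rpow_pos _ hγ hε) _)

lemma LpN_fourierInv_shellFT_pos [NeZero d] {δ : ℝ} (hp : 2 ≤ p) (h0 : 0 < δ) (h1 : δ ≤ 1 / 2) :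
    0 < LpN p (𝓕⁻ (shellFT d δ)) := by
  obtain ⟨k, hk, hle⟩ := exists_mul_sq_le_LpN_fourierInv_shellFT_sq d hp
  have hsq : 0 < LpN p (𝓕⁻ (shellFT d δ)) ^ 2 := lt_of_lt_of_le (by positivity) (hle δ h0.le h1)
  exact lt_of_le_of_ne ENNReal.toReal_nonneg ((pow_ne_zero_iff two_ne_zero).1 hsq.ne').symm

lemma mem_rayleighSet_shellFn [NeZero d] {δ : ℝ} (g : ℝ → ℝ) (hp : 2 ≤ p) (h0 : 0 < δ)
    (h1 : δ ≤ 1 / 2) :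
    qeps g (shellFn d δ s) / LpN p (𝓕⁻ (shellFT d δ)) ^ 2 ∈ RayleighSet d s p g Radial := by
  refine ⟨shellFn d δ s, radial_fourierInv_shellFT d δ, fun hzero => ?_,
    memLp_fourierInv_shellFT hp, rfl⟩
  have hLpN : eLpNorm (𝓕⁻ (shellFT d δ)) (ENNReal.ofReal p) = 0 :=
    (eLpNorm_congr_ae hzero).trans eLpNorm_zero'
  exact (LpN_fourierInv_shellFT_pos (d := d) hp h0 h1).ne' (by rw [LpN, hLpN, ENNReal.toReal_zero])

lemma exists_mul_rayleighRate_le_rayleigh (d : ℕ) [NeZero d] (hs : 0 < s) (hγ : 1 < γ)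
    (hp : 2 ≤ p) (hsub : d * (1 / 2 - 1 / p) < s) (hc : 0 < c) (hC : 0 ≤ C) :
    ∃ k, 0 < k ∧ ∀ g ε, IsAdmissible s γ c C g → ε ∈ Set.Ioo (0 : ℝ) 1 →
      k * rayleighRate d γ p ε ≤ Rayleigh d s p (g ε) Radial := by
  obtain ⟨K, hK, hbound⟩ := exists_one_le_mul_of_mem_rayleighSet d hs hγ hp hsub hc hC
  refine ⟨K⁻¹, by positivity, fun g ε hg hε => le_csInf
    ⟨_, mem_rayleighSet_shellFn (g ε) hp one_half_pos le_rfl⟩ fun t ht => ?_⟩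
  have hmass := radialMass_rpow_pos (d - 1 - decayExponent d * p) (by linarith : 0 ≤ γ) hε
  have hrate : rayleighRate d γ p ε = (ε ^ (1 / γ - 1) *
      radialMass (d - 1 - decayExponent d * p) (ε ^ (-(1 / γ))) ^ (2 / p))⁻¹ := by
    rw [rayleighRate, mul_inv, ← rpow_neg hε.1.le, ← rpow_neg hmass.le, neg_sub]
  have hprod : 0 < ε ^ (1 / γ - 1) *
      radialMass (d - 1 - decayExponent d * p) (ε ^ (-(1 / γ))) ^ (2 / p) :=
    mul_pos (rpow_pos_of_pos hε.1 _) (rpow_pos_of_pos hmass _)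
  rw [hrate, ← mul_inv, inv_le_iff_one_le_mul₀ (by positivity)]
  calc 1 ≤ _ := hbound g ε hg hε t ht
    _ = _ := by ring

lemma exists_rayleigh_le_mul_rayleighRate (d : ℕ) [NeZero d] (s c : ℝ) (hγ : 1 < γ) (hp : 2 < p)
    (hC : 0 < C) :
    ∃ K, 0 < K ∧ ∀ g ε, IsAdmissible s γ c C g → ε ∈ Set.Ioo (0 : ℝ) 1 →
      Rayleigh d s p (g ε) Radial ≤ K * rayleighRate d γ p ε := by
  obtain ⟨k, κ, hk, hκ, hnorm⟩ := exists_mul_radialMass_le_LpN_fourierInv_shellFT_sq d hp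
  have hd : (0 : ℝ) < d := Nat.cast_pos.2 (NeZero.pos d)
  have hball := volume_real_ball_pos d
  set A := 2 * C * (d * volume.real (Metric.ball (0 : Rd d) 1) * 2 ^ d)
  set τ := min (1 / 2) κ
  have hτ : 0 < τ := lt_min one_half_pos hκ
  have hτ2 : τ ≤ 1 / 2 := min_le_left _ _
  have hγ0 : 0 < γ := by linarith
  refine ⟨A / (k * τ), by positivity, fun g ε hg hε => ?_⟩
  have hε0 : 0 < ε := hε.1
  set δ := τ * ε ^ (1 / γ)
  have hδ0 : 0 < δ := by positivity
  have hδ : δ ≤ 1 / 2 :=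
    (mul_le_of_le_one_right hτ.le (rpow_le_one hε0.le hε.2.le (by positivity))).trans hτ2
  have hδε : δ ^ γ ≤ ε := by
    rw [mul_rpow hτ.le (by positivity), ← rpow_mul hε0.le, one_div_mul_cancel hγ0.ne', rpow_one]
    exact mul_le_of_le_one_left hε0.le (rpow_le_one hτ.le (by linarith) hγ0.le)
  have hRδ : ε ^ (-(1 / γ)) * δ ≤ κ := by
    rw [mul_left_comm, ← rpow_add hε0, neg_add_cancel, rpow_zero, mul_one]
    exact min_le_right _ _
  have hmass := radialMass_rpow_pos (d - 1 - decayExponent d * p) hγ0.le hε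
  have hLpN := hnorm δ _ hδ0.le hδ (one_le_rpow_neg_one_div hγ0.le hε) hRδ
  rw [rayleighRate]
  set m := radialMass (d - 1 - decayExponent d * p) (ε ^ (-(1 / γ)))
  calc Rayleigh d s p (g ε) Radial
      ≤ qeps (g ε) (shellFn d δ s) / LpN p (𝓕⁻ (shellFT d δ)) ^ 2 :=
        csInf_le ⟨0, fun _ ⟨u, _, _, _, ht⟩ => ht ▸ div_nonneg (hg.qeps_nonneg hε u) (sq_nonneg _)⟩
          (mem_rayleighSet_shellFn (g ε) hp.le hδ0 hδ)
    _ ≤ A * ε * δ / (k * δ ^ 2 * m ^ (2 / p)) := by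
        gcongr
        exact hg.qeps_shellFn_le hγ0.le hC.le hε hδ0.le hδ hδε
    _ = A / (k * τ) * (ε ^ (1 - 1 / γ) * m ^ (-(2 / p))) := by
        rw [rpow_neg hmass.le, rpow_sub hε0, rpow_one]
        simp only [δ]
        field_simp

lemma exists_rayleigh_bounds (d : ℕ) [NeZero d] (hs : 0 < s) (hγ : 1 < γ) (hp : 2 < p)
    (hsub : d * (1 / 2 - 1 / p) < s) (hc : 0 < c) (hC : 0 < C) {ε₀ : ℝ} (hε₀ : ε₀ < 1)
    {F : ℝ → ℝ} (hF : ∃ m M, 0 < m ∧ 0 < M ∧ ∀ ε ∈ Set.Ioo (0 : ℝ) ε₀,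
      m * F ε ≤ rayleighRate d γ p ε ∧ rayleighRate d γ p ε ≤ M * F ε) :
    ∃ c' C', 0 < c' ∧ c' ≤ C' ∧ ∀ g, IsAdmissible s γ c C g → ∀ ε ∈ Set.Ioo (0 : ℝ) ε₀,
      c' * F ε ≤ Rayleigh d s p (g ε) Radial ∧ Rayleigh d s p (g ε) Radial ≤ C' * F ε := by
  obtain ⟨k, hk, hlower⟩ := exists_mul_rayleighRate_le_rayleigh d hs hγ hp.le hsub hc hC.le
  obtain ⟨K, hK, hupper⟩ := exists_rayleigh_le_mul_rayleighRate d s c hγ hp hC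
  obtain ⟨m, M, hm, hM, hF⟩ := hF
  refine ⟨k * m, max (k * m) (K * M), by positivity, le_max_left _ _, fun g hg ε hε => ?_⟩
  have hε1 : ε ∈ Set.Ioo (0 : ℝ) 1 := ⟨hε.1, hε.2.trans hε₀⟩
  obtain ⟨hFl, hFu⟩ := hF ε hε
  have hF0 : 0 < F ε := pos_of_mul_pos_right
    ((rayleighRate_pos d p (by linarith) hε1).trans_le hFu) hM.le
  constructor
  · calc k * m * F ε = k * (m * F ε) := mul_assoc _ _ _
      _ ≤ k * rayleighRate d γ p ε := by gcongr
      _ ≤ _ := hlower g ε hg hε1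
  · calc Rayleigh d s p (g ε) Radial ≤ K * rayleighRate d γ p ε := hupper g ε hg hε1
      _ ≤ K * (M * F ε) := by gcongr
      _ = K * M * F ε := (mul_assoc _ _ _).symm
      _ ≤ max (k * m) (K * M) * F ε := by gcongr; exact le_max_right _ _

end Rate

/-! ### The explicit rates -/

section ExplicitRate

variable {d : ℕ} {γ p : ℝ}

lemma rpow_max_le_radialMass {R : ℝ} (β : ℝ) (hR : 1 ≤ R) :
    R ^ max (β + 1) 0 ≤ radialMass β R := by
  rcases max_cases (β + 1) 0 with ⟨hmax, -⟩ | ⟨hmax, -⟩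
  · rw [hmax, radialMass]
    linarith [integral_rpow_nonneg β hR]
  · rw [hmax, rpow_zero]
    exact one_le_radialMass β hR

lemma radialMass_le_mul_rpow_max {β R : ℝ} (hβ : β ≠ -1) (hR : 1 ≤ R) :
    radialMass β R ≤ (2 + 1 / |β + 1|) * R ^ max (β + 1) 0 := by
  have hβ1 : β + 1 ≠ 0 := fun h => hβ (by linarith)
  have hone : 1 ≤ R ^ max (β + 1) 0 := one_le_rpow hR (le_max_right _ _)
  have hpow : R ^ (β + 1) ≤ R ^ max (β + 1) 0 := rpow_le_rpow_of_exponent_le hR (le_max_left _ _)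
  have hpow0 : 0 ≤ R ^ (β + 1) := rpow_nonneg (by linarith) _
  have hI : ∫ y in (1 : ℝ)..R, y ^ β ≤ 1 / |β + 1| * R ^ max (β + 1) 0 := by
    have heq := rpow_add_one_eq_one_add_mul_integral β hR
    rw [one_div, le_inv_mul_iff₀ (abs_pos.2 hβ1), ← abs_of_nonneg (integral_rpow_nonneg β hR),
      ← abs_mul, ← sub_eq_of_eq_add' heq]
    exact abs_sub_le_of_nonneg_of_le hpow0 hpow zero_le_one hone
  rw [radialMass]
  linarith

lemma radialMass_neg_one {R : ℝ} (hR : 1 ≤ R) : radialMass (-1) R = 2 + log R := by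
  simp only [radialMass, rpow_neg_one, neg_add_cancel, rpow_zero]
  rw [integral_inv fun h => zero_lt_one.not_ge (Set.uIcc_of_le hR ▸ h).1, div_one]
  ring

lemma mul_rayleighRate_bounds {ε m M G : ℝ} (hγ : 0 ≤ γ) (hp : 0 ≤ p)
    (hε : ε ∈ Set.Ioo (0 : ℝ) 1) (hm : 0 < m) (hM : 0 ≤ M) (hG : 0 < G)
    (hmG : m * G ≤ radialMass (d - 1 - decayExponent d * p) (ε ^ (-(1 / γ))))
    (hMG : radialMass (d - 1 - decayExponent d * p) (ε ^ (-(1 / γ))) ≤ M * G) :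
    M ^ (-(2 / p)) * (ε ^ (1 - 1 / γ) * G ^ (-(2 / p))) ≤ rayleighRate d γ p ε ∧
      rayleighRate d γ p ε ≤ m ^ (-(2 / p)) * (ε ^ (1 - 1 / γ) * G ^ (-(2 / p))) := by
  have hexp : -(2 / p) ≤ 0 := neg_nonpos.2 (by positivity)
  have hε0 : 0 ≤ ε := hε.1.le
  have hmass := radialMass_rpow_pos (d - 1 - decayExponent d * p) hγ hε
  simp only [rayleighRate, mul_left_comm (_ ^ (-(2 / p))), ← mul_rpow hM hG.le,
    ← mul_rpow hm.le hG.le]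
  exact ⟨mul_le_mul_of_nonneg_left (rpow_le_rpow_of_nonpos hmass hMG hexp) (by positivity),
    mul_le_mul_of_nonneg_left (rpow_le_rpow_of_nonpos (by positivity) hmG hexp) (by positivity)⟩

lemma exists_rayleighRate_bounds_of_ne (hγ : 0 < γ) (hp : 0 < p) (hpd : p * (d - 1) ≠ 2 * d) :
    ∃ m M, 0 < m ∧ 0 < M ∧ ∀ ε ∈ Set.Ioo (0 : ℝ) 1,
      m * ε ^ (1 - min 1 (2 * d * (1 / 2 - 1 / p)) / γ) ≤ rayleighRate d γ p ε ∧
        rayleighRate d γ p ε ≤ M * ε ^ (1 - min 1 (2 * d * (1 / 2 - 1 / p)) / γ) := by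
  set β := d - 1 - decayExponent d * p with hβ
  have hβ1 : β + 1 = d - (d - 1) / 2 * p := by rw [hβ, decayExponent]; ring
  have hβne : β ≠ -1 := fun h => hpd (by linarith)
  refine ⟨(2 + 1 / |β + 1|) ^ (-(2 / p)), 1 ^ (-(2 / p)), by positivity, by positivity,
    fun ε hε => ?_⟩
  have hε0 : 0 < ε := hε.1
  have hmax : max (β + 1) 0 * (2 / p) = 1 - min 1 (2 * d * (1 / 2 - 1 / p)) := by
    rw [max_mul_of_nonneg _ _ (by positivity), ← max_sub_sub_left, max_comm, sub_self, zero_mul,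
      hβ1]
    congr 1
    field_simp
    ring
  have hrate : ε ^ (1 - min 1 (2 * d * (1 / 2 - 1 / p)) / γ) =
      ε ^ (1 - 1 / γ) * ((ε ^ (-(1 / γ))) ^ max (β + 1) 0) ^ (-(2 / p)) := by
    rw [← rpow_mul hε0.le, ← rpow_mul hε0.le, ← rpow_add hε0]
    congr 1
    linear_combination -(1 / γ) * hmax
  have hR := one_le_rpow_neg_one_div hγ.le hε
  rw [hrate]
  exact mul_rayleighRate_bounds hγ.le hp.le hε one_pos (by positivity) (by positivity)
    ((one_mul _).trans_le (rpow_max_le_radialMass β hR)) (radialMass_le_mul_rpow_max hβne hR)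

lemma exists_rayleighRate_bounds_of_eq [NeZero d] (hγ : 0 < γ) (hp : 0 < p)
    (hpd : p * (d - 1) = 2 * d) :
    ∃ m M, 0 < m ∧ 0 < M ∧ ∀ ε ∈ Set.Ioo (0 : ℝ) (1 / 2),
      m * (ε ^ (1 - 1 / γ) * |log ε| ^ ((1 - (d : ℝ)) / d)) ≤ rayleighRate d γ p ε ∧
        rayleighRate d γ p ε ≤ M * (ε ^ (1 - 1 / γ) * |log ε| ^ ((1 - (d : ℝ)) / d)) := by
  have hd : (d : ℝ) ≠ 0 := NeZero.ne _
  have hβ : d - 1 - decayExponent d * p = -1 := by rw [decayExponent]; linarith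
  have hexp : (1 - (d : ℝ)) / d = -(2 / p) := by field_simp; linarith
  refine ⟨(4 + 1 / γ) ^ (-(2 / p)), (1 / γ) ^ (-(2 / p)), by positivity, by positivity,
    fun ε hε => ?_⟩
  have hε1 : ε ∈ Set.Ioo (0 : ℝ) 1 := ⟨hε.1, by linarith [hε.2]⟩
  have hlog : 1 / 2 ≤ |log ε| := by
    rw [abs_of_neg (log_neg hε1.1 hε1.2)]
    linarith [log_le_sub_one_of_pos hε1.1, hε.2]
  have hmass : radialMass (d - 1 - decayExponent d * p) (ε ^ (-(1 / γ))) =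
      2 + 1 / γ * |log ε| := by
    rw [hβ, radialMass_neg_one (one_le_rpow_neg_one_div hγ.le hε1), log_rpow hε1.1,
      abs_of_neg (log_neg hε1.1 hε1.2), neg_mul, mul_neg]
  rw [hexp]
  exact mul_rayleighRate_bounds hγ.le hp.le hε1 (by positivity) (by positivity) (by linarith)
    (by linarith) (by linarith)

end ExplicitRate

lemma mul_one_half_sub_one_div_lt {D s p : ℝ} (hD : 0 < D) (hp : 0 < p)
    (hps : s < D / 2 → p < 2 * D / (D - 2 * s)) : D * (1 / 2 - 1 / p) < s := by
  have hDp : D * (1 / 2 - 1 / p) = D / 2 - D / p := by ring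
  have hDp0 : 0 < D / p := by positivity
  rcases lt_or_ge s (D / 2) with hs | hs
  · have hlt : p * (D - 2 * s) < 2 * D := (lt_div_iff₀ (by linarith)).1 (hps hs)
    have : D / 2 - s < D / p := (lt_div_iff₀ hp).2 (by linarith)
    linarith
  · linarith

theorem stmt3_general (d : ℕ) [NeZero d] (s γ p c C : ℝ) (hγ : 1 < γ) (hp : 2 < p)
    (hps : s < (d : ℝ) / 2 → p < 2 * (d : ℝ) / ((d : ℝ) - 2 * s)) (hc : 0 < c) (hcC : c ≤ C) :
    ∃ c' C' ε₀ : ℝ, 0 < c' ∧ c' ≤ C' ∧ 0 < ε₀ ∧ ε₀ < 1 ∧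
      ∀ g : ℝ → ℝ → ℝ, IsAdmissible s γ c C g → ∀ ε : ℝ, 0 < ε → ε < ε₀ →
        (p * ((d : ℝ) - 1) ≠ 2 * d →
          c' * ε ^ (1 - min 1 (2 * (d : ℝ) * (1 / 2 - 1 / p)) / γ)
              ≤ Rayleigh d s p (g ε) Radial ∧
            Rayleigh d s p (g ε) Radial
              ≤ C' * ε ^ (1 - min 1 (2 * (d : ℝ) * (1 / 2 - 1 / p)) / γ)) ∧
        (p * ((d : ℝ) - 1) = 2 * d →
          c' * ε ^ (1 - 1 / γ) * |log ε| ^ ((1 - (d : ℝ)) / (d : ℝ))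
              ≤ Rayleigh d s p (g ε) Radial ∧
            Rayleigh d s p (g ε) Radial
              ≤ C' * ε ^ (1 - 1 / γ) * |log ε| ^ ((1 - (d : ℝ)) / (d : ℝ))) := by
  have hd : (0 : ℝ) < d := Nat.cast_pos.2 (NeZero.pos d)
  have hγ0 : 0 < γ := by linarith
  have hp0 : 0 < p := by linarith
  have hsub : d * (1 / 2 - 1 / p) < s := mul_one_half_sub_one_div_lt hd hp0 hps
  have hs : 0 < s := lt_of_le_of_lt
    (mul_nonneg hd.le (sub_nonneg.2 (one_div_le_one_div_of_le two_pos hp.le))) hsub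
  have hbounds := fun F => exists_rayleigh_bounds (F := F) d hs hγ hp hsub hc (hc.trans_le hcC)
    one_half_lt_one
  by_cases hpd : p * ((d : ℝ) - 1) = 2 * d
  · obtain ⟨c', C', hc', hcC', hR⟩ := hbounds _ (exists_rayleighRate_bounds_of_eq hγ0 hp0 hpd)
    simp only [← mul_assoc] at hR
    exact ⟨c', C', 1 / 2, hc', hcC', one_half_pos, one_half_lt_one, fun g hg ε hε hε₀ =>
      ⟨fun hne => absurd hpd hne, fun _ => hR g hg ε ⟨hε, hε₀⟩⟩⟩
  · obtain ⟨m, M, hm, hM, hrate⟩ := exists_rayleighRate_bounds_of_ne hγ0 hp0 hpd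
    obtain ⟨c', C', hc', hcC', hR⟩ := hbounds _
      ⟨m, M, hm, hM, fun ε hε => hrate ε ⟨hε.1, hε.2.trans one_half_lt_one⟩⟩
    exact ⟨c', C', 1 / 2, hc', hcC', one_half_pos, one_half_lt_one, fun g hg ε hε hε₀ =>
      ⟨fun _ => hR g hg ε ⟨hε, hε₀⟩, fun heq => absurd heq hpd⟩⟩

/-- Theorem 1.3, radial case: `R^rad_ε(p) ≅ ε^{1-min(1,α_rad)/γ}` if
`p ≠ 2d/(d-1)`, and `R^rad_ε(p) ≅ ε^{1-1/γ} |log ε|^{(1-d)/d}` if `p = 2d/(d-1)`. -/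
theorem stmt3 (d : ℕ) (hd : 2 ≤ d) (s γ p c C : ℝ)
    (hs : (d : ℝ) / ((d : ℝ) + 1) < s) (hγ : 1 < γ)
    (hp : 2 < p) (hps : s < (d : ℝ) / 2 → p < 2 * (d : ℝ) / ((d : ℝ) - 2 * s))
    (hc : 0 < c) (hcC : c ≤ C) :
    ∃ c' C' ε₀ : ℝ, 0 < c' ∧ c' ≤ C' ∧ 0 < ε₀ ∧ ε₀ < 1 ∧
      ∀ g : ℝ → ℝ → ℝ, IsAdmissible s γ c C g →
        ∀ ε : ℝ, 0 < ε → ε < ε₀ →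
          (p ≠ 2 * (d : ℝ) / ((d : ℝ) - 1) →
            c' * ε ^ (1 - min 1 (2 * (d : ℝ) * (1/2 - 1/p)) / γ)
                ≤ Rayleigh d s p (g ε) Radial ∧
              Rayleigh d s p (g ε) Radial
                ≤ C' * ε ^ (1 - min 1 (2 * (d : ℝ) * (1/2 - 1/p)) / γ)) ∧
          (p = 2 * (d : ℝ) / ((d : ℝ) - 1) →
            c' * ε ^ (1 - 1/γ) * |Real.log ε| ^ ((1 - (d : ℝ)) / (d : ℝ))
                ≤ Rayleigh d s p (g ε) Radial ∧
              Rayleigh d s p (g ε) Radial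
                ≤ C' * ε ^ (1 - 1/γ) * |Real.log ε| ^ ((1 - (d : ℝ)) / (d : ℝ))) := by
  have : NeZero d := ⟨by lia⟩
  have hd1 : (d : ℝ) - 1 ≠ 0 := (sub_pos.2 (Nat.one_lt_cast.2 hd)).ne'
  simpa only [ne_eq, eq_div_iff hd1] using stmt3_general d s γ p c C hγ hp hps hc hcC
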